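/- Let z₀ ≥ 1 and 0 < ε < 1/2. There exist constants 0 < c ≤ C (depending only on z₀ and ε) such that for all x, y, z, t satisfying x ≥ y ≥ x^{1/2+ε} ≥ 2, 1 ≤ t ≤ x, and 1 ≤ z ≤ z₀, one has c · x · log(2t)/log x ≤ A(x,y,z,t) ≤ C · x · log(2t)/log x. -/

import Mathlib

/-- `Pmax n` is the largest prime factor of `n`, with the convention `Pmax 1 = 1`. -/
def Pmax (n : ℕ) : ℕ := if n ≤ 1 then 1 else n.primeFactors.sup id

/-- The Schinzel–Szekeres function: if `n = p₁ p₂ ⋯ p_Ω` with `p₁ ≥ p₂ ≥ ⋯ ≥ p_Ω` prime,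
`SS n = max_{1 ≤ k ≤ Ω} p₁ ⋯ p_{k-1} p_k²`, and `SS 1 = 1`.
(`Nat.primeFactorsList n` is the *increasing* list of prime factors with multiplicity;
the value produced for the index `j` is the one for `k = Ω - j`.) -/
def SS (n : ℕ) : ℕ :=
  ((List.range n.primeFactorsList.length).map
    (fun j => (n.primeFactorsList.drop j).headI * (n.primeFactorsList.drop j).prod)).foldr max 1

/-- A chain in the divisor graph: a finite sequence of pairwise distinct positive
integers in which any two consecutive terms are adjacent in the divisor graph
(the smaller divides the larger). -/
def IsDivChain (l : List ℕ) : Prop :=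
  l.Nodup ∧ (∀ n ∈ l, 0 < n) ∧ l.Chain' (fun a b => a ∣ b ∨ b ∣ a)

/-- `Axyzt x y z t = #{n ≥ 1 : n ≤ x, P(n) ≤ y, P⁻(n) > z and S(n) ≤ x*t}`
(the condition `P⁻(n) > z` is expressed as: every prime factor of `n` exceeds `z`,
which is vacuously true for `n = 1`, matching `P⁻(1) = +∞`). -/
noncomputable def Axyzt (x y z t : ℝ) : ℕ :=
  {n : ℕ | 1 ≤ n ∧ (n : ℝ) ≤ x ∧ (Pmax n : ℝ) ≤ y ∧
    (∀ p : ℕ, p.Prime → p ∣ n → z < (p : ℝ)) ∧ (SS n : ℝ) ≤ x * t}.ncard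

section Helpers
open Finset

lemma mert_aux_fact (n : ℕ) : Real.log (n.factorial : ℝ) =
    ∑ p ∈ (range (n+1)).filter Nat.Prime, (n.factorial.factorization p : ℝ) * Real.log p := by
  rw [Real.log_nat_eq_sum_factorization, Finsupp.sum]
  apply Finset.sum_subset
  · intro p hp
    rw [Nat.support_factorization, Nat.mem_primeFactors] at hp
    simp only [mem_filter, mem_range]
    exact ⟨Nat.lt_succ_of_le ((hp.1.dvd_factorial).1 hp.2.1), hp.1⟩
  · intro p _ hp
    rw [Finsupp.notMem_support_iff] at hp
    simp [hp]

lemma mert_v_lower (n p : ℕ) (hp : p.Prime) : n / p ≤ n.factorial.factorization p := by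
  rw [Nat.factorization_factorial hp (Nat.lt_succ_self _)]
  by_cases h : p ≤ n
  · have : n / p = n / p ^ 1 := by simp
    rw [this]
    apply Finset.single_le_sum (f := fun i => n / p ^ i) (fun i _ => Nat.zero_le _)
    simp
    exact ⟨h, hp.one_lt⟩
  · rw [Nat.div_eq_of_lt (by omega)]; simp

lemma mert_v_upper (n p : ℕ) (hp : p.Prime) : 
   (n.factorial.factorization p : ℝ) ≤ n / ((p:ℝ) - 1) := by
  have h1 : (1:ℝ) < p := by exact_mod_cast hp.one_lt
  rw [le_div_iff₀ (by linarith)]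
  have := Fact.mk hp
  have := sub_one_mul_padicValNat_factorial (p := p) n
  rw [← Nat.factorization_def _ hp] at this
  have h2 : (p - 1) * n.factorial.factorization p ≤ n := by omega
  have h3 : (((p - 1) * n.factorial.factorization p : ℕ):ℝ) ≤ n := by exact_mod_cast h2
  rw [Nat.cast_mul, Nat.cast_sub hp.one_lt.le] at h3
  push_cast at h3
  linarith

lemma mert_up (n : ℕ) (hn : 1 ≤ n) :
    ∑ p ∈ (range (n+1)).filter Nat.Prime, Real.log p / p ≤ Real.log n + Real.log 4 := by
  have hn' : (0:ℝ) < n := by exact_mod_cast hn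
  have h1 : Real.log (n.factorial : ℝ) ≤ n * Real.log n := by
    rw [← Real.log_pow]
    apply Real.log_le_log (by exact_mod_cast n.factorial_pos)
    exact_mod_cast Nat.factorial_le_pow n
  rw [mert_aux_fact] at h1
  have h2 : ∑ p ∈ (range (n+1)).filter Nat.Prime, ((n:ℝ) / p - 1) * Real.log p ≤ n * Real.log n := by
    refine le_trans (Finset.sum_le_sum ?_) h1
    intro p hp
    simp only [mem_filter, mem_range] at hp
    apply mul_le_mul_of_nonneg_right _ (Real.log_natCast_nonneg p)
    have := mert_v_lower n p hp.2
    have h3 : ((n/p : ℕ):ℝ) ≤ n.factorial.factorization p := by exact_mod_cast this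
    have h4 : (n:ℝ)/p < (n/p : ℕ) + 1 := by
      have := Nat.lt_floor_add_one ((n:ℝ)/p)
      rwa [Nat.floor_div_eq_div] at this
    linarith
  have h5 : ∑ p ∈ (range (n+1)).filter Nat.Prime, Real.log p ≤ Real.log 4 * n := by
    have := Chebyshev.theta_le_log4_mul_x (x := (n:ℝ)) hn'.le
    rw [Chebyshev.theta_eq_sum_Icc] at this
    refine le_trans (le_of_eq ?_) this
    simp only [Nat.floor_natCast]
    apply Finset.sum_congr _ (fun _ _ => rfl)
    ext p; simp
  have h6 : ∑ p ∈ (range (n+1)).filter Nat.Prime, ((n:ℝ) / p - 1) * Real.log p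
     = n * (∑ p ∈ (range (n+1)).filter Nat.Prime, Real.log p / p) - ∑ p ∈ (range (n+1)).filter Nat.Prime, Real.log p := by
    rw [Finset.mul_sum, ← Finset.sum_sub_distrib]
    apply Finset.sum_congr rfl
    intro p _
    ring
  have h7 : n * (∑ p ∈ (range (n+1)).filter Nat.Prime, Real.log p / p) ≤ n * (Real.log n + Real.log 4) := by
    rw [h6] at h2; linarith
  exact le_of_mul_le_mul_left h7 hn'

lemma mert_low (n : ℕ) (hn : 1 ≤ n) :
    Real.log n - 1 ≤ ∑ p ∈ (range (n+1)).filter Nat.Prime, Real.log p / ((p:ℝ) - 1) := by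
  have hn' : (0:ℝ) < n := by exact_mod_cast hn
  have h1 : n * (Real.log n - 1) ≤ Real.log (n.factorial : ℝ) := by
    have : (n:ℝ)^n / n.factorial ≤ Real.exp n := Real.pow_div_factorial_le_exp n hn'.le n
    have hf : (0:ℝ) < n.factorial := by exact_mod_cast n.factorial_pos
    have h2 : Real.log ((n:ℝ)^n / n.factorial) ≤ n := by
      rw [Real.log_le_iff_le_exp (by positivity)]; exact this
    rw [Real.log_div (by positivity) (by positivity), Real.log_pow] at h2
    linarith
  rw [mert_aux_fact] at h1
  have h2 : ∑ p ∈ (range (n+1)).filter Nat.Prime, (n.factorial.factorization p : ℝ) * Real.log p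
     ≤ n * ∑ p ∈ (range (n+1)).filter Nat.Prime, Real.log p / ((p:ℝ) - 1) := by
    rw [Finset.mul_sum]
    apply Finset.sum_le_sum
    intro p hp
    simp only [mem_filter, mem_range] at hp
    have := mul_le_mul_of_nonneg_right (mert_v_upper n p hp.2) (Real.log_natCast_nonneg p)
    refine this.trans (le_of_eq (by ring))
  exact le_of_mul_le_mul_left (h1.trans h2) hn'

/-- convergent error sum -/
lemma mert_err : ∃ C : ℝ, 0 ≤ C ∧ ∀ P : Finset ℕ, (∀ p ∈ P, 2 ≤ p) →
    ∑ p ∈ P, (Real.log p / ((p:ℝ) - Real.sqrt p) - Real.log p / p) ≤ C := by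
  have hs : Summable (fun n : ℕ => 16 * (1 / (n:ℝ)^((5:ℝ)/4))) := 
    (Real.summable_one_div_nat_rpow.2 (by norm_num)).mul_left _
  refine ⟨∑' n : ℕ, 16 * (1 / (n:ℝ)^((5:ℝ)/4)), tsum_nonneg (fun n => by positivity), ?_⟩
  intro P hP
  refine le_trans (Finset.sum_le_sum ?_) (hs.sum_le_tsum P (fun n _ => by positivity))
  intro p hp
  have h2 : (2:ℝ) ≤ p := by exact_mod_cast hP p hp
  set r := Real.sqrt p with hr
  have hrr : r * r = p := Real.mul_self_sqrt (by linarith)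
  have hr0 : 0 < r := Real.sqrt_pos.2 (by linarith)
  have hr1 : 4/3 ≤ r := by
    apply Real.le_sqrt_of_sq_le; norm_num; linarith
  have hlog : Real.log p ≤ 4 * (p:ℝ)^((1:ℝ)/4) := by
    have := Real.log_le_rpow_div (x := (p:ℝ)) (by linarith) (ε := 1/4) (by norm_num)
    linarith
  have hl0 : 0 ≤ Real.log p := Real.log_natCast_nonneg p
  have e1 : Real.log p / ((p:ℝ) - r) - Real.log p / p = Real.log p / (p * (r - 1)) := by
    rw [← hrr]
    have : r - 1 ≠ 0 := by linarith
    have : r * r - r ≠ 0 := by nlinarith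
    field_simp
    ring
  rw [e1]
  have hp32 : (p:ℝ)^((5:ℝ)/4) * (p:ℝ)^((1:ℝ)/4) = p * r := by
    rw [← Real.rpow_add (by linarith), hr, Real.sqrt_eq_rpow]
    nth_rewrite 2 [← Real.rpow_one (p:ℝ)]
    rw [← Real.rpow_add (by linarith)]; norm_num
  have hq : 0 < (p:ℝ)^((1:ℝ)/4) := by positivity
  have hq' : 0 < (p:ℝ)^((5:ℝ)/4) := by positivity
  rw [div_le_iff₀ (by nlinarith), mul_one_div, div_mul_eq_mul_div, le_div_iff₀ hq']
  calc Real.log p * (p:ℝ)^((5:ℝ)/4) ≤ 4 * (p:ℝ)^((1:ℝ)/4) * (p:ℝ)^((5:ℝ)/4) := by gcongr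
    _ = 4 * (p * r) := by rw [← hp32]; ring
    _ ≤ 16 * (p * (r-1)) := by nlinarith

/-- Upper Mertens for the heavier weight, over any set of primes `≤ y`. -/
lemma mert_up' : ∃ C : ℝ, 0 ≤ C ∧ ∀ (n : ℕ) (P : Finset ℕ), 1 ≤ n → (∀ p ∈ P, p.Prime ∧ p ≤ n) →
    ∑ p ∈ P, Real.log p / ((p:ℝ) - Real.sqrt p) ≤ Real.log n + C := by
  obtain ⟨C, hC0, hC⟩ := mert_err
  refine ⟨C + Real.log 4, by positivity, ?_⟩
  intro n P hn hP
  have h1 := hC P (fun p hp => (hP p hp).1.two_le)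
  rw [Finset.sum_sub_distrib] at h1
  have h2 : ∑ p ∈ P, Real.log p / p ≤ ∑ p ∈ (range (n+1)).filter Nat.Prime, Real.log p / p := by
    apply Finset.sum_le_sum_of_subset_of_nonneg
    · intro p hp
      simp only [mem_filter, mem_range]
      exact ⟨Nat.lt_succ_of_le (hP p hp).2, (hP p hp).1⟩
    · intro p _ _
      have := Real.log_natCast_nonneg p
      positivity
  have h3 := mert_up n hn
  linarith

lemma mert_low' (z : ℕ) : ∃ C : ℝ, 0 ≤ C ∧ ∀ (n : ℕ), 1 ≤ n →
    Real.log n - C ≤ ∑ p ∈ (range (n+1)).filter (fun p => p.Prime ∧ z < p), Real.log p / p := by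
  obtain ⟨C, hC0, hC⟩ := mert_err
  refine ⟨1 + C + ∑ p ∈ range (z+1), Real.log p / p, ?_, ?_⟩
  · have : 0 ≤ ∑ p ∈ range (z+1), Real.log p / p := 
      Finset.sum_nonneg (fun p _ => div_nonneg (Real.log_natCast_nonneg p) (by positivity))
    linarith
  intro n hn
  have h1 := mert_low n hn
  have h2 := hC ((range (n+1)).filter Nat.Prime) (fun p hp => (mem_filter.1 hp).2.two_le)
  have h3 : ∑ p ∈ (range (n+1)).filter Nat.Prime, (Real.log p / ((p:ℝ) - 1) - Real.log p / p) ≤ 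
     ∑ p ∈ (range (n+1)).filter Nat.Prime, (Real.log p / ((p:ℝ) - Real.sqrt p) - Real.log p / p) := by
    apply Finset.sum_le_sum
    intro p hp
    have h2 : (2:ℝ) ≤ p := by exact_mod_cast (mem_filter.1 hp).2.two_le
    have := Real.log_natCast_nonneg p
    have hr1 : 1 < Real.sqrt p := by
      apply Real.lt_sqrt_of_sq_lt; linarith
    have hrr : Real.sqrt p * Real.sqrt p = p := Real.mul_self_sqrt (by linarith)
    gcongr
    nlinarith
  have h4 : ∑ p ∈ (range (n+1)).filter Nat.Prime, Real.log p / p ≤ 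
     ∑ p ∈ (range (n+1)).filter (fun p => p.Prime ∧ z < p), Real.log p / p + ∑ p ∈ range (z+1), Real.log p / p := by
    rw [← Finset.sum_filter_add_sum_filter_not _ (fun p => z < p), Finset.filter_filter]
    gcongr
    intro p; simp only [mem_filter, mem_range]; omega
  rw [Finset.sum_sub_distrib] at h3
  linarith

/-- the product of the prime factors of `m` that are `< p` -/
def spart (m p : ℕ) : ℕ := (m.primeFactorsList.filter (fun q => decide (q < p))).prod

lemma spart_mul {a b : ℕ} (ha : a ≠ 0) (hb : b ≠ 0) (p : ℕ) :
    spart (a * b) p = spart a p * spart b p := by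
  unfold spart
  rw [((Nat.perm_primeFactorsList_mul ha hb).filter _).prod_eq, List.filter_append, List.prod_append]

lemma spart_prime {p : ℕ} (hp : p.Prime) (q : ℕ) : spart p q = if p < q then p else 1 := by
  unfold spart
  rw [Nat.primeFactorsList_prime hp]
  by_cases h : p < q <;> simp [h]

lemma spart_dvd {m : ℕ} (hm : m ≠ 0) (p : ℕ) : spart m p ∣ m := by
  unfold spart
  conv_rhs => rw [← Nat.prod_primeFactorsList hm]
  exact List.Sublist.prod_dvd_prod List.filter_sublist

lemma spart_le {m : ℕ} (hm : m ≠ 0) (p : ℕ) : spart m p ≤ m := 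
  Nat.le_of_dvd (Nat.pos_of_ne_zero hm) (spart_dvd hm p)

lemma spart_pos {m : ℕ} (hm : m ≠ 0) (p : ℕ) : 0 < spart m p :=
  Nat.pos_of_dvd_of_pos (spart_dvd hm p) (Nat.pos_of_ne_zero hm)

lemma spart_smooth {m p : ℕ} (hm : m ∈ Nat.smoothNumbers p) : spart m p = m := by
  unfold spart
  rw [List.filter_eq_self.2, Nat.prod_primeFactorsList hm.1]
  intro q hq
  simpa using hm.2 q hq

lemma spart_pow {p : ℕ} (hp : p.Prime) (e q : ℕ) (hq : q ≤ p) : spart (p ^ e) q = 1 := by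
  induction e with
  | zero => simp [spart]
  | succ e ih =>
    rw [pow_succ, spart_mul (pow_ne_zero _ hp.ne_zero) hp.ne_zero, ih, spart_prime hp, if_neg (by omega)]

/-- `t`-dense integers with prime factors exceeding `z`. -/
def Dn (z t m : ℕ) : Prop := m ≠ 0 ∧ ∀ p : ℕ, p.Prime → p ∣ m → z < p ∧ p ≤ t * spart m p

lemma Dn_one (z t : ℕ) : Dn z t 1 := by
  refine ⟨one_ne_zero, fun p hp h => ?_⟩
  exact absurd (Nat.dvd_one.1 h) hp.one_lt.ne'

lemma Dn_mono {z t t' m : ℕ} (h : t ≤ t') (hm : Dn z t m) : Dn z t' m :=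
  ⟨hm.1, fun p hp hd => ⟨(hm.2 p hp hd).1, (hm.2 p hp hd).2.trans (Nat.mul_le_mul_right _ h)⟩⟩

lemma Dn_pow_mul {z t p m e : ℕ} (hp : p.Prime) (hm : m ∈ Nat.smoothNumbers p) :
    Dn z t (p ^ e * m) ↔ Dn z t m ∧ (e = 0 ∨ (z < p ∧ p ≤ t * m)) := by
  have hm0 : m ≠ 0 := hm.1
  have hpe : p ^ e ≠ 0 := pow_ne_zero _ hp.ne_zero
  have key : ∀ q ≤ p, spart (p ^ e * m) q = spart m q := by
    intro q hq
    rw [spart_mul hpe hm0, spart_pow hp e q hq, one_mul]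
  have hlt : ∀ q : ℕ, q.Prime → q ∣ m → q < p := by
    intro q hq hd
    exact hm.2 q ((Nat.mem_primeFactorsList hm0).2 ⟨hq, hd⟩)
  constructor
  · rintro ⟨h0, h⟩
    refine ⟨⟨hm0, fun q hq hd => ?_⟩, ?_⟩
    · have := h q hq (hd.mul_left _)
      rwa [key q (hlt q hq hd).le] at this
    · by_cases he : e = 0
      · exact Or.inl he
      · right
        have := h p hp ((dvd_pow_self p he).mul_right m)
        rwa [key p le_rfl, spart_smooth hm] at this
  · rintro ⟨h, h2⟩
    refine ⟨mul_ne_zero hpe hm0, fun q hq hd => ?_⟩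
    rcases (hq.dvd_mul).1 hd with h3 | h3
    · have hqp : q = p := (Nat.prime_dvd_prime_iff_eq hq hp).1 (hq.dvd_of_dvd_pow h3)
      subst hqp
      rcases h2 with h2 | h2
      · subst h2; exact absurd (Nat.dvd_one.1 (by simpa using h3)) hq.one_lt.ne'
      · rwa [key q le_rfl, spart_smooth hm]
    · rw [key q (hlt q hq h3).le]
      exact h.2 q hq h3

lemma Dn_mul_prime {z t p m : ℕ} (hp : p.Prime) (hm : Dn z t m) (hz : z < p) (hpt : p ≤ t * m) :
    Dn z t (m * p) := by
  refine ⟨mul_ne_zero hm.1 hp.ne_zero, fun q hq hd => ?_⟩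
  rw [spart_mul hm.1 hp.ne_zero, spart_prime hp]
  by_cases h1 : q ∣ m
  · have := hm.2 q hq h1
    refine ⟨this.1, this.2.trans (Nat.mul_le_mul_left _ (Nat.le_mul_of_pos_right _ ?_))⟩
    split_ifs
    · exact hp.pos
    · exact one_pos
  · have h2 : q ∣ p := by
      rcases (hq.dvd_mul).1 hd with h3 | h3
      · exact absurd h3 h1
      · exact h3
    have hqp : q = p := (Nat.prime_dvd_prime_iff_eq hq hp).1 h2
    subst hqp
    refine ⟨hz, ?_⟩
    rw [if_neg (lt_irrefl _), mul_one]
    -- next prime factor of m above q, if any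
    by_cases hex : ∃ r, r.Prime ∧ r ∣ m ∧ q < r
    · classical
      set r := Nat.find hex with hr
      obtain ⟨hr1, hr2, hr3⟩ := Nat.find_spec hex
      have hsp : spart m r = spart m q := by
        unfold spart
        congr 1
        apply List.filter_congr
        intro s hs
        rw [Nat.mem_primeFactorsList hm.1] at hs
        simp only [decide_eq_decide]
        constructor
        · intro hsr
          by_contra hns
          have : s ≠ q := by rintro rfl; exact h1 hs.2
          exact Nat.find_min hex hsr ⟨hs.1, hs.2, by omega⟩
        · intro h; exact h.trans hr3
      have := (hm.2 r hr1 hr2).2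
      rw [hsp] at this
      exact hr3.le.trans this
    · push Not at hex
      have : spart m q = m := by
        apply spart_smooth
        refine ⟨hm.1, fun s hs => ?_⟩
        rw [Nat.mem_primeFactorsList hm.1] at hs
        have h5 := hex s hs.1 hs.2
        have : s ≠ q := by rintro rfl; exact h1 hs.2
        omega
      rwa [this]

lemma Dn_split {z t n : ℕ} (hn : Dn z t n) (h1 : n ≠ 1) :
    ∃ m p : ℕ, n = m * p ∧ p.Prime ∧ Dn z t m ∧ m ∈ Nat.smoothNumbers (p+1) ∧ z < p ∧ p ≤ t * m := by
  have hne : n.primeFactors.Nonempty := Nat.nonempty_primeFactors.2 (by have := hn.1; omega)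
  set p := n.primeFactors.max' hne with hpdef
  have hp := Nat.mem_primeFactors.1 (n.primeFactors.max'_mem hne)
  rw [← hpdef] at hp
  have hsm : n ∈ Nat.smoothNumbers (p+1) := by
    refine ⟨hn.1, fun q hq => Nat.lt_succ_of_le ?_⟩
    apply Finset.le_max'
    rwa [Nat.mem_primeFactors_iff_mem_primeFactorsList]
  obtain ⟨⟨e, m0, hm0⟩, hx⟩ := (Nat.equivProdNatSmoothNumbers hp.1).surjective ⟨n, hsm⟩
  have hx' : p ^ e * m0 = n := by
    have := congrArg Subtype.val hx
    simpa using this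
  have he : e ≠ 0 := by
    rintro rfl
    have : p ∣ m0 := by rw [pow_zero, one_mul] at hx'; rw [hx']; exact hp.2.1
    have := hm0.2 p ((Nat.mem_primeFactorsList hm0.1).2 ⟨hp.1, this⟩)
    exact lt_irrefl _ this
  obtain ⟨e', rfl⟩ := Nat.exists_eq_succ_of_ne_zero he
  rw [← hx', Dn_pow_mul hp.1 hm0] at hn
  have h2 := hn.2.resolve_left he
  refine ⟨p ^ e' * m0, p, ?_, hp.1, ?_, ?_, h2.1, ?_⟩
  · rw [← hx', pow_succ]; ring
  · rw [Dn_pow_mul hp.1 hm0]; exact ⟨hn.1, Or.inr h2⟩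
  · apply Nat.mem_smoothNumbers_of_dvd hsm
    rw [← hx', pow_succ]; exact ⟨p, by ring⟩
  · refine h2.2.trans (Nat.mul_le_mul_left _ (Nat.le_mul_of_pos_left _ (pow_pos hp.1.pos _)))

/-- primes in `(z, y]` that are `< N`. -/
def PS (z N y : ℕ) : Finset ℕ := (range N).filter (fun p => p.Prime ∧ z < p ∧ p ≤ y)

noncomputable def WW (z N y : ℕ) (s : ℝ) : ℝ := ∏ p ∈ PS z N y, (1 - (p:ℝ) ^ (-s))

open Classical in
noncomputable def GG (z t N : ℕ) (s : ℝ) (m : ℕ) : ℝ :=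
  if Dn z t m ∧ m ∈ Nat.smoothNumbers N then (m:ℝ) ^ (-s) * WW z N (t * m) s else 0

lemma pow_neg_lt_one {p : ℕ} (hp : 2 ≤ p) {s : ℝ} (hs : 0 < s) : (p:ℝ)^(-s) < 1 := 
  Real.rpow_lt_one_of_one_lt_of_neg (by exact_mod_cast hp) (by linarith)

lemma WW_pos (z N y : ℕ) {s : ℝ} (hs : 0 < s) : 0 < WW z N y s := by
  apply Finset.prod_pos
  intro p hp
  have := pow_neg_lt_one (mem_filter.1 hp).2.1.two_le hs
  linarith

lemma GG_nonneg (z t N : ℕ) {s : ℝ} (hs : 0 < s) (m : ℕ) : 0 ≤ GG z t N s m := by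
  unfold GG
  split_ifs
  · have := WW_pos z N (t*m) hs
    positivity
  · exact le_rfl

lemma PS_succ_not_prime {z N y : ℕ} (h : ¬ (N.Prime ∧ z < N ∧ N ≤ y)) : PS z (N+1) y = PS z N y := by
  unfold PS
  rw [Finset.range_add_one, Finset.filter_insert, if_neg h]

lemma WW_succ {z N y : ℕ} (s : ℝ) (h : (N.Prime ∧ z < N ∧ N ≤ y)) :
    WW z (N+1) y s = (1 - (N:ℝ)^(-s)) * WW z N y s := by
  unfold WW PS
  rw [Finset.range_add_one, Finset.filter_insert, if_pos h, Finset.prod_insert (by simp)]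

lemma PS_eq_of_le {z N y y' : ℕ} (h : N ≤ y + 1) (h' : N ≤ y' + 1) : PS z N y = PS z N y' := by
  unfold PS
  apply Finset.filter_congr
  intro p hp
  rw [mem_range] at hp
  constructor <;> (rintro ⟨h1, h2, h3⟩; exact ⟨h1, h2, by omega⟩)

lemma GG_tsum (z t : ℕ) (ht : 1 ≤ t) {s : ℝ} (hs : 0 < s) (N : ℕ) :
    ∑' m : Nat.smoothNumbers N, ENNReal.ofReal (GG z t N s m) = 1 := by
  classical
  induction N with
  | zero =>
    rw [Nat.smoothNumbers_zero, tsum_singleton (1:ℕ) (fun m => ENNReal.ofReal (GG z t 0 s m))]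
    simp [GG, Dn_one, WW, PS, Nat.smoothNumbers_zero]
  | succ N ih =>
    by_cases hN : N.Prime
    · rw [← (Nat.equivProdNatSmoothNumbers hN).tsum_eq, ENNReal.tsum_prod', ENNReal.tsum_comm, ← ih]
      apply tsum_congr
      rintro ⟨m, hm⟩
      simp only [Nat.equivProdNatSmoothNumbers_apply']
      have hsm : ∀ e, N ^ e * m ∈ Nat.smoothNumbers (N+1) := fun e =>
        Nat.pow_mul_mem_smoothNumbers hN.ne_zero e hm
      have hm0 : m ≠ 0 := hm.1
      have hmpos : (0:ℝ) < m := by exact_mod_cast Nat.pos_of_ne_zero hm0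
      by_cases hD : Dn z t m
      · by_cases hc : z < N ∧ N ≤ t * m
        · have hr : ∀ e : ℕ, ENNReal.ofReal (GG z t (N+1) s (N ^ e * m)) = 
              ENNReal.ofReal (GG z t N s m) * ENNReal.ofReal (1 - (N:ℝ)^(-s)) * (ENNReal.ofReal ((N:ℝ)^(-s)))^e := by
            intro e
            have h1 := pow_neg_lt_one hN.two_le hs
            have h0 : 0 ≤ (N:ℝ)^(-s) := by positivity
            rw [← ENNReal.ofReal_pow h0, ← ENNReal.ofReal_mul (GG_nonneg z t N hs m), 
              ← ENNReal.ofReal_mul (mul_nonneg (GG_nonneg z t N hs m) (by linarith))]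
            congr 1
            unfold GG
            rw [if_pos ⟨(Dn_pow_mul hN hm).2 ⟨hD, Or.inr hc⟩, hsm e⟩, if_pos ⟨hD, hm⟩]
            have hle : N ≤ t * (N ^ e * m) := hc.2.trans (Nat.mul_le_mul_left _ (Nat.le_mul_of_pos_left _ (pow_pos hN.pos _)))
            rw [WW_succ s ⟨hN, hc.1, hle⟩]
            have : WW z N (t * (N ^ e * m)) s = WW z N (t * m) s := by
              unfold WW; rw [PS_eq_of_le (y := t * (N^e*m)) (y' := t*m) (by omega) (by omega)]
            rw [this]
            push_cast
            rw [Real.mul_rpow (by positivity) hmpos.le, ← Real.rpow_natCast, ← Real.rpow_natCast,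
              ← Real.rpow_mul (by positivity), ← Real.rpow_mul (by positivity)]
            rw [show (e:ℝ) * -s = -s * e by ring]
            ring
          simp_rw [hr]
          rw [ENNReal.tsum_mul_left, ENNReal.tsum_geometric]
          have h1 := pow_neg_lt_one hN.two_le hs
          have h0 : 0 ≤ (N:ℝ)^(-s) := by positivity
          rw [← ENNReal.ofReal_one, ← ENNReal.ofReal_sub _ h0, mul_assoc, ENNReal.mul_inv_cancel, mul_one]
          · simpa using h1
          · exact ENNReal.ofReal_ne_top
        · rw [tsum_eq_single 0]
          · rw [pow_zero, one_mul]
            congr 1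
            unfold GG
            have := hsm 0
            rw [pow_zero, one_mul] at this
            rw [if_pos ⟨hD, this⟩, if_pos ⟨hD, hm⟩]
            unfold WW
            rw [PS_succ_not_prime (by tauto)]
          · intro e he
            unfold GG
            rw [if_neg, ENNReal.ofReal_zero]
            rintro ⟨h1, _⟩
            exact hc (((Dn_pow_mul hN hm).1 h1).2.resolve_left he)
      · have h1 : GG z t N s m = 0 := by
          unfold GG; rw [if_neg]; tauto
        rw [h1, ENNReal.ofReal_zero]
        rw [ENNReal.tsum_eq_zero]
        intro e
        unfold GG
        rw [if_neg, ENNReal.ofReal_zero]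
        rintro ⟨h1, _⟩
        exact hD ((Dn_pow_mul hN hm).1 h1).1
    · rw [Nat.smoothNumbers_succ hN, ← ih]
      apply tsum_congr
      intro m
      congr 1
      unfold GG WW
      rw [PS_succ_not_prime (by tauto)]
      simp only [Nat.smoothNumbers_succ hN]

lemma GG_hasSum (z t : ℕ) (ht : 1 ≤ t) {s : ℝ} (hs : 0 < s) (N : ℕ) :
    HasSum (GG z t N s) 1 := by
  have h := GG_tsum z t ht hs N
  have h2 : ∑' m : ℕ, ENNReal.ofReal (GG z t N s m) = 1 := by
    rw [← h]
    symm
    rw [tsum_subtype (Nat.smoothNumbers N) (fun m => ENNReal.ofReal (GG z t N s m))]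
    apply tsum_congr
    intro m
    rw [Set.indicator_apply]
    split_ifs with hm
    · rfl
    · unfold GG; rw [if_neg (by tauto), ENNReal.ofReal_zero]
  have h3 : Summable (GG z t N s) := by
    have := ENNReal.summable_toReal (f := fun m => ENNReal.ofReal (GG z t N s m)) (by rw [h2]; simp)
    refine this.congr (fun m => ?_)
    rw [ENNReal.toReal_ofReal (GG_nonneg z t N hs m)]
  have h4 := ENNReal.ofReal_tsum_of_nonneg (GG_nonneg z t N hs) h3
  rw [h2] at h4
  have h5 : ∑' m, GG z t N s m = 1 := by
    rw [ENNReal.ofReal_eq_one] at h4; exact h4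
  rw [← h5]; exact h3.hasSum

lemma mem_PS {z N y p : ℕ} : p ∈ PS z N y ↔ p < N ∧ p.Prime ∧ z < p ∧ p ≤ y := by
  simp [PS]

lemma prime_factor_up {p : ℕ} (hp : 2 ≤ p) (δ : ℝ) :
    1 - (p:ℝ)^(-(1+δ)) ≤ (1 - (p:ℝ)^(-(1:ℝ))) * Real.exp ((1 - (p:ℝ)^(-δ)) / ((p:ℝ) - 1)) := by
  have h2 : (2:ℝ) ≤ p := by exact_mod_cast hp
  have e1 : (p:ℝ)^(-(1+δ)) = (p:ℝ)⁻¹ * (p:ℝ)^(-δ) := by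
    rw [show -(1+δ) = (-1) + (-δ) by ring, Real.rpow_add (by linarith), Real.rpow_neg_one]
  rw [e1, Real.rpow_neg_one]
  set a := (p:ℝ)^(-δ)
  have := Real.add_one_le_exp ((1 - a) / ((p:ℝ) - 1))
  have h3 : 0 < 1 - (p:ℝ)⁻¹ := by
    have : (p:ℝ)⁻¹ < 1 := inv_lt_one_of_one_lt₀ (by linarith)
    linarith
  calc 1 - (p:ℝ)⁻¹ * a = (1 - (p:ℝ)⁻¹) * ((1 - a) / ((p:ℝ) - 1) + 1) := by
        have : (p:ℝ) - 1 ≠ 0 := by linarith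
        field_simp
        ring
    _ ≤ _ := by gcongr

lemma prime_factor_lo {p : ℕ} (hp : 2 ≤ p) {δ : ℝ} (hδ : 0 < δ) :
    (1 - (p:ℝ)^(-(1:ℝ))) * Real.exp ((1 - (p:ℝ)^(-δ)) / (p:ℝ)) ≤ 1 - (p:ℝ)^(-(1+δ)) := by
  have h2 : (2:ℝ) ≤ p := by exact_mod_cast hp
  have e1 : (p:ℝ)^(-(1+δ)) = (p:ℝ)⁻¹ * (p:ℝ)^(-δ) := by
    rw [show -(1+δ) = (-1) + (-δ) by ring, Real.rpow_add (by linarith), Real.rpow_neg_one]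
  have hb : (p:ℝ)^(-δ) < 1 := pow_neg_lt_one hp hδ
  have hb0 : 0 < (p:ℝ)^(-δ) := by positivity
  rw [e1, Real.rpow_neg_one]
  set a := (p:ℝ)^(-δ)
  have h3 : 0 < 1 - (p:ℝ)⁻¹ := by
    have : (p:ℝ)⁻¹ < 1 := inv_lt_one_of_one_lt₀ (by linarith)
    linarith
  have h4 := Real.add_one_le_exp (-((1 - a) / (p:ℝ)))
  have h5 : 0 < (p:ℝ) - (1 - a) := by linarith
  have h6 : Real.exp ((1-a)/p) ≤ p / (p - (1 - a)) := by
    rw [le_div_iff₀ h5]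
    have h7 : Real.exp ((1-a)/p) * Real.exp (-((1 - a) / (p:ℝ))) = 1 := by
      rw [← Real.exp_add]; simp
    have h8 : Real.exp ((1-a)/p) * (-((1 - a) / (p:ℝ)) + 1) ≤ 1 := by
      exact (mul_le_mul_of_nonneg_left h4 (Real.exp_pos _).le).trans h7.le
    have h9 : (-((1 - a) / (p:ℝ)) + 1) = ((p:ℝ) - (1-a)) / p := by
      field_simp; ring
    rw [h9, ← mul_div_assoc, div_le_one (by linarith)] at h8
    exact h8
  calc (1 - (p:ℝ)⁻¹) * Real.exp ((1-a)/p) ≤ (1 - (p:ℝ)⁻¹) * (p / (p - (1 - a))) := by gcongr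
    _ ≤ (1 - (p:ℝ)⁻¹) * ((1 - a) / ((p:ℝ) - 1) + 1) := by
        gcongr
        have h10 : 0 < (p:ℝ) - 1 := by linarith
        rw [div_add_one h10.ne', div_le_div_iff₀ h5 h10]
        nlinarith
    _ = _ := by
        have : (p:ℝ) - 1 ≠ 0 := by linarith
        field_simp
        ring

lemma prime_factor_lo' {p : ℕ} (hp : 2 ≤ p) {δ : ℝ} (hδ : 0 < δ) (hδ2 : δ ≤ 1/2) :
    (1 - (p:ℝ)^(-(1:ℝ))) * Real.exp (-(((p:ℝ)^δ - 1) / ((p:ℝ) - Real.sqrt p))) ≤ 1 - (p:ℝ)^(-(1-δ)) := by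
  have h2 : (2:ℝ) ≤ p := by exact_mod_cast hp
  have e1 : (p:ℝ)^(-(1-δ)) = (p:ℝ)⁻¹ * (p:ℝ)^δ := by
    rw [show -(1-δ) = (-1) + δ by ring, Real.rpow_add (by linarith), Real.rpow_neg_one]
  have hb : 1 < (p:ℝ)^δ := Real.one_lt_rpow (by linarith) hδ
  have hb2 : (p:ℝ)^δ ≤ Real.sqrt p := by
    rw [Real.sqrt_eq_rpow]
    exact Real.rpow_le_rpow_of_exponent_le (by linarith) hδ2
  have hrr : Real.sqrt p * Real.sqrt p = p := Real.mul_self_sqrt (by linarith)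
  rw [e1, Real.rpow_neg_one]
  set a := (p:ℝ)^δ
  set r := Real.sqrt p
  have hpr : 0 < (p:ℝ) - r := by nlinarith
  have h3 : 0 < 1 - (p:ℝ)⁻¹ := by
    have : (p:ℝ)⁻¹ < 1 := inv_lt_one_of_one_lt₀ (by linarith)
    linarith
  have h4 := Real.add_one_le_exp ((a-1)/(p - r))
  have h5 : 0 < (a-1)/(p - r) := by apply div_pos <;> linarith
  have h6 : Real.exp (-((a-1)/(p - r))) ≤ ((p:ℝ)-a)/(p-1) := by
    rw [Real.exp_neg]
    calc (Real.exp ((a-1)/(p - r)))⁻¹ ≤ ((a-1)/(p - r) + 1)⁻¹ := by gcongr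
      _ ≤ ((a-1)/(p - a) + 1)⁻¹ := by
          have : 0 < (p:ℝ) - a := by linarith
          gcongr
      _ = ((p:ℝ)-a)/(p-1) := by
          have : (p:ℝ) - a ≠ 0 := by linarith
          rw [div_add_one this, inv_div]; ring_nf
  calc (1 - (p:ℝ)⁻¹) * Real.exp (-((a-1)/(p - r))) ≤ (1 - (p:ℝ)⁻¹) * (((p:ℝ)-a)/(p-1)) := by gcongr
    _ = _ := by
        have : (p:ℝ) - 1 ≠ 0 := by linarith
        field_simp

lemma WW_up (z N y : ℕ) (δ : ℝ) (hδ : 0 < δ) :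
    WW z N y (1+δ) ≤ WW z N y 1 * Real.exp (∑ p ∈ PS z N y, (1 - (p:ℝ)^(-δ)) / ((p:ℝ) - 1)) := by
  unfold WW
  rw [Real.exp_sum, ← Finset.prod_mul_distrib]
  apply Finset.prod_le_prod
  · intro p hp
    have := pow_neg_lt_one (mem_PS.1 hp).2.1.two_le (s := 1+δ) (by linarith)
    linarith
  · intro p hp
    exact prime_factor_up (mem_PS.1 hp).2.1.two_le δ

lemma WW_lo (z N y : ℕ) (δ : ℝ) (hδ : 0 < δ) :
    WW z N y 1 * Real.exp (∑ p ∈ PS z N y, (1 - (p:ℝ)^(-δ)) / (p:ℝ)) ≤ WW z N y (1+δ) := by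
  unfold WW
  rw [Real.exp_sum, ← Finset.prod_mul_distrib]
  apply Finset.prod_le_prod
  · intro p hp
    have := pow_neg_lt_one (mem_PS.1 hp).2.1.two_le (s := 1) (by linarith)
    have : 0 ≤ 1 - (p:ℝ)^(-(1:ℝ)) := by linarith
    positivity
  · intro p hp
    exact prime_factor_lo (mem_PS.1 hp).2.1.two_le hδ

lemma WW_lo' (z N y : ℕ) (δ : ℝ) (hδ : 0 < δ) (hδ2 : δ ≤ 1/2) :
    WW z N y 1 * Real.exp (-∑ p ∈ PS z N y, ((p:ℝ)^δ - 1) / ((p:ℝ) - Real.sqrt p)) ≤ WW z N y (1-δ) := by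
  unfold WW
  rw [← Finset.sum_neg_distrib, Real.exp_sum, ← Finset.prod_mul_distrib]
  apply Finset.prod_le_prod
  · intro p hp
    have := pow_neg_lt_one (mem_PS.1 hp).2.1.two_le (s := 1) (by linarith)
    have : 0 ≤ 1 - (p:ℝ)^(-(1:ℝ)) := by linarith
    positivity
  · intro p hp
    exact prime_factor_lo' (mem_PS.1 hp).2.1.two_le hδ hδ2

lemma rpow_split {m : ℕ} (hm : m ≠ 0) (a δ : ℝ) : (m:ℝ)^(-(a+δ)) = (m:ℝ)^(-a) * Real.exp (-δ * Real.log m) := by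
  have : (0:ℝ) < m := by exact_mod_cast Nat.pos_of_ne_zero hm
  rw [show -(a+δ) = -a + (-δ) by ring, Real.rpow_add this, Real.rpow_def_of_pos this (-δ), mul_comm (Real.log _)]

lemma GG_up (z t N m : ℕ) {δ : ℝ} (hδ : 0 < δ) (E : ℝ)
    (hE : ∑ p ∈ PS z N (t*m), (1 - (p:ℝ)^(-δ)) / ((p:ℝ) - 1) ≤ E) :
    GG z t N (1+δ) m ≤ GG z t N 1 m * Real.exp (-δ * Real.log m + E) := by
  unfold GG
  split_ifs with h
  · rw [rpow_split h.1.1, Real.exp_add]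
    have h1 := WW_up z N (t*m) δ hδ
    have h2 := WW_pos z N (t*m) one_pos
    calc (m:ℝ) ^ (-(1:ℝ)) * Real.exp (-δ * Real.log m) * WW z N (t * m) (1 + δ) 
        ≤ (m:ℝ) ^ (-(1:ℝ)) * Real.exp (-δ * Real.log m) * (WW z N (t*m) 1 * Real.exp E) := by
          gcongr
          refine h1.trans ?_
          gcongr
      _ = _ := by ring
  · simp

lemma GG_lo (z t N m : ℕ) {δ : ℝ} (hδ : 0 < δ) (E : ℝ)
    (hE : E ≤ ∑ p ∈ PS z N (t*m), (1 - (p:ℝ)^(-δ)) / (p:ℝ)) :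
    GG z t N 1 m * Real.exp (-δ * Real.log m + E) ≤ GG z t N (1+δ) m := by
  unfold GG
  split_ifs with h
  · rw [rpow_split h.1.1, Real.exp_add]
    have h1 := WW_lo z N (t*m) δ hδ
    have h2 := WW_pos z N (t*m) one_pos
    calc _ = (m:ℝ) ^ (-(1:ℝ)) * Real.exp (-δ * Real.log m) * (WW z N (t*m) 1 * Real.exp E) := by ring
      _ ≤ (m:ℝ) ^ (-(1:ℝ)) * Real.exp (-δ * Real.log m) * WW z N (t * m) (1 + δ) := by
          gcongr
          refine le_trans ?_ h1
          gcongr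
  · simp

lemma GG_lo' (z t N m : ℕ) {δ : ℝ} (hδ : 0 < δ) (hδ2 : δ ≤ 1/2) (E : ℝ)
    (hE : ∑ p ∈ PS z N (t*m), ((p:ℝ)^δ - 1) / ((p:ℝ) - Real.sqrt p) ≤ E) :
    GG z t N 1 m * Real.exp (δ * Real.log m - E) ≤ GG z t N (1-δ) m := by
  unfold GG
  split_ifs with h
  · rw [show (1:ℝ) - δ = 1 + (-δ) by ring, rpow_split h.1.1, sub_eq_add_neg, Real.exp_add, neg_neg,
      show (1:ℝ) + (-δ) = 1 - δ by ring]
    have h1 := WW_lo' z N (t*m) δ hδ hδ2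
    have h2 := WW_pos z N (t*m) one_pos
    calc _ = (m:ℝ) ^ (-(1:ℝ)) * Real.exp (δ * Real.log m) * (WW z N (t*m) 1 * Real.exp (-E)) := by ring
      _ ≤ (m:ℝ) ^ (-(1:ℝ)) * Real.exp (δ * Real.log m) * WW z N (t * m) (1 - δ) := by
          gcongr
          refine le_trans ?_ h1
          gcongr
  · simp

lemma one_sub_rpow_le {p : ℕ} (hp : 2 ≤ p) (δ : ℝ) : 1 - (p:ℝ)^(-δ) ≤ δ * Real.log p := by
  have h2 : (0:ℝ) < p := by positivity
  rw [Real.rpow_def_of_pos h2]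
  have := Real.add_one_le_exp (Real.log p * -δ)
  linarith

lemma sub_sqrt_pos {p : ℕ} (hp : 2 ≤ p) : 0 < (p:ℝ) - Real.sqrt p ∧ (p:ℝ) - Real.sqrt p ≤ p - 1 := by
  have h2 : (2:ℝ) ≤ p := by exact_mod_cast hp
  have hr1 : 1 < Real.sqrt p := by
    apply Real.lt_sqrt_of_sq_lt; linarith
  have hrr : Real.sqrt p * Real.sqrt p = p := Real.mul_self_sqrt (by linarith)
  constructor <;> nlinarith

/-- `E₁`: trivial exponent bound -/
lemma E_up1 : ∃ C : ℝ, 0 ≤ C ∧ ∀ (z N y : ℕ) (δ : ℝ), 0 < δ → 1 ≤ y →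
    ∑ p ∈ PS z N y, (1 - (p:ℝ)^(-δ)) / ((p:ℝ) - 1) ≤ δ * (Real.log y + C) := by
  obtain ⟨C, hC0, hC⟩ := mert_up'
  refine ⟨C, hC0, ?_⟩
  intro z N y δ hδ hy
  have := hC y (PS z N y) hy (fun p hp => ⟨(mem_PS.1 hp).2.1, (mem_PS.1 hp).2.2.2⟩)
  refine le_trans ?_ (mul_le_mul_of_nonneg_left this hδ.le)
  rw [Finset.mul_sum]
  apply Finset.sum_le_sum
  intro p hp
  have h2 := (mem_PS.1 hp).2.1.two_le
  obtain ⟨h3, h4⟩ := sub_sqrt_pos h2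
  have h5 := one_sub_rpow_le h2 δ
  have h6 := Real.log_natCast_nonneg p
  rw [← mul_div_assoc]
  calc _ ≤ δ * Real.log p / ((p:ℝ)-1) := by gcongr; linarith
    _ ≤ _ := by gcongr

lemma one_sub_exp_half {v : ℝ} (hv : 2 ≤ v) : 1 - Real.exp (-v) ≤ v / 2 := by
  have := Real.exp_pos (-v)
  linarith

lemma E_up2 (z : ℕ) : ∃ C : ℝ, 0 ≤ C ∧ ∀ (N y : ℕ) (δ : ℝ), 0 < δ → 1 ≤ y →
    ∑ p ∈ PS z N y, (1 - (p:ℝ)^(-δ)) / ((p:ℝ) - 1) ≤ δ / 2 * Real.log y + 1 + δ * C := by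
  obtain ⟨C1, hC10, hC1⟩ := mert_up'
  obtain ⟨C2, hC20, hC2⟩ := mert_low' z
  refine ⟨C1 + C2 + C1, by positivity, ?_⟩
  intro N y δ hδ hy
  set Full := PS z (y+1) y with hF
  have hFp : ∀ p ∈ Full, p.Prime ∧ p ≤ y := fun p hp => ⟨(mem_PS.1 hp).2.1, (mem_PS.1 hp).2.2.2⟩
  have hnn : ∀ p ∈ Full, 0 ≤ (1 - (p:ℝ)^(-δ)) / ((p:ℝ) - 1) := by
    intro p hp
    have h2 := (hFp p hp).1.two_le
    have := pow_neg_lt_one h2 hδ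
    have h3 : (2:ℝ) ≤ p := by exact_mod_cast h2
    apply div_nonneg <;> linarith
  have step1 : ∑ p ∈ PS z N y, (1 - (p:ℝ)^(-δ)) / ((p:ℝ) - 1) ≤ ∑ p ∈ Full, (1 - (p:ℝ)^(-δ)) / ((p:ℝ) - 1) := by
    apply Finset.sum_le_sum_of_subset_of_nonneg
    · intro p hp; rw [mem_PS] at hp ⊢; exact ⟨by omega, hp.2⟩
    · intro p hp _; exact hnn p hp
  refine step1.trans ?_
  set q := ⌊Real.exp (2/δ)⌋₊ with hq
  have hq1 : 1 ≤ q := by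
    rw [hq, Nat.one_le_floor_iff]; exact Real.one_le_exp (by positivity)
  have hlq : Real.log q ≤ 2/δ := by
    rw [Real.log_le_iff_le_exp (by exact_mod_cast hq1)]
    exact Nat.floor_le (Real.exp_pos _).le
  -- pointwise
  have hpt : ∀ p ∈ Full, (1 - (p:ℝ)^(-δ)) / ((p:ℝ) - 1) ≤ 
      δ * (Real.log p / ((p:ℝ) - Real.sqrt p)) - δ/2 * (Real.log p / p) + δ/2 * (if p ≤ q then Real.log p / p else 0) := by
    intro p hp
    have h2 := (hFp p hp).1.two_le
    have h22 : (2:ℝ) ≤ p := by exact_mod_cast h2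
    obtain ⟨h3, h4⟩ := sub_sqrt_pos h2
    have h6 := Real.log_natCast_nonneg p
    by_cases hpq : p ≤ q
    · rw [if_pos hpq]
      have h5 := one_sub_rpow_le h2 δ
      rw [sub_add_cancel, ← mul_div_assoc]
      calc _ ≤ δ * Real.log p / ((p:ℝ)-1) := by gcongr; linarith
        _ ≤ _ := by gcongr
    · rw [if_neg hpq, mul_zero, add_zero]
      have h7 : 2 ≤ δ * Real.log p := by
        have : Real.exp (2/δ) < p := by
          rw [← Nat.floor_lt (Real.exp_pos _).le]; omega
        have := (Real.lt_log_iff_exp_lt (by linarith)).2 this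
        rw [div_lt_iff₀ hδ] at this
        linarith
      have h8 := one_sub_exp_half h7
      have h9 : (p:ℝ)^(-δ) = Real.exp (-(δ * Real.log p)) := by
        rw [Real.rpow_def_of_pos (by linarith)]; congr 1; ring
      have h10 : (1 - (p:ℝ)^(-δ)) / ((p:ℝ) - 1) ≤ δ/2 * (Real.log p / ((p:ℝ) - Real.sqrt p)) := by
        rw [h9, ← mul_div_assoc]
        calc _ ≤ (δ/2 * Real.log p) / ((p:ℝ)-1) := by gcongr <;> linarith
          _ ≤ _ := by gcongr
      have h11 : Real.log p / p ≤ Real.log p / ((p:ℝ) - Real.sqrt p) := by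
        gcongr
        have := Real.sqrt_nonneg (p:ℝ)
        linarith
      nlinarith
  refine (Finset.sum_le_sum hpt).trans ?_
  rw [Finset.sum_add_distrib, Finset.sum_sub_distrib, ← Finset.mul_sum, ← Finset.mul_sum, ← Finset.mul_sum]
  have A := hC1 y Full hy hFp
  have B : Real.log y - C2 ≤ ∑ p ∈ Full, Real.log p / p := by
    refine (hC2 y hy).trans (le_of_eq ?_)
    apply Finset.sum_congr _ (fun _ _ => rfl)
    ext p
    simp only [mem_filter, mem_range, hF, mem_PS]
    constructor
    · rintro ⟨a, b, c⟩; exact ⟨a, b, c, by omega⟩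
    · rintro ⟨a, b, c, d⟩; exact ⟨a, b, c⟩
  have D : ∑ p ∈ Full, (if p ≤ q then Real.log p / p else 0) ≤ 2/δ + C1 := by
    rw [← Finset.sum_filter]
    have h := hC1 q (Full.filter (fun p => p ≤ q)) hq1 (fun p hp => ⟨(hFp p (mem_filter.1 hp).1).1, (mem_filter.1 hp).2⟩)
    refine le_trans (Finset.sum_le_sum ?_) (h.trans (by linarith))
    intro p hp
    have h2 := (hFp p (mem_filter.1 hp).1).1.two_le
    obtain ⟨h3, h4⟩ := sub_sqrt_pos h2
    have h6 := Real.log_natCast_nonneg p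
    gcongr
    have := Real.sqrt_nonneg (p:ℝ)
    linarith
  have D' : δ/2 * (∑ p ∈ Full, (if p ≤ q then Real.log p / p else 0)) ≤ 1 + δ/2 * C1 := by
    have := mul_le_mul_of_nonneg_left D (show 0 ≤ δ/2 by positivity)
    refine this.trans (le_of_eq ?_)
    field_simp
  have A' := mul_le_mul_of_nonneg_left A hδ.le
  have B' := mul_le_mul_of_nonneg_left B (show 0 ≤ δ/2 by positivity)
  nlinarith [mul_nonneg hδ.le hC10, mul_nonneg hδ.le hC20]

/-- upper bound for the tail -/
theorem tail_T (z : ℕ) : ∃ C : ℝ, 1 ≤ C ∧ ∀ (t N : ℕ) (y : ℝ) (F : Finset ℕ), 1 ≤ t → 1 < y →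
    (∀ m ∈ F, y ≤ m) → ∑ m ∈ F, GG z t N 1 m ≤ C * (Real.log t + 1) / Real.log y := by
  obtain ⟨C1, hC10, hC1⟩ := E_up1
  obtain ⟨C2, hC20, hC2⟩ := E_up2 z
  set C := C1 + C2 + 1 with hC
  refine ⟨24 * C, by linarith, ?_⟩
  intro t N y F ht hy hF
  have hly : 0 < Real.log y := Real.log_pos hy
  have hlt : 0 ≤ Real.log t := Real.log_natCast_nonneg t
  have ht0 : (0:ℝ) < t := by exact_mod_cast ht
  set δ := 4 / Real.log y with hδd
  have hδ : 0 < δ := by positivity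
  have hS1 := GG_hasSum z t ht one_pos N
  have hSs := GG_hasSum z t ht (show 0 < 1 + δ by linarith) N
  have hgoal : 24 * C * (Real.log t + 1) / Real.log y = 6 * (δ * (C * (Real.log t + 1))) := by
    rw [hδd]; field_simp; ring
  rw [hgoal]
  have hCt : Real.log t + C ≤ C * (Real.log t + 1) := by nlinarith
  have hCt' : δ * (Real.log t + C) ≤ δ * (C * (Real.log t + 1)) := by gcongr
  have hC0 : 0 < C := by linarith
  by_cases hbig : 1/2 ≤ δ * (Real.log t + C)
  · have : ∑ m ∈ F, GG z t N 1 m ≤ 1 := sum_le_hasSum F (fun m _ => GG_nonneg z t N one_pos m) hS1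
    linarith
  push Not at hbig
  set a := 2 * (δ * (Real.log t + C)) with ha
  have hlogtm : ∀ m : ℕ, m ≠ 0 → Real.log ((t*m : ℕ):ℝ) = Real.log t + Real.log m := by
    intro m hm
    rw [Nat.cast_mul, Real.log_mul ht0.ne' (by exact_mod_cast hm)]
  have ha0 : 0 < δ * (Real.log t + C) := by positivity
  have hexp : Real.exp (δ * (Real.log t + C)) ≤ 1 + a := by
    have := Real.exp_bound_div_one_sub_of_interval ha0.le (by linarith)
    refine this.trans ?_
    rw [div_le_iff₀ (by linarith)]
    nlinarith
  have hb1 : ∀ m, GG z t N (1+δ) m ≤ GG z t N 1 m * (1 + a) := by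
    intro m
    by_cases hm : m = 0
    · have : ∀ s, GG z t N s m = 0 := by
        intro s; unfold GG; rw [if_neg]; rintro ⟨h, _⟩; exact h.1 hm
      simp [this]
    have h1 := GG_up z t N m hδ _ (hC1 z N (t*m) δ hδ (Nat.mul_pos ht (Nat.pos_of_ne_zero hm)))
    refine h1.trans (mul_le_mul_of_nonneg_left ?_ (GG_nonneg z t N one_pos m))
    refine le_trans (Real.exp_le_exp.2 ?_) hexp
    rw [hlogtm m hm]
    nlinarith
  have hb2 : ∀ m ∈ F, GG z t N (1+δ) m ≤ GG z t N 1 m * (2/3) := by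
    intro m hmF
    have hym := hF m hmF
    have hm : m ≠ 0 := by rintro rfl; simp at hym; linarith
    have h1 := GG_up z t N m hδ _ (hC2 N (t*m) δ hδ (Nat.mul_pos ht (Nat.pos_of_ne_zero hm)))
    refine h1.trans (mul_le_mul_of_nonneg_left ?_ (GG_nonneg z t N one_pos m))
    have h3 : Real.exp (-(1/2)) ≤ 2/3 := by
      rw [Real.exp_neg]
      have := Real.add_one_le_exp (1/2 : ℝ)
      rw [inv_le_comm₀ (Real.exp_pos _) (by norm_num)]
      linarith
    refine le_trans (Real.exp_le_exp.2 ?_) h3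
    rw [hlogtm m hm]
    have h4 : Real.log y ≤ Real.log m := Real.log_le_log (by linarith) hym
    have h5 : δ * Real.log y = 4 := by rw [hδd]; field_simp
    have h6 : 4 ≤ δ * Real.log m := by rw [← h5]; gcongr
    nlinarith
  have hsum : HasSum (fun m => (1 + a) * GG z t N 1 m - GG z t N (1+δ) m) ((1+a) * 1 - 1) :=
    (hS1.mul_left _).sub hSs
  have h7 : ∑ m ∈ F, ((1 + a) * GG z t N 1 m - GG z t N (1+δ) m) ≤ (1+a) * 1 - 1 :=
    sum_le_hasSum F (fun m _ => by have := hb1 m; linarith) hsum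
  have h8 : ∑ m ∈ F, GG z t N 1 m * (1/3) ≤ ∑ m ∈ F, ((1 + a) * GG z t N 1 m - GG z t N (1+δ) m) := by
    apply Finset.sum_le_sum
    intro m hm
    have := hb2 m hm
    have h9 := GG_nonneg z t N one_pos m
    nlinarith
  rw [← Finset.sum_mul] at h8
  linarith

lemma GG_zero (z t N : ℕ) (s : ℝ) : GG z t N s 0 = 0 := by
  unfold GG; rw [if_neg]; rintro ⟨h, _⟩; exact h.1 rfl

lemma GG_sum_le_one (z t N : ℕ) (ht : 1 ≤ t) {s : ℝ} (hs : 0 < s) (F : Finset ℕ) :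
    ∑ m ∈ F, GG z t N s m ≤ 1 :=
  sum_le_hasSum F (fun m _ => GG_nonneg z t N hs m) (GG_hasSum z t ht hs N)

lemma log_tm {t m : ℕ} (ht : 1 ≤ t) (hm : m ≠ 0) :
    Real.log ((t*m : ℕ):ℝ) = Real.log t + Real.log m := by
  have ht0 : (0:ℝ) < t := by exact_mod_cast ht
  rw [Nat.cast_mul, Real.log_mul ht0.ne' (by exact_mod_cast hm)]

lemma sum_odd_sq (n : ℕ) : ∑ k ∈ range n, (2*(k:ℝ)+1) = (n:ℝ)^2 := by
  induction n with
  | zero => simp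
  | succ n ih => rw [Finset.sum_range_succ, ih]; push_cast; ring

theorem Q_bound (z : ℕ) : ∃ C : ℝ, 1 ≤ C ∧ ∀ (t N : ℕ) (L : ℝ) (F : Finset ℕ), 1 ≤ t →
    Real.log t + 1 ≤ L → (∀ m ∈ F, m ≠ 0 ∧ Real.log m ≤ L) →
    ∑ m ∈ F, GG z t N 1 m * (Real.log (t*m : ℕ))^2 ≤ C * (Real.log t + 1) * L := by
  obtain ⟨C, hC1, hC⟩ := tail_T z
  refine ⟨10 * C, by linarith, ?_⟩
  intro t N L F ht hL hF
  have hlt : 0 ≤ Real.log t := Real.log_natCast_nonneg t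
  have hG := fun m => GG_nonneg z t N one_pos m
  have h1 : ∀ m ∈ F, GG z t N 1 m * (Real.log m)^2 ≤ 
      ∑ k ∈ range (⌊L⌋₊+1), (2*(k:ℝ)+1) * (if (k:ℝ) ≤ Real.log m then GG z t N 1 m else 0) := by
    intro m hm
    have hlm : 0 ≤ Real.log m := Real.log_natCast_nonneg m
    have e1 : ∑ k ∈ range (⌊L⌋₊+1), (2*(k:ℝ)+1) * (if (k:ℝ) ≤ Real.log m then GG z t N 1 m else 0)
       = GG z t N 1 m * ∑ k ∈ (range (⌊L⌋₊+1)).filter (fun k : ℕ => (k:ℝ) ≤ Real.log m), (2*(k:ℝ)+1) := by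
      rw [Finset.sum_filter, Finset.mul_sum]
      apply Finset.sum_congr rfl
      intro k _
      split_ifs <;> ring
    have e2 : (range (⌊L⌋₊+1)).filter (fun k : ℕ => (k:ℝ) ≤ Real.log m) = range (⌊Real.log m⌋₊+1) := by
      ext k
      simp only [mem_filter, mem_range, Nat.lt_succ_iff]
      rw [Nat.le_floor_iff hlm, Nat.le_floor_iff (by linarith)]
      constructor
      · exact fun h => h.2
      · exact fun h => ⟨h.trans (hF m hm).2, h⟩
    rw [e1, e2, sum_odd_sq]
    have := (Nat.lt_floor_add_one (Real.log m)).le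
    have h3 := hG m
    push_cast
    gcongr
  have h2 : ∀ k ∈ range (⌊L⌋₊+1), (2*(k:ℝ)+1) * (∑ m ∈ F, if (k:ℝ) ≤ Real.log m then GG z t N 1 m else 0)
      ≤ if k = 0 then 1 else 3 * C * (Real.log t + 1) := by
    intro k _
    rw [← Finset.sum_filter]
    by_cases hk : k = 0
    · rw [if_pos hk]; subst hk
      have := GG_sum_le_one z t N ht one_pos (F.filter (fun m : ℕ => ((0:ℕ):ℝ) ≤ Real.log m))
      simpa using this
    · rw [if_neg hk]
      have hk1 : (1:ℝ) ≤ k := by exact_mod_cast Nat.one_le_iff_ne_zero.2 hk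
      have := hC t N (Real.exp k) (F.filter (fun m : ℕ => (k:ℝ) ≤ Real.log m)) ht
        (Real.one_lt_exp_iff.2 (by linarith)) (by
          intro m hm
          rw [mem_filter] at hm
          rw [← Real.le_log_iff_exp_le (by exact_mod_cast Nat.pos_of_ne_zero (hF m hm.1).1)]
          exact hm.2)
      rw [Real.log_exp] at this
      calc _ ≤ (2*(k:ℝ)+1) * (C * (Real.log t + 1) / k) := by gcongr
        _ ≤ (3*k) * (C * (Real.log t + 1) / k) := by gcongr; linarith
        _ = _ := by field_simp
  have h3 : ∑ m ∈ F, GG z t N 1 m * (Real.log m)^2 ≤ 1 + L * (3 * C * (Real.log t + 1)) := by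
    refine (Finset.sum_le_sum h1).trans ?_
    rw [Finset.sum_comm]
    simp_rw [← Finset.mul_sum]
    refine (Finset.sum_le_sum h2).trans ?_
    rw [Finset.sum_range_succ']
    simp only [Nat.succ_ne_zero, if_false, if_true, Finset.sum_const, card_range, nsmul_eq_mul]
    have := Nat.floor_le (show 0 ≤ L by linarith)
    rw [add_comm]
    gcongr
  have h4 : ∑ m ∈ F, GG z t N 1 m * (Real.log t)^2 ≤ (Real.log t)^2 := by
    rw [← Finset.sum_mul]
    have := GG_sum_le_one z t N ht one_pos F
    nlinarith [sq_nonneg (Real.log t)]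
  have h5 : ∑ m ∈ F, GG z t N 1 m * (Real.log (t*m : ℕ))^2 ≤ 
     2 * ∑ m ∈ F, GG z t N 1 m * (Real.log t)^2 + 2 * ∑ m ∈ F, GG z t N 1 m * (Real.log m)^2 := by
    rw [Finset.mul_sum, Finset.mul_sum, ← Finset.sum_add_distrib]
    apply Finset.sum_le_sum
    intro m hm
    rw [log_tm ht (hF m hm).1]
    have := hG m
    nlinarith [mul_nonneg this (sq_nonneg (Real.log t - Real.log m))]
  have h6 : 1 ≤ (Real.log t + 1) * L := by nlinarith
  have h7 : (Real.log t)^2 ≤ (Real.log t + 1) * L := by nlinarith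
  nlinarith [mul_le_mul_of_nonneg_left h6 (show 0 ≤ C - 1 by linarith), mul_le_mul_of_nonneg_left h7 (show 0 ≤ C - 1 by linarith)]

lemma zeta_step {m : ℕ} (hm : 1 ≤ m) {δ : ℝ} (hδ : 0 < δ) (hδ1 : δ ≤ 1) :
    δ * ((m+1:ℕ):ℝ)^(-(1+δ)) ≤ (m:ℝ)^(-δ) - ((m+1:ℕ):ℝ)^(-δ) := by
  have hm' : (1:ℝ) ≤ m := by exact_mod_cast hm
  set M : ℝ := ((m+1:ℕ):ℝ) with hM
  have hMm : M = m + 1 := by rw [hM]; push_cast; ring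
  have hM0 : 0 < M := by linarith
  have h1 := rpow_one_add_le_one_add_mul_self (s := -(1/M)) (p := δ)
    (by have : 1/M ≤ 1 := by rw [div_le_one hM0]; linarith
        linarith) hδ.le hδ1
  have h2 : 1 + -(1/M) = m / M := by rw [hMm]; field_simp; ring
  rw [h2, Real.div_rpow (by linarith) hM0.le] at h1
  have e1 : M^(-(1+δ)) = M⁻¹ * (M^δ)⁻¹ := by
    rw [show -(1+δ) = (-1) + (-δ) by ring, Real.rpow_add hM0, Real.rpow_neg_one, Real.rpow_neg hM0.le]
  rw [e1, Real.rpow_neg (by linarith), Real.rpow_neg hM0.le]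
  have ha : 0 < (m:ℝ)^δ := by positivity
  have hb : 0 < M^δ := by positivity
  set a := (m:ℝ)^δ
  set b := M^δ
  set u := δ * (1/M) with hu
  have hu0 : 0 < u := by positivity
  have h3 : a ≤ b * (1 - u) := by
    rw [div_le_iff₀ hb] at h1; linarith
  have h4 : δ * (M⁻¹ * b⁻¹) = u / b := by rw [hu]; field_simp
  rw [h4]
  have h5 : (1 + u) / b ≤ 1 / a := by
    rw [div_le_div_iff₀ hb ha]
    nlinarith [mul_pos hb hu0, mul_pos (mul_pos hb hu0) hu0]
  have h6 : (1+u)/b = b⁻¹ + u / b := by field_simp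
  have h7 : 1 / a = a⁻¹ := by simp
  linarith

lemma zeta_bound (n : ℕ) {δ : ℝ} (hδ : 0 < δ) (hδ1 : δ ≤ 1) :
    ∑ m ∈ range n, ((m+1:ℕ):ℝ)^(-(1+δ)) ≤ 1 + 1/δ := by
  have key : ∀ n : ℕ, δ * ∑ m ∈ range (n+1), ((m+1:ℕ):ℝ)^(-(1+δ)) ≤ δ + 1 - ((n+1:ℕ):ℝ)^(-δ) := by
    intro n
    induction n with
    | zero => simp
    | succ n ih =>
      rw [Finset.sum_range_succ, mul_add]
      have := zeta_step (m := n+1) (by omega) hδ hδ1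
      linarith
  have h2 : δ * ∑ m ∈ range n, ((m+1:ℕ):ℝ)^(-(1+δ)) ≤ δ + 1 := by
    have h3 := key n
    rw [Finset.sum_range_succ, mul_add] at h3
    have : 0 ≤ ((n+1:ℕ):ℝ)^(-δ) := by positivity
    have : 0 ≤ δ * ((n+1:ℕ):ℝ)^(-(1+δ)) := by positivity
    linarith
  have : (1 + 1/δ) = (δ+1)/δ := by field_simp
  rw [this, le_div_iff₀ hδ]
  linarith

lemma zeta_bound' (F : Finset ℕ) {δ : ℝ} (hδ : 0 < δ) (hδ1 : δ ≤ 1) :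
    ∑ m ∈ F, (if m = 0 then 0 else (m:ℝ)^(-(1+δ))) ≤ 1 + 1/δ := by
  refine le_trans ?_ (zeta_bound (F.sup id) hδ hδ1)
  have h1 : F ⊆ range (F.sup id + 1) := by
    intro m hm
    rw [mem_range]
    have : m ≤ F.sup id := Finset.le_sup (f := id) hm
    omega
  refine (Finset.sum_le_sum_of_subset_of_nonneg h1 ?_).trans ?_
  · intro m _ _
    split_ifs <;> positivity
  · rw [Finset.sum_range_succ']
    simp

lemma Dn_big {N m : ℕ} (hm : m ∈ Nat.smoothNumbers N) : Dn 0 N m := by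
  refine ⟨hm.1, fun p hp hd => ⟨hp.pos, ?_⟩⟩
  have h1 : p < N := hm.2 p ((Nat.mem_primeFactorsList hm.1).2 ⟨hp, hd⟩)
  have := spart_pos hm.1 p
  nlinarith

lemma GG_big {N m : ℕ} (hm : m ∈ Nat.smoothNumbers N) (s : ℝ) :
    GG 0 N N s m = (m:ℝ)^(-s) * WW 0 N N s := by
  unfold GG
  rw [if_pos ⟨Dn_big hm, hm⟩]
  unfold WW
  rw [PS_eq_of_le (y' := N)]
  · have := Nat.pos_of_ne_zero hm.1
    nlinarith
  · omega

lemma WW_sub {z z' N N' y y' : ℕ} (h : PS z N y ⊆ PS z' N' y') {s : ℝ} (hs : 0 < s) :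
    WW z' N' y' s ≤ WW z N y s := by
  unfold WW
  rw [← Finset.prod_sdiff h]
  have : 0 ≤ ∏ p ∈ PS z N y, (1 - (p:ℝ)^(-s)) := (WW_pos z N y hs).le
  apply mul_le_of_le_one_left this
  apply Finset.prod_le_one
  · intro p hp
    have := pow_neg_lt_one (mem_PS.1 (mem_sdiff.1 hp).1).2.1.two_le hs
    linarith
  · intro p hp
    have : 0 ≤ (p:ℝ)^(-s) := by positivity
    linarith

lemma WW_lower : ∃ c : ℝ, 0 < c ∧ ∀ z N y : ℕ, 2 ≤ N → c / Real.log N ≤ WW z N y 1 := by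
  obtain ⟨C, hC0, hC⟩ := E_up1
  have hl2 : 0 < Real.log 2 := Real.log_pos (by norm_num)
  set K := Real.log 2 with hK
  refine ⟨K * Real.exp (-(1 + C / K)) / 2, by positivity, ?_⟩
  intro z N y hN
  have hN' : (2:ℝ) ≤ N := by exact_mod_cast hN
  have hlN : K ≤ Real.log N := Real.log_le_log (by norm_num) hN'
  have hlN0 : 0 < Real.log N := by linarith
  have h1 : WW 0 N N 1 ≤ WW z N y 1 := by
    apply WW_sub _ one_pos
    intro p hp
    rw [mem_PS] at hp ⊢
    exact ⟨hp.1, hp.2.1, by omega, by omega⟩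
  refine le_trans ?_ h1
  have hK1 : K ≤ 1 := by
    have := Real.log_two_lt_d9; linarith
  set δ := K / Real.log N with hδd
  have hδ : 0 < δ := by positivity
  have hδ1 : δ ≤ 1 := by rw [hδd, div_le_one hlN0]; exact hlN
  have h2 : 1 ≤ (1 + 1/δ) * WW 0 N N (1+δ) := by
    refine hasSum_le_of_sum_le (GG_hasSum 0 N (by omega) (show 0 < 1 + δ by linarith) N) ?_
    intro F
    have hW := WW_pos 0 N N (show 0 < 1 + δ by linarith)
    have hb : ∀ m ∈ F, GG 0 N N (1+δ) m ≤ (if m = 0 then 0 else (m:ℝ)^(-(1+δ))) * WW 0 N N (1+δ) := by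
      intro m _
      by_cases hm : m ∈ Nat.smoothNumbers N
      · rw [GG_big hm, if_neg hm.1]
      · unfold GG; rw [if_neg (fun h => hm h.2)]
        apply mul_nonneg _ hW.le
        split_ifs <;> positivity
    refine (Finset.sum_le_sum hb).trans ?_
    rw [← Finset.sum_mul]
    gcongr
    exact zeta_bound' F hδ hδ1
  have h3 := WW_up 0 N N δ hδ
  have h4 := hC 0 N N δ hδ (by omega)
  have hW := WW_pos 0 N N one_pos
  have h5 : WW 0 N N (1+δ) ≤ WW 0 N N 1 * Real.exp (1 + C / K) := by
    refine h3.trans ?_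
    gcongr
    refine h4.trans ?_
    have e : δ * (Real.log N + C) = K + K / Real.log N * C := by
      rw [hδd]; field_simp
    rw [e]
    have : K / Real.log N * C ≤ C / K := by
      have a1 : K / Real.log N ≤ 1 := hδ1
      have a2 : C ≤ C / K := by rw [le_div_iff₀ hl2]; nlinarith
      nlinarith
    linarith
  have h6 : 1 + 1/δ ≤ 2 * Real.log N / K := by
    have : 1/δ = Real.log N / K := by rw [hδd]; field_simp
    rw [this]
    have : 1 ≤ Real.log N / K := by rw [le_div_iff₀ hl2]; linarith
    have e : 2 * Real.log N / K = Real.log N / K + Real.log N / K := by ring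
    linarith
  have h7 : 1 ≤ (2 * Real.log N / K) * (WW 0 N N 1 * Real.exp (1 + C / K)) := by
    refine h2.trans ?_
    have hW' := WW_pos 0 N N (show 0 < 1 + δ by linarith)
    gcongr
  rw [div_le_iff₀ hlN0, div_le_iff₀ (by norm_num), Real.exp_neg, ← div_eq_mul_inv, div_le_iff₀ (Real.exp_pos _)]
  have e : (2 * Real.log N / K) * (WW 0 N N 1 * Real.exp (1 + C / K)) = (2 * Real.log N * (WW 0 N N 1 * Real.exp (1 + C / K))) / K := by ring
  rw [e, le_div_iff₀ hl2] at h7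
  linarith

lemma WW_upper (z : ℕ) : ∃ C : ℝ, 0 < C ∧ ∀ N y : ℕ, 1 ≤ y → y < N → WW z N y 1 ≤ C / Real.log (y+1) := by
  refine ⟨2^(z+1), by positivity, ?_⟩
  intro N y hy hyN
  have hlog : 0 < Real.log (y+1) := Real.log_pos (by have : (1:ℝ) ≤ y := by exact_mod_cast hy
                                                     linarith)
  have hW0 : WW 0 N y 1 * Real.log (y+1) ≤ 1 := by
    have h1 := GG_sum_le_one 0 (y+1) (y+1) (by omega) one_pos (Finset.Icc 1 y)
    have h2 : ∀ m ∈ Finset.Icc 1 y, GG 0 (y+1) (y+1) 1 m = ((m:ℝ))⁻¹ * WW 0 N y 1 := by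
      intro m hm
      rw [mem_Icc] at hm
      have hsm : m ∈ Nat.smoothNumbers (y+1) := Nat.mem_smoothNumbers_of_lt (by omega) (by omega)
      rw [GG_big hsm, Real.rpow_neg_one]
      congr 1
      unfold WW
      apply Finset.prod_congr _ (fun _ _ => rfl)
      ext p; rw [mem_PS, mem_PS]
      constructor
      · rintro ⟨a, b, c, d⟩; exact ⟨by omega, b, c, by omega⟩
      · rintro ⟨a, b, c, d⟩; exact ⟨by omega, b, c, by omega⟩
    rw [Finset.sum_congr rfl h2, ← Finset.sum_mul] at h1
    have h3 := log_add_one_le_harmonic y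
    rw [harmonic_eq_sum_Icc] at h3
    push_cast at h3
    have := WW_pos 0 N y one_pos
    nlinarith
  have h1 : WW z N y 1 * (1/2)^(z+1) ≤ WW 0 N y 1 := by
    have hsub : PS z N y ⊆ PS 0 N y := by
      intro p hp; rw [mem_PS] at hp ⊢; exact ⟨hp.1, hp.2.1, by omega, hp.2.2.2⟩
    unfold WW
    rw [← Finset.prod_sdiff hsub, mul_comm]
    have : 0 ≤ ∏ p ∈ PS z N y, (1 - (p:ℝ)^(-(1:ℝ))) := (WW_pos z N y one_pos).le
    gcongr
    have hcard : (PS 0 N y \ PS z N y).card ≤ z + 1 := by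
      calc _ ≤ (range (z+1)).card := by
            apply Finset.card_le_card
            intro p hp
            rw [mem_sdiff, mem_PS, mem_PS] at hp
            rw [mem_range]
            by_contra hc
            exact hp.2 ⟨hp.1.1, hp.1.2.1, by omega, hp.1.2.2.2⟩
        _ = z + 1 := card_range _
    calc ((1:ℝ)/2)^(z+1) ≤ (1/2)^((PS 0 N y \ PS z N y).card) :=
          pow_le_pow_of_le_one (by norm_num) (by norm_num) hcard
      _ ≤ _ := by
          rw [← Finset.prod_const]
          apply Finset.prod_le_prod
          · intros; norm_num
          · intro p hp
            have h2 : 2 ≤ p := (mem_PS.1 (mem_sdiff.1 hp).1).2.1.two_le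
            have h2' : (2:ℝ) ≤ p := by exact_mod_cast h2
            rw [Real.rpow_neg_one]
            have : (p:ℝ)⁻¹ ≤ 1/2 := by rw [inv_le_comm₀ (by linarith) (by norm_num)]; linarith
            linarith
  rw [le_div_iff₀ hlog]
  have h2 : WW z N y 1 ≤ 2^(z+1) * WW 0 N y 1 := by
    have : (2:ℝ)^(z+1) * (1/2)^(z+1) = 1 := by rw [← mul_pow]; norm_num
    have h3 := mul_le_mul_of_nonneg_left h1 (show (0:ℝ) ≤ 2^(z+1) by positivity)
    calc WW z N y 1 = WW z N y 1 * ((2:ℝ)^(z+1) * (1/2)^(z+1)) := by rw [this, mul_one]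
      _ ≤ _ := by linarith
  calc WW z N y 1 * Real.log (y+1) ≤ (2^(z+1) * WW 0 N y 1) * Real.log (y+1) := by gcongr
    _ = 2^(z+1) * (WW 0 N y 1 * Real.log (y+1)) := by ring
    _ ≤ 2^(z+1) * 1 := by gcongr
    _ = _ := by ring

lemma exp_sub_one_le1 {v : ℝ} (h0 : 0 ≤ v) (h1 : v ≤ 1) : Real.exp v - 1 ≤ v + v^2 := by
  have := Real.abs_exp_sub_one_sub_id_le (x := v) (by rw [abs_of_nonneg h0]; exact h1)
  have := (abs_le.1 this).2
  linarith

lemma rpow_sub_le {p N : ℕ} (hp : 2 ≤ p) (hpN : p < N) {δ : ℝ} (hδ : δ = 1 / Real.log N) :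
    (p:ℝ)^δ - 1 ≤ δ * Real.log p + (δ * Real.log p)^2 ∧ (p:ℝ)^δ - 1 ≤ 2 * (δ * Real.log p) := by
  have hp' : (2:ℝ) ≤ p := by exact_mod_cast hp
  have hpN' : (p:ℝ) < N := by exact_mod_cast hpN
  have hlN : 0 < Real.log N := Real.log_pos (by linarith)
  have hlp := Real.log_natCast_nonneg p
  have h0 : 0 ≤ δ * Real.log p := by rw [hδ]; positivity
  have h1 : δ * Real.log p ≤ 1 := by
    rw [hδ, one_div, inv_mul_le_iff₀ hlN, mul_one]
    exact Real.log_le_log (by linarith) hpN'.le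
  have h2 := exp_sub_one_le1 h0 h1
  have e : (p:ℝ)^δ = Real.exp (δ * Real.log p) := by
    rw [Real.rpow_def_of_pos (by linarith), mul_comm]
  rw [e]
  exact ⟨h2, by nlinarith⟩

lemma E_up3 : ∃ C : ℝ, 1 ≤ C ∧ ∀ (z N y : ℕ) (δ : ℝ), 8 ≤ N → δ = 1 / Real.log N → 1 ≤ y →
    ∑ p ∈ PS z N y, ((p:ℝ)^δ - 1) / ((p:ℝ) - Real.sqrt p) ≤ C ∧
    ∑ p ∈ PS z N y, ((p:ℝ)^δ - 1) / ((p:ℝ) - Real.sqrt p) ≤ δ * (Real.log y + C) + C * δ^2 * (Real.log y)^2 := by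
  obtain ⟨C, hC0, hC⟩ := mert_up'
  refine ⟨2 + 2 * C, by linarith, ?_⟩
  intro z N y δ hN hδ hy
  have hN' : (8:ℝ) ≤ N := by exact_mod_cast hN
  have hlN : 1 ≤ Real.log N := by
    rw [Real.le_log_iff_exp_le (by linarith)]
    have := Real.exp_one_lt_d9; linarith
  have hδ0 : 0 < δ := by rw [hδ]; positivity
  have hδ1 : δ ≤ 1 := by rw [hδ, div_le_one (by linarith)]; exact hlN
  have hδN : δ * Real.log N = 1 := by rw [hδ]; field_simp
  constructor
  · have h1 := hC N (PS z N y) (by omega) (fun p hp => ⟨(mem_PS.1 hp).2.1, (mem_PS.1 hp).1.le⟩)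
    calc _ ≤ ∑ p ∈ PS z N y, 2 * δ * (Real.log p / ((p:ℝ) - Real.sqrt p)) := by
          apply Finset.sum_le_sum
          intro p hp
          have h2 := (mem_PS.1 hp).2.1.two_le
          have h3 := (sub_sqrt_pos h2).1
          rw [← mul_div_assoc]
          gcongr
          have := (rpow_sub_le h2 (mem_PS.1 hp).1 hδ).2
          linarith
      _ ≤ 2 * δ * (Real.log N + C) := by rw [← Finset.mul_sum]; gcongr
      _ ≤ _ := by nlinarith
  · have h1 := hC y (PS z N y) (by omega) (fun p hp => ⟨(mem_PS.1 hp).2.1, (mem_PS.1 hp).2.2.2⟩)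
    have hly := Real.log_natCast_nonneg y
    calc _ ≤ ∑ p ∈ PS z N y, (δ + δ^2 * Real.log y) * (Real.log p / ((p:ℝ) - Real.sqrt p)) := by
          apply Finset.sum_le_sum
          intro p hp
          have h2 := (mem_PS.1 hp).2.1.two_le
          have h2' : (2:ℝ) ≤ p := by exact_mod_cast h2
          have h3 := (sub_sqrt_pos h2).1
          have h4 : Real.log p ≤ Real.log y := Real.log_le_log (by linarith) (by exact_mod_cast (mem_PS.1 hp).2.2.2)
          have h5 := Real.log_natCast_nonneg p
          rw [← mul_div_assoc]
          gcongr
          have := (rpow_sub_le h2 (mem_PS.1 hp).1 hδ).1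
          refine this.trans ?_
          have : δ^2 * Real.log p * Real.log p ≤ δ^2 * Real.log p * Real.log y := by gcongr
          nlinarith
      _ ≤ (δ + δ^2 * Real.log y) * (Real.log y + C) := by rw [← Finset.mul_sum]; gcongr
      _ ≤ _ := by
          set l := Real.log y
          have : δ^2 * l ≤ δ + δ^2 * l^2 := by nlinarith [mul_nonneg hδ0.le (sq_nonneg (δ*l - 1)), sq_nonneg (δ*l-1), mul_nonneg hδ0.le (sub_nonneg.2 hδ1), sq_nonneg (l - 1), mul_nonneg (sq_nonneg δ) (sq_nonneg (l-1))]
          nlinarith [mul_le_mul_of_nonneg_left this hC0, mul_nonneg hC0 (mul_nonneg (sq_nonneg δ) (sq_nonneg l)), mul_nonneg (sq_nonneg δ) (sq_nonneg l)]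

theorem T2 (z : ℕ) : ∃ A C : ℝ, 1 ≤ A ∧ 1 ≤ C ∧ ∀ (t N : ℕ) (δ : ℝ) (F : Finset ℕ), 1 ≤ t → 8 ≤ N →
    δ = 1 / Real.log N → (∀ m ∈ F, m ≠ 0 ∧ A * Real.log N ≤ Real.log m) →
    ∑ m ∈ F, Real.exp (δ * Real.log m) * GG z t N 1 m ≤ C * δ * (Real.log t + 1) := by
  obtain ⟨C1, hC1, hE⟩ := E_up3
  obtain ⟨C2, hC2, hQ⟩ := Q_bound z
  set A := C1 + 1 with hA
  have hA1 : 1 ≤ A := by linarith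
  have hA0 : 0 < A := by linarith
  refine ⟨A, Real.exp C1 * 2 * (C1 + C1 * C2 * A), hA1, ?_, ?_⟩
  · have h1 : 1 ≤ Real.exp C1 := Real.one_le_exp (by linarith)
    have : 0 ≤ C1 * C2 * A := by positivity
    nlinarith
  intro t N δ F ht hN hδ hF
  have hN' : (8:ℝ) ≤ N := by exact_mod_cast hN
  have hlN : 2 ≤ Real.log N := by
    have h8 : Real.log 8 ≤ Real.log N := Real.log_le_log (by norm_num) hN'
    have : Real.log 8 = 3 * Real.log 2 := by
      rw [show (8:ℝ) = 2^3 by norm_num, Real.log_pow]; norm_num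
    have := Real.log_two_gt_d9
    linarith
  have hδ0 : 0 < δ := by rw [hδ]; positivity
  have hδ1 : δ ≤ 1/2 := by
    rw [hδ]; gcongr
  have hδN : δ * Real.log N = 1 := by rw [hδ]; field_simp
  have hlt : 0 ≤ Real.log t := Real.log_natCast_nonneg t
  have hG := fun m => GG_nonneg z t N one_pos m
  have hs0 : 0 < 1 - δ := by linarith
  have hlow1 : ∀ m, m ≠ 0 → GG z t N 1 m * Real.exp (δ * Real.log m - C1) ≤ GG z t N (1-δ) m := by
    intro m hm
    exact GG_lo' z t N m hδ0 hδ1 _ (hE z N (t*m) δ hN hδ (Nat.mul_pos ht (Nat.pos_of_ne_zero hm))).1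
  by_cases hbig : 1 ≤ δ * (Real.log t + 1)
  · have h1 : ∑ m ∈ F, Real.exp (δ * Real.log m) * GG z t N 1 m ≤ ∑ m ∈ F, Real.exp C1 * GG z t N (1-δ) m := by
      apply Finset.sum_le_sum
      intro m hm
      have := hlow1 m (hF m hm).1
      rw [Real.exp_sub, mul_div_assoc', div_le_iff₀ (Real.exp_pos _)] at this
      linarith
    rw [← Finset.mul_sum] at h1
    have h2 := GG_sum_le_one z t N ht hs0 F
    have h3 : Real.exp C1 * ∑ m ∈ F, GG z t N (1-δ) m ≤ Real.exp C1 * 1 := by gcongr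
    have h4 : 1 ≤ 2 * (C1 + C1 * C2 * A) := by
      have : 0 ≤ C1 * C2 * A := by positivity
      linarith
    have h5 : 1 ≤ 2 * (C1 + C1 * C2 * A) * (δ * (Real.log t + 1)) := by nlinarith
    have h6 := mul_le_mul_of_nonneg_left h5 (Real.exp_pos C1).le
    linarith
  push Not at hbig
  have hlow2 : ∀ m, m ≠ 0 → -(GG z t N 1 m * (δ * (Real.log t + C1)) + GG z t N 1 m * (Real.log (t*m:ℕ))^2 * (C1 * δ^2)) ≤ GG z t N (1-δ) m - GG z t N 1 m := by
    intro m hm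
    have h1 := GG_lo' z t N m hδ0 hδ1 _ (hE z N (t*m) δ hN hδ (Nat.mul_pos ht (Nat.pos_of_ne_zero hm))).2
    have h2 := Real.add_one_le_exp (δ * Real.log m - (δ * (Real.log (t*m:ℕ) + C1) + C1 * δ^2 * (Real.log (t*m:ℕ))^2))
    have h3 := mul_le_mul_of_nonneg_left h2 (hG m)
    have h4 := log_tm ht hm
    set l := Real.log (t*m:ℕ)
    have h5 : Real.log m = l - Real.log t := by linarith
    rw [h5] at h1 h3
    nlinarith
  have hlow3 : ∀ m : ℕ, m ≠ 0 → A * Real.log N ≤ Real.log m → 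
      Real.exp (-C1) / 2 * (Real.exp (δ * Real.log m) * GG z t N 1 m) ≤ GG z t N (1-δ) m - GG z t N 1 m := by
    intro m hm hAm
    have h1 := hlow1 m hm
    have h2 : A ≤ δ * Real.log m := by
      calc A = δ * (A * Real.log N) := by rw [mul_left_comm, hδN, mul_one]
        _ ≤ _ := by gcongr
    have h3 : 2 ≤ Real.exp (δ * Real.log m - C1) := by
      have := Real.add_one_le_exp (δ * Real.log m - C1)
      linarith
    have h4 : Real.exp (δ * Real.log m - C1) = Real.exp (-C1) * Real.exp (δ * Real.log m) := by
      rw [← Real.exp_add]; congr 1; ring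
    have h5 := mul_le_mul_of_nonneg_left h3 (hG m)
    have h6 : Real.exp (-C1) / 2 * (Real.exp (δ * Real.log m) * GG z t N 1 m) = GG z t N 1 m * Real.exp (δ * Real.log m - C1) / 2 := by
      rw [h4]; ring
    linarith
  -- small part
  set M := ⌊Real.exp (A * Real.log N)⌋₊ with hM
  set B := (Finset.Icc 1 M).filter (fun m : ℕ => Real.log m < A * Real.log N) with hB
  have hBm : ∀ m ∈ B, m ≠ 0 ∧ Real.log m ≤ A * Real.log N := by
    intro m hm
    rw [hB, mem_filter, mem_Icc] at hm
    exact ⟨by omega, hm.2.le⟩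
  have hBc : ∀ m : ℕ, m ≠ 0 → m ∉ B → A * Real.log N ≤ Real.log m := by
    intro m hm hmB
    by_contra hc
    push Not at hc
    have : M < m := by
      by_contra hc'
      exact hmB (by rw [hB, mem_filter, mem_Icc]; exact ⟨by omega, hc⟩)
    apply absurd hc
    rw [not_lt]
    rw [Real.le_log_iff_exp_le (by exact_mod_cast Nat.pos_of_ne_zero hm)]
    exact ((Nat.floor_lt (Real.exp_pos _).le).1 this).le
  have hsum : HasSum (fun m => GG z t N (1-δ) m - GG z t N 1 m) (1 - 1) :=
    (GG_hasSum z t ht hs0 N).sub (GG_hasSum z t ht one_pos N)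
  have h7 : ∑ m ∈ F ∪ B, (GG z t N (1-δ) m - GG z t N 1 m) ≤ 1 - 1 := by
    apply sum_le_hasSum _ _ hsum
    intro m hm
    by_cases hm0 : m = 0
    · subst hm0; simp [GG_zero]
    · refine le_trans ?_ (hlow3 m hm0 (hBc m hm0 (fun h => hm (Finset.mem_union_right _ h))))
      have := hG m
      positivity
  rw [Finset.sum_union (by
    rw [Finset.disjoint_left]
    intro m hm hmB
    rw [hB, mem_filter] at hmB
    have := (hF m hm).2
    linarith)] at h7
  have hP : ∀ m ∈ F, 0 ≤ Real.exp (δ * Real.log m) * GG z t N 1 m := fun m _ => mul_nonneg (Real.exp_pos _).le (hG m)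
  have hbB : -∑ m ∈ B, (GG z t N (1-δ) m - GG z t N 1 m) ≤ δ * (Real.log t + C1) + C2 * (Real.log t + 1) * (A * Real.log N) * (C1 * δ^2) := by
    have h8 : ∑ m ∈ B, (-(GG z t N 1 m * (δ * (Real.log t + C1)) + GG z t N 1 m * (Real.log (t*m:ℕ))^2 * (C1 * δ^2))) ≤ ∑ m ∈ B, (GG z t N (1-δ) m - GG z t N 1 m) :=
      Finset.sum_le_sum (fun m hm => hlow2 m (hBm m hm).1)
    rw [Finset.sum_neg_distrib, Finset.sum_add_distrib, ← Finset.sum_mul, ← Finset.sum_mul] at h8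
    have h9 := GG_sum_le_one z t N ht one_pos B
    have h10 : Real.log t + 1 ≤ A * Real.log N := by
      have : Real.log t + 1 ≤ Real.log N := by
        have : δ * (Real.log t + 1) < δ * Real.log N := by linarith
        exact (lt_of_mul_lt_mul_left this hδ0.le).le
      nlinarith
    have h11 := hQ t N (A * Real.log N) B ht h10 hBm
    have h12 : (∑ m ∈ B, GG z t N 1 m) * (δ * (Real.log t + C1)) ≤ 1 * (δ * (Real.log t + C1)) := by
      gcongr
    have h13 := mul_le_mul_of_nonneg_right h11 (show 0 ≤ C1 * δ^2 by positivity)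
    linarith
  have hFF : ∑ m ∈ F, Real.exp (-C1) / 2 * (Real.exp (δ * Real.log m) * GG z t N 1 m) ≤
      ∑ m ∈ F, (GG z t N (1-δ) m - GG z t N 1 m) :=
    Finset.sum_le_sum (fun m hm => hlow3 m (hF m hm).1 (hF m hm).2)
  rw [← Finset.mul_sum] at hFF
  set S := ∑ m ∈ F, (Real.exp (δ * Real.log m) * GG z t N 1 m)
  have h14 : Real.exp (-C1) / 2 * S ≤ δ * (Real.log t + C1) + C2 * (Real.log t + 1) * (A * Real.log N) * (C1 * δ^2) := by
    linarith
  have h15 : C2 * (Real.log t + 1) * (A * Real.log N) * (C1 * δ^2) = C1 * C2 * A * (δ * (Real.log t + 1)) * (δ * Real.log N) := by ring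
  rw [h15, hδN, mul_one] at h14
  have h16 : δ * (Real.log t + C1) ≤ C1 * (δ * (Real.log t + 1)) := by
    have : Real.log t + C1 ≤ C1 * (Real.log t + 1) := by nlinarith
    nlinarith
  have h17 : Real.exp C1 * 2 * (Real.exp (-C1) / 2 * S) = S := by
    have : Real.exp C1 * Real.exp (-C1) = 1 := by rw [← Real.exp_add]; simp
    linear_combination S * this
  rw [← h17]
  calc _ ≤ Real.exp C1 * 2 * (C1 * (δ * (Real.log t + 1)) + C1 * C2 * A * (δ * (Real.log t + 1))) := by
        gcongr; linarith
    _ = _ := by ring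

theorem U_bound (z : ℕ) : ∃ C : ℝ, 1 ≤ C ∧ ∀ (t N : ℕ) (y : ℝ) (F : Finset ℕ), 1 ≤ t → 2 ≤ N → 1 < y →
    (∀ m ∈ F, Dn z t m ∧ m ∈ Nat.smoothNumbers N ∧ y ≤ m) →
    ∑ m ∈ F, (1:ℝ)/m ≤ C * (Real.log t + 1) * (Real.log N / Real.log y)^2 := by
  obtain ⟨A, C1, hA, hC1, hT2⟩ := T2 z
  obtain ⟨C2, hC2, hT⟩ := tail_T z
  obtain ⟨c, hc, hW⟩ := WW_lower
  have hmain : ∀ (t N : ℕ) (y : ℝ) (F : Finset ℕ), 1 ≤ t → 8 ≤ N → 1 < y →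
    (∀ m ∈ F, Dn z t m ∧ m ∈ Nat.smoothNumbers N ∧ y ≤ m) →
    ∑ m ∈ F, (1:ℝ)/m ≤ (2 * C1 + A * C2) / c * (Real.log t + 1) * (Real.log N / Real.log y)^2 := by
    intro t N y F ht hN hy hF
    have hlt : 0 ≤ Real.log t := Real.log_natCast_nonneg t
    have hN' : (8:ℝ) ≤ N := by exact_mod_cast hN
    have hlN : 0 < Real.log N := Real.log_pos (by linarith)
    have hly : 0 < Real.log y := Real.log_pos hy
    have hm0 : ∀ m ∈ F, m ≠ 0 := fun m hm => (hF m hm).1.1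
    have h1 : ∑ m ∈ F, (1:ℝ)/m ≤ Real.log N / c * ∑ m ∈ F, GG z t N 1 m := by
      rw [Finset.mul_sum]
      apply Finset.sum_le_sum
      intro m hm
      have h2 := hW z N (t*m) (by omega)
      unfold GG
      rw [if_pos ⟨(hF m hm).1, (hF m hm).2.1⟩, Real.rpow_neg_one]
      have h3 : (0:ℝ) < m := by exact_mod_cast Nat.pos_of_ne_zero (hm0 m hm)
      calc (1:ℝ)/m = Real.log N / c * ((m:ℝ)⁻¹ * (c / Real.log N)) := by field_simp
        _ ≤ _ := by gcongr
    refine h1.trans ?_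
    have hG := fun m => GG_nonneg z t N one_pos m
    have hpos : 0 ≤ (Real.log t + 1) * (Real.log N / Real.log y)^2 := by positivity
    by_cases hyA : Real.log y ≤ A * Real.log N
    · have h2 := hT t N y F ht hy (fun m hm => (hF m hm).2.2)
      calc _ ≤ Real.log N / c * (C2 * (Real.log t + 1) / Real.log y) := by gcongr
        _ = C2 / c * (Real.log t + 1) * (Real.log N / Real.log y * 1) := by field_simp
        _ ≤ C2 / c * (Real.log t + 1) * (Real.log N / Real.log y * (A * Real.log N / Real.log y)) := by
            gcongr
            rw [le_div_iff₀ hly]; linarith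
        _ = (A * C2) / c * ((Real.log t + 1) * (Real.log N / Real.log y)^2) := by ring
        _ ≤ (2 * C1 + A * C2) / c * ((Real.log t + 1) * (Real.log N / Real.log y)^2) := by
            gcongr; linarith
        _ = _ := by ring
    · push Not at hyA
      set δ := 1 / Real.log N with hδ
      have hδN : δ * Real.log N = 1 := by rw [hδ]; field_simp
      have hδ0 : 0 < δ := by positivity
      have hlm : ∀ m ∈ F, Real.log y ≤ Real.log m := fun m hm =>
        Real.log_le_log (by linarith) (hF m hm).2.2
      have h2 := hT2 t N δ F ht hN hδ (fun m hm => ⟨hm0 m hm, by linarith [hlm m hm]⟩)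
      set v := δ * Real.log y with hv
      have hv0 : 0 < v := by positivity
      have h3 : Real.exp v * ∑ m ∈ F, GG z t N 1 m ≤ C1 * δ * (Real.log t + 1) := by
        refine le_trans ?_ h2
        rw [Finset.mul_sum]
        apply Finset.sum_le_sum
        intro m hm
        have := hG m
        have := hlm m hm
        gcongr
        rw [hv]; gcongr
      have h4 : v^2/2 ≤ Real.exp v := by
        have := Real.quadratic_le_exp_of_nonneg hv0.le
        linarith
      have hS : 0 ≤ ∑ m ∈ F, GG z t N 1 m := Finset.sum_nonneg (fun m _ => hG m)
      set S := ∑ m ∈ F, GG z t N 1 m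
      have h5 : v^2 / 2 * S ≤ C1 * δ * (Real.log t + 1) := le_trans (by gcongr) h3
      have h6 : S ≤ 2 * (C1 * δ * (Real.log t + 1)) / v^2 := by
        rw [le_div_iff₀ (by positivity)]; linarith
      calc _ ≤ Real.log N / c * (2 * (C1 * δ * (Real.log t + 1)) / v^2) := by gcongr
        _ = (2 * C1) / c * ((Real.log t + 1) * (Real.log N / Real.log y)^2) := by
            rw [hv, hδ]; field_simp
        _ ≤ (2 * C1 + A * C2) / c * ((Real.log t + 1) * (Real.log N / Real.log y)^2) := by
            gcongr; nlinarith
        _ = _ := by ring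
  have hK0 : 0 < (2 * C1 + A * C2) / c := by
    have : 0 < A * C2 := by positivity
    positivity
  set K := (2 * C1 + A * C2) / c
  refine ⟨max 1 (9 * K), le_max_left _ _, ?_⟩
  intro t N y F ht hN hy hF
  have h1 := hmain t (max N 8) y F ht (le_max_right _ _) hy (fun m hm => 
    ⟨(hF m hm).1, Nat.smoothNumbers_mono (le_max_left _ _) (hF m hm).2.1, (hF m hm).2.2⟩)
  refine h1.trans ?_
  have hlt : 0 ≤ Real.log t := Real.log_natCast_nonneg t
  have hly : 0 < Real.log y := Real.log_pos hy
  have hN' : (2:ℝ) ≤ N := by exact_mod_cast hN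
  have hlog2 : Real.log 2 ≤ Real.log N := Real.log_le_log (by norm_num) hN'
  have hl2 : 0 < Real.log 2 := Real.log_pos (by norm_num)
  have h2 : Real.log (max N 8 : ℕ) ≤ 3 * Real.log N := by
    rcases le_total N 8 with h | h
    · rw [max_eq_right h]
      have : Real.log ((8:ℕ):ℝ) = 3 * Real.log 2 := by
        rw [show ((8:ℕ):ℝ) = 2^3 by norm_num, Real.log_pow]; norm_num
      rw [this]; linarith
    · rw [max_eq_left h]; linarith
  have h3 : 0 ≤ Real.log (max N 8 : ℕ) := Real.log_natCast_nonneg _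
  calc _ ≤ K * (Real.log t + 1) * (3 * Real.log N / Real.log y)^2 := by gcongr
    _ = 9 * K * ((Real.log t + 1) * (Real.log N / Real.log y)^2) := by ring
    _ ≤ max 1 (9 * K) * ((Real.log t + 1) * (Real.log N / Real.log y)^2) := by gcongr; exact le_max_right _ _
    _ = _ := by ring

lemma pi_upper {k : ℕ} (hk : 2 ≤ k) : (Nat.primeCounting k : ℝ) ≤ 5 * k / Real.log k := by
  have hk' : (2:ℝ) ≤ k := by exact_mod_cast hk
  have h1 := Chebyshev.pi_le_log4_mul_div (x := (k:ℝ)) (by linarith)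
  rw [Nat.floor_natCast] at h1
  have hl : 0 < Real.log k := Real.log_pos (by linarith)
  rw [Real.log_sqrt (by linarith)] at h1
  have h4 : Real.log 4 = 2 * Real.log 2 := by
    rw [show (4:ℝ) = 2^2 by norm_num, Real.log_pow]; norm_num
  have := Real.log_two_lt_d9
  have hs : Real.log k ≤ 2 * Real.sqrt k := by
    have := Real.log_le_self (Real.sqrt_nonneg (k:ℝ))
    rw [Real.log_sqrt (by linarith)] at this
    linarith
  have hss : Real.sqrt k * Real.sqrt k = k := Real.mul_self_sqrt (by linarith)
  rw [le_div_iff₀ hl]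
  have e : (Real.log 4 * k / (Real.log k / 2) + Real.sqrt k) * Real.log k = 2 * Real.log 4 * k + Real.sqrt k * Real.log k := by
    field_simp
  have h5 := mul_le_mul_of_nonneg_right h1 hl.le
  rw [e] at h5
  have h6 := mul_le_mul_of_nonneg_left hs (Real.sqrt_nonneg (k:ℝ))
  nlinarith

open Classical in
theorem pointwise_upper : ∃ C : ℝ, 1 ≤ C ∧ ∀ (t X : ℕ), 1 ≤ t → 2 ≤ X →
    (((Finset.Icc 1 X).filter (fun n => Dn 0 t n)).card : ℝ) ≤ C * X * (Real.log t + 1) / Real.log X := by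
  obtain ⟨C, hC1, hU⟩ := U_bound 0
  refine ⟨8 + 2 + 20000 * C, by linarith, ?_⟩
  intro t X ht hX
  have hX' : (2:ℝ) ≤ X := by exact_mod_cast hX
  have hX0 : (0:ℝ) < X := by linarith
  have hlX : 0 < Real.log X := Real.log_pos (by linarith)
  have hlt : 0 ≤ Real.log t := Real.log_natCast_nonneg t
  have ht0 : (0:ℝ) < t := by exact_mod_cast ht
  rw [le_div_iff₀ hlX]
  by_cases hbig : Real.log X / 8 ≤ Real.log t
  · have h1 : (((Finset.Icc 1 X).filter (fun n => Dn 0 t n)).card : ℝ) ≤ X := by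
      have := Finset.card_filter_le (Finset.Icc 1 X) (fun n => Dn 0 t n)
      rw [Nat.card_Icc] at this
      exact_mod_cast this
    calc _ ≤ (X:ℝ) * Real.log X := by gcongr
      _ ≤ X * (8 * (Real.log t + 1)) := by gcongr; linarith
      _ = 8 * (X * (Real.log t + 1)) := by ring
      _ ≤ (8 + 2 + 20000 * C) * (X * (Real.log t + 1)) := by gcongr; linarith
      _ = _ := by ring
  push Not at hbig
  set y := Real.exp (Real.log X / 8) with hy
  have hy1 : 1 < y := Real.one_lt_exp_iff.2 (by positivity)
  set S0 := (Finset.Icc 1 X).filter (fun n => n * n ≤ X)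
  set S1 := (Finset.Icc 1 X).filter (fun n => Dn 0 t n ∧ X < n * n) with hS1
  set M := (Finset.Icc 1 X).filter (fun m => Dn 0 t m ∧ y ≤ m ∧ 2 ≤ X / m ∧ m ∈ Nat.smoothNumbers (X/m+1)) with hM
  have hcard : ((Finset.Icc 1 X).filter (fun n => Dn 0 t n)).card ≤ S0.card + S1.card := by
    refine le_trans (Finset.card_le_card ?_) (Finset.card_union_le _ _)
    intro n hn
    rw [mem_filter] at hn
    rw [mem_union, mem_filter, mem_filter]
    by_cases h : n * n ≤ X
    · left; exact ⟨hn.1, h⟩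
    · right; exact ⟨hn.1, hn.2, by omega⟩
  have hS0 : (S0.card : ℝ) * Real.log X ≤ 2 * X := by
    have h1 : S0.card ≤ Nat.sqrt X := by
      calc S0.card ≤ (Finset.Icc 1 (Nat.sqrt X)).card := by
            apply Finset.card_le_card
            intro n hn
            rw [mem_filter, mem_Icc] at hn
            rw [mem_Icc]
            exact ⟨hn.1.1, Nat.le_sqrt.2 hn.2⟩
        _ = _ := by simp
    have h2 : (S0.card : ℝ) ≤ Real.sqrt X := by
      refine le_trans (by exact_mod_cast h1) (Real.nat_sqrt_le_real_sqrt)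
    have h3 : Real.log X ≤ 2 * Real.sqrt X := by
      have := Real.log_le_self (Real.sqrt_nonneg (X:ℝ))
      rw [Real.log_sqrt (by linarith)] at this
      linarith
    have hss : Real.sqrt X * Real.sqrt X = X := Real.mul_self_sqrt (by linarith)
    calc (S0.card : ℝ) * Real.log X ≤ Real.sqrt X * (2 * Real.sqrt X) := by gcongr
      _ = _ := by linarith
  have hS1M : S1 ⊆ M.biUnion (fun m => (Nat.primesLE (X/m)).image (fun p => m * p)) := by
    intro n hn
    rw [hS1, mem_filter, mem_Icc] at hn
    obtain ⟨⟨hn1, hnX⟩, hD, hnn⟩ := hn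
    have hne1 : n ≠ 1 := by rintro rfl; omega
    obtain ⟨m, p, rfl, hp, hDm, hsm, _, hpt⟩ := Dn_split hD hne1
    have hm0 : 0 < m := Nat.pos_of_ne_zero hDm.1
    have hpX : p ≤ X / m := by rw [Nat.le_div_iff_mul_le hm0]; linarith [mul_comm m p]
    rw [mem_biUnion]
    refine ⟨m, ?_, ?_⟩
    · rw [hM, mem_filter, mem_Icc]
      refine ⟨⟨hm0, (Nat.le_mul_of_pos_right _ hp.pos).trans hnX⟩, hDm, ?_, hp.two_le.trans hpX, ?_⟩
      · have hm0' : (0:ℝ) < m := by exact_mod_cast hm0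
        have h1 : X < t * m * m * (t * m * m) := by
          refine hnn.trans_le ?_
          have : m * p ≤ t * m * m := by nlinarith
          exact Nat.mul_le_mul this this
        have h2 : Real.log X ≤ 2 * Real.log t + 4 * Real.log m := by
          have h3 : (X:ℝ) ≤ (t * m * m) * (t*m*m) := by exact_mod_cast h1.le
          have h4 := Real.log_le_log hX0 h3
          rw [Real.log_mul (by positivity) (by positivity), Real.log_mul (by positivity) (by positivity),
            Real.log_mul (by positivity) (by positivity)] at h4
          linarith
        rw [hy, ← Real.le_log_iff_exp_le hm0']
        linarith
      · exact Nat.smoothNumbers_mono (by omega) hsm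
    · rw [mem_image]
      exact ⟨p, Nat.mem_primesLE.2 ⟨hpX, hp⟩, rfl⟩
  have hS1c : (S1.card : ℝ) ≤ ∑ m ∈ M, (Nat.primeCounting (X/m) : ℝ) := by
    have : S1.card ≤ ∑ m ∈ M, Nat.primeCounting (X/m) := by
      refine (Finset.card_le_card hS1M).trans (Finset.card_biUnion_le.trans ?_)
      apply Finset.sum_le_sum
      intro m _
      refine Finset.card_image_le.trans ?_
      rw [Nat.primesLE_card_eq_primeCounting]
    exact_mod_cast this
  set g : ℕ → ℕ := fun m => Nat.log 2 (Nat.log 2 (X/m)) with hg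
  set J := Nat.log 2 (Nat.log 2 X) with hJ
  have hgJ : ∀ m ∈ M, g m ∈ range (J+1) := by
    intro m hm
    rw [mem_range, Nat.lt_succ_iff]
    exact Nat.log_mono_right (Nat.log_mono_right (Nat.div_le_self _ _))
  have hl2 : 0 < Real.log 2 := Real.log_pos (by norm_num)
  have hblock : ∀ j ∈ range (J+1), ∑ m ∈ M.filter (fun m => g m = j), (Nat.primeCounting (X/m) : ℝ) ≤ 
      (5 * X / (Real.log 2)) * (C * (Real.log t + 1)) * (256 * (Real.log 2)^2 / (Real.log X)^2) * 2^j := by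
    intro j _
    set N := 2^(2^(j+1)) with hN
    have hN2 : 2 ≤ N := by
      rw [hN]; exact Nat.le_self_pow (by positivity) 2
    have hU1 := hU t N y (M.filter (fun m => g m = j)) ht hN2 hy1 (by
      intro m hm
      rw [mem_filter, hM, mem_filter] at hm
      obtain ⟨⟨_, h1, h2, h3, h4⟩, h5⟩ := hm
      refine ⟨h1, ?_, h2⟩
      refine Nat.smoothNumbers_mono ?_ h4
      have h6 : Nat.log 2 (X/m) < 2^(j+1) := by rw [← h5]; exact Nat.lt_pow_succ_log_self (by norm_num) _
      have h7 : X/m < 2^(2^(j+1)) := Nat.lt_pow_of_log_lt (by norm_num) h6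
      exact h7)
    have hNlog : Real.log N = 2^(j+1) * Real.log 2 := by
      rw [hN]; push_cast; rw [Real.log_pow]; push_cast; ring
    have hylog : Real.log y = Real.log X / 8 := by rw [hy, Real.log_exp]
    rw [hNlog, hylog] at hU1
    have h8 : ∀ m ∈ M.filter (fun m => g m = j), (Nat.primeCounting (X/m) : ℝ) ≤ (5 * X / (2^j * Real.log 2)) * (1/(m:ℝ)) := by
      intro m hm
      rw [mem_filter, hM, mem_filter, mem_Icc] at hm
      obtain ⟨⟨⟨h0, _⟩, h1, h2, h3, h4⟩, h5⟩ := hm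
      have h6 := pi_upper h3
      have h7 : 2^j ≤ Nat.log 2 (X/m) := by
        rw [← h5]; apply Nat.pow_log_le_self
        have := Nat.log_pos (b := 2) (by norm_num) h3
        omega
      have h9 : (2:ℝ)^(2^j) ≤ ((X/m : ℕ):ℝ) := by
        have : 2^(2^j) ≤ X/m := (Nat.pow_le_pow_right (by norm_num) h7).trans (Nat.pow_log_le_self 2 (by omega))
        exact_mod_cast this
      have h10 : 2^j * Real.log 2 ≤ Real.log ((X/m:ℕ):ℝ) := by
        have := Real.log_le_log (by positivity) h9
        rw [Real.log_pow] at this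
        push_cast at this
        exact this
      have h11 : ((X/m:ℕ):ℝ) ≤ X / m := Nat.cast_div_le
      have hm0 : (0:ℝ) < m := by exact_mod_cast h0
      calc _ ≤ 5 * ((X/m:ℕ):ℝ) / Real.log ((X/m:ℕ):ℝ) := h6
        _ ≤ 5 * (X/m) / (2^j * Real.log 2) := by gcongr
        _ = _ := by ring
    refine (Finset.sum_le_sum h8).trans ?_
    rw [← Finset.mul_sum]
    calc _ ≤ (5 * X / (2^j * Real.log 2)) * (C * (Real.log t + 1) * (2 ^ (j + 1) * Real.log 2 / (Real.log X / 8)) ^ 2) := by gcongr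
      _ = _ := by
        rw [pow_succ]
        field_simp
        ring
  have hsumM : ∑ m ∈ M, (Nat.primeCounting (X/m) : ℝ) ≤ (5 * X / (Real.log 2)) * (C * (Real.log t + 1)) * (256 * (Real.log 2)^2 / (Real.log X)^2) * (2 * Real.log X / Real.log 2) := by
    rw [← Finset.sum_fiberwise_of_maps_to hgJ]
    refine (Finset.sum_le_sum hblock).trans ?_
    rw [← Finset.mul_sum]
    have h1 : ∑ j ∈ range (J+1), (2:ℝ)^j ≤ 2 * Real.log X / Real.log 2 := by
      rw [geom_sum_eq (by norm_num)]
      have h2 : 2^J ≤ Nat.log 2 X := by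
        rw [hJ]; apply Nat.pow_log_le_self
        have := Nat.log_pos (b := 2) (by norm_num) hX
        omega
      have h3 : (2:ℝ)^(2^J) ≤ X := by
        have : 2^(2^J) ≤ X := (Nat.pow_le_pow_right (by norm_num) h2).trans (Nat.pow_log_le_self 2 (by omega))
        exact_mod_cast this
      have h4 := Real.log_le_log (by positivity) h3
      rw [Real.log_pow] at h4
      push_cast at h4
      rw [le_div_iff₀ hl2, pow_succ]
      linarith
    gcongr
  have e : (5 * X / (Real.log 2)) * (C * (Real.log t + 1)) * (256 * (Real.log 2)^2 / (Real.log X)^2) * (2 * Real.log X / Real.log 2) = 2560 * C * X * (Real.log t + 1) / Real.log X := by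
    field_simp; ring
  rw [e, le_div_iff₀ hlX] at hsumM
  have h1 : (((Finset.Icc 1 X).filter (fun n => Dn 0 t n)).card : ℝ) ≤ S0.card + S1.card := by exact_mod_cast hcard
  have h2 := mul_le_mul_of_nonneg_right (h1.trans (add_le_add_right hS1c _)) hlX.le
  have h3 : (X:ℝ) ≤ X * (Real.log t + 1) := by nlinarith
  have h4 : 0 ≤ C * (X * (Real.log t + 1)) := by positivity
  nlinarith

lemma le_foldr_max {l : List ℕ} {a : ℕ} (h : a ∈ l) : a ≤ l.foldr max 1 := by
  induction l with
  | nil => simp at h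
  | cons b l ih =>
    rw [List.foldr_cons]
    rcases List.mem_cons.1 h with rfl | h
    · exact le_max_left _ _
    · exact (ih h).trans (le_max_right _ _)

lemma foldr_max_le {l : List ℕ} {B : ℝ} (h1 : 1 ≤ B) (h : ∀ a ∈ l, (a:ℝ) ≤ B) : ((l.foldr max 1 : ℕ):ℝ) ≤ B := by
  induction l with
  | nil => simpa using h1
  | cons b l ih =>
    rw [List.foldr_cons, Nat.cast_max]
    exact max_le (h b (by simp)) (ih (fun a ha => h a (by simp [ha])))

lemma drop_filter {l : List ℕ} (h : l.Pairwise (· ≤ ·)) (p : ℕ) :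
    ∃ j, l.drop j = l.filter (fun q => !decide (q < p)) := by
  induction l with
  | nil => exact ⟨0, by simp⟩
  | cons a l ih =>
    rw [List.pairwise_cons] at h
    by_cases ha : a < p
    · obtain ⟨j, hj⟩ := ih h.2
      exact ⟨j+1, by simp [ha] at hj ⊢; exact hj⟩
    · refine ⟨0, ?_⟩
      rw [List.drop_zero]
      symm
      rw [List.filter_eq_self]
      intro q hq
      rcases List.mem_cons.1 hq with rfl | hq
      · simpa using ha
      · have := h.1 q hq
        simp; omega

lemma SS_ge {n p : ℕ} (hn : n ≠ 0) (hp : p.Prime) (hd : p ∣ n) : p * n ≤ SS n * spart n p := by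
  set L := n.primeFactorsList with hL
  obtain ⟨j, hj⟩ := drop_filter (l := L) (Nat.primeFactorsList_sorted n).pairwise p
  have hpL : p ∈ L.drop j := by
    rw [hj, List.mem_filter]
    refine ⟨(Nat.mem_primeFactorsList hn).2 ⟨hp, hd⟩, by simp⟩
  have hjl : j < L.length := by
    by_contra hc
    rw [List.drop_eq_nil_of_le (by omega)] at hpL
    simp at hpL
  have h1 : (L.drop j).headI * (L.drop j).prod ≤ SS n := by
    unfold SS
    apply le_foldr_max
    rw [List.mem_map]
    exact ⟨j, List.mem_range.2 hjl, rfl⟩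
  have h2 : p ≤ (L.drop j).headI := by
    have : (L.drop j).headI ∈ L.drop j := by
      cases h : L.drop j with
      | nil => rw [h] at hpL; simp at hpL
      | cons a l => simp
    rw [hj, List.mem_filter] at this
    have := this.2
    rw [← hj] at this
    simpa using this
  have h3 : n = (L.drop j).prod * spart n p := by
    rw [hj]
    unfold spart
    conv_lhs => rw [← Nat.prod_primeFactorsList hn]
    rw [mul_comm, ← hL]
    clear_value L
    clear * -
    induction L with
    | nil => simp
    | cons a l ih =>
      by_cases ha : a < p
      · simp [ha, ih]; ring
      · simp [ha, ih]; ring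
  calc p * n = p * ((L.drop j).prod * spart n p) := by rw [← h3]
    _ ≤ (L.drop j).headI * ((L.drop j).prod * spart n p) := by gcongr
    _ = (L.drop j).headI * (L.drop j).prod * spart n p := by ring
    _ ≤ _ := by gcongr

lemma sum_geo (n : ℕ) : ∑ i ∈ range n, ((i:ℝ)+2)/2^i ≤ 6 := by
  have : ∑ i ∈ range n, ((i:ℝ)+2)/2^i = 6 - (2*n+6)/2^n := by
    induction n with
    | zero => norm_num
    | succ n ih => rw [Finset.sum_range_succ, ih]; push_cast; field_simp; ring
  rw [this]
  have : (0:ℝ) ≤ (2*n+6)/2^n := by positivity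
  linarith

lemma A_le_floor {x y z t : ℝ} (hx : 0 ≤ x) : (Axyzt x y z t : ℝ) ≤ ⌊x⌋₊ := by
  unfold Axyzt
  have : {n : ℕ | 1 ≤ n ∧ (n : ℝ) ≤ x ∧ (Pmax n : ℝ) ≤ y ∧
    (∀ p : ℕ, p.Prime → p ∣ n → z < (p : ℝ)) ∧ (SS n : ℝ) ≤ x * t}.ncard ≤ ⌊x⌋₊ := by
    calc _ ≤ (↑(Finset.Icc 1 ⌊x⌋₊) : Set ℕ).ncard := by
          apply Set.ncard_le_ncard _ (Finset.finite_toSet _)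
          intro n hn
          simp only [coe_Icc, Set.mem_Icc]
          exact ⟨hn.1, (Nat.le_floor_iff hx).2 hn.2.1⟩
      _ = _ := by rw [Set.ncard_coe_finset]; simp
  exact_mod_cast this

set_option maxHeartbeats 1000000 in
open Classical in
theorem upper_A : ∃ C : ℝ, 1 ≤ C ∧ ∀ x y z t : ℝ, 2 ≤ x → 1 ≤ t → 
    (Axyzt x y z t : ℝ) ≤ C * x * Real.log (2 * t) / Real.log x := by
  obtain ⟨C, hC1, hC⟩ := pointwise_upper
  refine ⟨1000 * C, by linarith, ?_⟩
  intro x y z t hx ht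
  have hlx : 0 < Real.log x := Real.log_pos (by linarith)
  have hl2 := Real.log_two_gt_d9
  have hl2' := Real.log_two_lt_d9
  have hl2t : Real.log 2 ≤ Real.log (2*t) := Real.log_le_log (by norm_num) (by linarith)
  have hl2t0 : 0 ≤ Real.log (2*t) := by linarith
  set X := ⌊x⌋₊ with hXd
  have hX2 : 2 ≤ X := Nat.le_floor (by exact_mod_cast hx)
  have hXx : (X:ℝ) ≤ x := Nat.floor_le (by linarith)
  have hxX : x < X + 1 := Nat.lt_floor_add_one x
  have hX2' : (2:ℝ) ≤ X := by exact_mod_cast hX2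
  have hlX : 0 < Real.log X := Real.log_pos (by linarith)
  have hlxX : Real.log x ≤ 2 * Real.log X := by
    have : x ≤ X * X := by nlinarith
    have h2 := Real.log_le_log (by linarith) this
    rw [Real.log_mul (by linarith) (by linarith)] at h2
    linarith
  have hA0 := A_le_floor (x := x) (y := y) (z := z) (t := t) (by linarith)
  rw [← hXd] at hA0
  rw [le_div_iff₀ hlx]
  by_cases hX4 : X < 4
  · have hlx4 : Real.log x ≤ 2 * Real.log 2 := by
      have h1 : x ≤ 2^2 := by
        have : (X:ℝ) + 1 ≤ 4 := by exact_mod_cast hX4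
        linarith
      have := Real.log_le_log (by linarith) h1
      rw [Real.log_pow] at this
      exact_mod_cast this
    calc _ ≤ x * (2 * Real.log 2) := by gcongr; linarith
      _ ≤ x * (2 * Real.log (2*t)) := by gcongr
      _ = 2 * (x * Real.log (2*t)) := by ring
      _ ≤ 1000 * C * (x * Real.log (2*t)) := by
          apply mul_le_mul_of_nonneg_right (by linarith) (by positivity)
      _ = _ := by ring
  push Not at hX4
  set T := ⌈t⌉₊ with hT
  have hT1 : 1 ≤ T := Nat.one_le_ceil_iff.2 (by linarith)
  have htT : t ≤ T := Nat.le_ceil t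
  have hTt : (T:ℝ) < t + 1 := Nat.ceil_lt_add_one (by linarith)
  have hT0 : (0:ℝ) < T := by exact_mod_cast hT1
  have hlT : Real.log T ≤ Real.log (2*t) := Real.log_le_log hT0 (by linarith)
  have hlT0 : 0 ≤ Real.log T := Real.log_natCast_nonneg T
  set I := Nat.log 2 X / 2 with hI
  have hlog2 : 2 ≤ Nat.log 2 X := by
    rw [Nat.le_log_iff_pow_le (by norm_num) (by omega)]; exact hX4
  have hI1 : 1 ≤ I := by omega
  have hXup : X < 2^(2*I+2) := by
    refine (Nat.lt_pow_succ_log_self (b := 2) (by norm_num) X).trans_le ?_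
    exact Nat.pow_le_pow_right (by norm_num) (by omega)
  have hXlo : 2^(2*I) ≤ X := (Nat.pow_le_pow_right (by norm_num) (by omega)).trans (Nat.pow_log_le_self 2 (by omega))
  -- cover
  set Sf := Finset.Icc 1 (2^(I+1)) ∪ (range (I+1)).biUnion (fun i => (Finset.Icc 1 (X/2^i)).filter (fun n => Dn 0 (2^(i+1)*T) n)) with hSf
  have hcov : Axyzt x y z t ≤ Sf.card := by
    unfold Axyzt
    rw [← Set.ncard_coe_finset]
    apply Set.ncard_le_ncard _ (Finset.finite_toSet _)
    rintro n ⟨hn1, hnx, _, _, hSS⟩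
    have hnX : n ≤ X := (Nat.le_floor_iff (by linarith)).2 hnx
    rw [Finset.mem_coe, hSf, mem_union]
    set i := Nat.log 2 (X/n) with hi
    have hXn : 1 ≤ X/n := by rw [Nat.le_div_iff_mul_le hn1]; omega
    have h1 : 2^i ≤ X/n := Nat.pow_log_le_self 2 (by omega)
    have h2 : X/n < 2^(i+1) := Nat.lt_pow_succ_log_self (by norm_num) _
    have h3 : n * 2^i ≤ X := by
      rw [Nat.le_div_iff_mul_le hn1] at h1; linarith
    have h4 : X < n * 2^(i+1) := by
      rw [Nat.div_lt_iff_lt_mul hn1] at h2; linarith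
    by_cases hiI : i ≤ I
    · right
      rw [mem_biUnion]
      refine ⟨i, mem_range.2 (by omega), ?_⟩
      rw [mem_filter, mem_Icc]
      refine ⟨⟨hn1, by rw [Nat.le_div_iff_mul_le (by positivity)]; exact h3⟩, by omega, ?_⟩
      intro p hp hd
      refine ⟨hp.pos, ?_⟩
      have h5 := SS_ge (by omega) hp hd
      have h5' : (p:ℝ) * n ≤ SS n * spart n p := by exact_mod_cast h5
      have hx4 : x ≤ n * 2^(i+1) := by
        have : (X:ℝ) + 1 ≤ n * 2^(i+1) := by exact_mod_cast h4
        linarith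
      have h6 : (p:ℝ) * n ≤ (2^(i+1) * T * spart n p) * n := by
        calc (p:ℝ) * n ≤ SS n * spart n p := h5'
          _ ≤ (x * t) * spart n p := by gcongr
          _ ≤ ((n * 2^(i+1)) * T) * spart n p := by gcongr
          _ = _ := by ring
      have h7 : (p:ℝ) ≤ 2^(i+1) * T * spart n p := le_of_mul_le_mul_right h6 (by exact_mod_cast hn1)
      exact_mod_cast h7
    · left
      rw [mem_Icc]
      refine ⟨hn1, ?_⟩
      have h8 : 2^(I+1) ≤ 2^i := Nat.pow_le_pow_right (by norm_num) (by omega)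
      have h9 : n * 2^(I+1) < 2^(I+1) * 2^(I+1) := by
        calc n * 2^(I+1) ≤ n * 2^i := by gcongr
          _ ≤ X := h3
          _ < 2^(2*I+2) := hXup
          _ = _ := by ring
      exact (lt_of_mul_lt_mul_right h9 (by positivity)).le
  have hc1 : (Sf.card : ℝ) ≤ 2^(I+1) + ∑ i ∈ range (I+1), (((Finset.Icc 1 (X/2^i)).filter (fun n => Dn 0 (2^(i+1)*T) n)).card : ℝ) := by
    have : Sf.card ≤ 2^(I+1) + ∑ i ∈ range (I+1), ((Finset.Icc 1 (X/2^i)).filter (fun n => Dn 0 (2^(i+1)*T) n)).card := by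
      refine (Finset.card_union_le _ _).trans (add_le_add (by simp) Finset.card_biUnion_le)
    exact_mod_cast this
  have hlXI : Real.log X ≤ 4 * (I * Real.log 2) := by
    have h1 : (X:ℝ) ≤ 2^(2*I+2) := by exact_mod_cast hXup.le
    have h2 := Real.log_le_log (by linarith) h1
    rw [Real.log_pow] at h2
    push_cast at h2
    have : (1:ℝ) ≤ I := by exact_mod_cast hI1
    nlinarith
  have hterm : ∀ i ∈ range (I+1), (((Finset.Icc 1 (X/2^i)).filter (fun n => Dn 0 (2^(i+1)*T) n)).card : ℝ) ≤ 
      (4 * C * X * (3 * Real.log (2*t)) / Real.log X) * (((i:ℝ)+2)/2^i) := by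
    intro i hi
    rw [mem_range] at hi
    have h1 : 2^I ≤ X / 2^i := by
      rw [Nat.le_div_iff_mul_le (by positivity)]
      calc 2^I * 2^i ≤ 2^I * 2^I := by gcongr; norm_num; omega
        _ = 2^(2*I) := by ring
        _ ≤ X := hXlo
    have h2 : 2 ≤ X / 2^i := le_trans (by calc 2 = 2^1 := by norm_num
                                          _ ≤ 2^I := Nat.pow_le_pow_right (by norm_num) hI1) h1
    have h3 := hC (2^(i+1)*T) (X/2^i) (Nat.mul_pos (by positivity) hT1) h2
    refine h3.trans ?_
    have h4 : Real.log X / 4 ≤ Real.log ((X/2^i : ℕ):ℝ) := by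
      have : (2:ℝ)^I ≤ ((X/2^i : ℕ):ℝ) := by exact_mod_cast h1
      have := Real.log_le_log (by positivity) this
      rw [Real.log_pow] at this
      linarith
    have h5 : Real.log ((2^(i+1)*T : ℕ):ℝ) + 1 ≤ 3 * Real.log (2*t) * ((i:ℝ)+2) := by
      push_cast
      rw [Real.log_mul (by positivity) hT0.ne', Real.log_pow]
      push_cast
      have hi0 : (0:ℝ) ≤ i := by positivity
      have a1 : 1 ≤ 2 * Real.log (2*t) := by linarith
      nlinarith [mul_nonneg hi0 (show 0 ≤ Real.log (2*t) - Real.log 2 by linarith), mul_nonneg hi0 (show 0 ≤ Real.log (2*t) by linarith)]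
    have h6 : ((X/2^i : ℕ):ℝ) ≤ X / 2^i := by
      have := Nat.cast_div_le (α := ℝ) (m := X) (n := 2^i)
      exact_mod_cast this
    have h7 : 0 ≤ Real.log ((2^(i+1)*T : ℕ):ℝ) := Real.log_natCast_nonneg _
    calc _ ≤ C * (X/2^i) * (3 * Real.log (2*t) * ((i:ℝ)+2)) / (Real.log X / 4) := by
          gcongr
      _ = _ := by field_simp
  have hc2 := (hc1.trans (add_le_add_right (Finset.sum_le_sum hterm) _))
  rw [← Finset.mul_sum] at hc2
  have hc3 : (4 * C * X * (3 * Real.log (2*t)) / Real.log X) * ∑ i ∈ range (I+1), (((i:ℝ)+2)/2^i) ≤ (4 * C * X * (3 * Real.log (2*t)) / Real.log X) * 6 := by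
    gcongr
    exact sum_geo _
  have hpow : (2:ℝ)^(I+1) * Real.log X ≤ 4 * X := by
    have h1 : (2:ℝ)^I * 2^I ≤ X := by
      have : 2^I * 2^I ≤ X := by calc 2^I*2^I = 2^(2*I) := by ring
                                   _ ≤ X := hXlo
      exact_mod_cast this
    have h2 : (2:ℝ)^I ≤ Real.sqrt X := by
      apply Real.le_sqrt_of_sq_le
      nlinarith
    have h3 : Real.log X ≤ 2 * Real.sqrt X := by
      have := Real.log_le_self (Real.sqrt_nonneg (X:ℝ))
      rw [Real.log_sqrt (by linarith)] at this
      linarith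
    have hss : Real.sqrt X * Real.sqrt X = X := Real.mul_self_sqrt (by linarith)
    calc (2:ℝ)^(I+1) * Real.log X = 2 * 2^I * Real.log X := by ring
      _ ≤ 2 * Real.sqrt X * (2 * Real.sqrt X) := by gcongr
      _ = _ := by linarith
  have hA1 : (Axyzt x y z t : ℝ) ≤ Sf.card := by exact_mod_cast hcov
  have hA2 := hA1.trans (hc2.trans (add_le_add_right hc3 _))
  have hA3 : (Axyzt x y z t : ℝ) * Real.log X ≤ 4 * X + 72 * C * X * Real.log (2*t) := by
    have := mul_le_mul_of_nonneg_right hA2 hlX.le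
    have e : (2 ^ (I + 1) + 4 * C * X * (3 * Real.log (2 * t)) / Real.log X * 6) * Real.log X = 2^(I+1) * Real.log X + 72 * C * X * Real.log (2*t) := by
      field_simp; ring
    rw [e] at this
    linarith
  have h1 : (X:ℝ) ≤ 2 * X * Real.log (2*t) := by nlinarith
  have hXL : 0 ≤ X * Real.log (2*t) := by positivity
  have h2 : (Axyzt x y z t : ℝ) * Real.log X ≤ 80 * C * (X * Real.log (2*t)) := by
    have := mul_le_mul_of_nonneg_right hC1 hXL
    linarith
  have h3 : (X:ℝ) * Real.log (2*t) ≤ x * Real.log (2*t) := by gcongr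
  have hA0' : (0:ℝ) ≤ Axyzt x y z t := by positivity
  calc (Axyzt x y z t : ℝ) * Real.log x ≤ Axyzt x y z t * (2 * Real.log X) := by gcongr
    _ ≤ 2 * (80 * C * (X * Real.log (2*t))) := by linarith
    _ ≤ 2 * (80 * C * (x * Real.log (2*t))) := by gcongr
    _ ≤ _ := by
      have : 0 ≤ C * (x * Real.log (2*t)) := by positivity
      nlinarith

lemma exp_neg_le2 {v : ℝ} (hv : 0 ≤ v) : Real.exp (-v) ≤ 1 - v + v^2/2 := by
  have h := Real.quadratic_le_exp_of_nonneg hv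
  rw [Real.exp_neg, inv_le_comm₀ (Real.exp_pos _) (by nlinarith [sq_nonneg (v-1)])]
  refine le_trans ?_ h
  rw [inv_le_iff_one_le_mul₀ (by nlinarith [sq_nonneg (v-1)])]
  nlinarith [sq_nonneg (v^2)]

lemma E_lo (z : ℕ) : ∃ C : ℝ, 0 ≤ C ∧ ∀ (N y : ℕ) (δ : ℝ), 0 < δ → 1 ≤ y → y < N →
    δ * (Real.log y - C) - δ^2 * (Real.log y * (Real.log y + Real.log 4)) / 2 ≤
    ∑ p ∈ PS z N y, (1 - (p:ℝ)^(-δ)) / (p:ℝ) := by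
  obtain ⟨C, hC0, hC⟩ := mert_low' z
  refine ⟨C, hC0, ?_⟩
  intro N y δ hδ hy hyN
  have h1 := hC y hy
  have h2 := mert_up y hy
  have hPS : PS z N y = (range (y+1)).filter (fun p => p.Prime ∧ z < p) := by
    ext p; rw [mem_PS, mem_filter, mem_range]
    constructor
    · rintro ⟨a, b, c, d⟩; exact ⟨by omega, b, c⟩
    · rintro ⟨a, b, c⟩; exact ⟨by omega, b, c, by omega⟩
  rw [hPS]
  have h3 : ∑ p ∈ (range (y+1)).filter (fun p => p.Prime ∧ z < p), Real.log p / p * Real.log p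
      ≤ (Real.log y + Real.log 4) * Real.log y := by
    refine le_trans ?_ (mul_le_mul_of_nonneg_right h2 (Real.log_natCast_nonneg y))
    rw [Finset.sum_mul]
    refine le_trans (Finset.sum_le_sum (g := fun p : ℕ => Real.log p / p * Real.log y) ?_) (Finset.sum_le_sum_of_subset_of_nonneg ?_ ?_)
    · intro p hp
      rw [mem_filter, mem_range] at hp
      have hp0 : (0:ℝ) < p := by exact_mod_cast hp.2.1.pos
      have : Real.log p ≤ Real.log y := Real.log_le_log hp0 (by exact_mod_cast Nat.lt_succ_iff.1 hp.1)
      have := Real.log_natCast_nonneg p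
      gcongr
    · intro p hp
      rw [mem_filter] at hp ⊢
      exact ⟨hp.1, hp.2.1⟩
    · intro p _ _
      have := Real.log_natCast_nonneg p
      have := Real.log_natCast_nonneg y
      positivity
  have h4 : ∑ p ∈ (range (y+1)).filter (fun p => p.Prime ∧ z < p), (δ * (Real.log p / p) - δ^2/2 * (Real.log p / p * Real.log p))
      ≤ ∑ p ∈ (range (y+1)).filter (fun p => p.Prime ∧ z < p), (1 - (p:ℝ)^(-δ)) / (p:ℝ) := by
    apply Finset.sum_le_sum
    intro p hp
    rw [mem_filter, mem_range] at hp
    have hp0 : (0:ℝ) < p := by exact_mod_cast hp.2.1.pos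
    have := Real.log_natCast_nonneg p
    have h5 := exp_neg_le2 (v := Real.log p * δ) (by positivity)
    rw [Real.rpow_def_of_pos hp0, mul_neg, le_div_iff₀ hp0]
    have : (δ * (Real.log p / p) - δ^2/2 * (Real.log p / p * Real.log p)) * p = δ * Real.log p - δ^2/2 * (Real.log p)^2 := by
      field_simp
    rw [this]; nlinarith
  rw [Finset.sum_sub_distrib, ← Finset.mul_sum, ← Finset.mul_sum] at h4
  have h5 : δ^2/2 * _ ≤ _ := mul_le_mul_of_nonneg_left h3 (by positivity : (0:ℝ) ≤ δ^2/2)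
  have h6 := mul_le_mul_of_nonneg_left h1 hδ.le
  linarith

set_option maxHeartbeats 2000000 in
open Classical in
theorem lower_avg (z : ℕ) : ∃ (t0 : ℕ) (b K c : ℝ), 1 ≤ t0 ∧ 0 < b ∧ 0 < K ∧ 0 < c ∧ ∀ t M : ℕ, t0 ≤ t →
    K * (Real.log t + 1) ≤ Real.log M →
    c * Real.log t ≤ ∑ m ∈ (range (M+1)).filter (fun m => Dn z t m ∧ b * Real.log M < Real.log m), (1:ℝ)/m := by
  obtain ⟨C1, hC10, hC1⟩ := E_lo z
  obtain ⟨CT, hCT1, hCT⟩ := tail_T z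
  obtain ⟨CQ, hCQ1, hCQ⟩ := Q_bound z
  obtain ⟨CW, hCW0, hCW⟩ := WW_upper z
  set A := 16 * CT with hA
  set η := 1 / (16 * CQ) with hη
  have hη0 : 0 < η := by positivity
  have hA1 : 16 ≤ A := by linarith
  obtain ⟨t0, ht0⟩ := exists_nat_gt (Real.exp (2 * C1 + 4))
  refine ⟨max t0 1, η / A, max A (A / η), 1/(16*A*CW), le_max_right _ _, by positivity, by positivity, by positivity, ?_⟩
  intro t M ht hM
  have ht1 : 1 ≤ t := (le_max_right _ _).trans ht
  have ht0' : Real.exp (2 * C1 + 4) ≤ t := ht0.le.trans (by exact_mod_cast (le_max_left _ _).trans ht)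
  set l := Real.log t with hl
  have hl1 : 2 * C1 + 4 ≤ l := by
    rw [hl, Real.le_log_iff_exp_le (by exact_mod_cast ht1)]; exact ht0'
  have hl0 : 0 < l + 1 := by linarith
  set LM := Real.log M with hLM
  have hM1 : A * (l+1) ≤ LM := (mul_le_mul_of_nonneg_right (le_max_left _ _) hl0.le).trans hM
  have hM2 : A / η * (l+1) ≤ LM := (mul_le_mul_of_nonneg_right (le_max_right _ _) hl0.le).trans hM
  have hLM0 : 0 < LM := by nlinarith
  have hMpos : 0 < M := by
    rcases Nat.eq_zero_or_pos M with h | h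
    · rw [hLM, h] at hLM0; simp at hLM0
    · exact h
  have hMone : (1:ℝ) < M := by
    by_contra h
    have : M = 1 := by
      have : M ≤ 1 := by exact_mod_cast not_lt.1 h
      omega
    rw [hLM, this] at hLM0; simp at hLM0
  set δ := A / LM with hδ
  have hδ0 : 0 < δ := by positivity
  have hδLM : δ * LM = A := by rw [hδ]; field_simp
  set N := t * M + 1 with hN
  set F := (range (M+1)).filter (fun m => m ≠ 0) with hF
  have hFm : ∀ m, m ∈ F ↔ m ≤ M ∧ m ≠ 0 := by intro m; rw [hF, mem_filter, mem_range]; omega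
  -- tail
  set T := CT * (l+1) / LM with hT
  have htail : 1 - T ≤ ∑ m ∈ F, GG z t N 1 m := by
    have h1 : (1:ℝ) ≤ ∑ m ∈ F, GG z t N 1 m + T := by
      refine hasSum_le_of_sum_le (GG_hasSum z t ht1 one_pos N) ?_
      intro s
      have h2 : ∑ m ∈ s, GG z t N 1 m ≤ ∑ m ∈ F, GG z t N 1 m + ∑ m ∈ s.filter (fun m => M ≤ m), GG z t N 1 m := by
        rw [← Finset.sum_filter_add_sum_filter_not s (fun m => M ≤ m), add_comm]
        refine add_le_add ?_ le_rfl
        rw [Finset.sum_filter]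
        have : ∀ m ∈ s, (if ¬ M ≤ m then GG z t N 1 m else 0) ≤ if m ∈ F then GG z t N 1 m else 0 := by
          intro m _
          have := GG_nonneg z t N one_pos m
          by_cases hm : m = 0
          · rw [hm, GG_zero]; split_ifs <;> exact le_rfl
          · by_cases hmM : M ≤ m
            · rw [if_neg (not_not.2 hmM)]; split_ifs <;> first | exact le_rfl | assumption
            · rw [if_pos hmM, if_pos ((hFm m).2 ⟨by omega, hm⟩)]
        refine (Finset.sum_le_sum this).trans ?_
        rw [← Finset.sum_filter]
        refine Finset.sum_le_sum_of_subset_of_nonneg ?_ (fun m _ _ => GG_nonneg z t N one_pos m)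
        intro m hm; exact (mem_filter.1 hm).2
      refine h2.trans ?_
      gcongr
      exact hCT t N M _ ht1 hMone (fun m hm => by exact_mod_cast (mem_filter.1 hm).2)
    linarith
  have hTeq : T * 16 = δ * (l+1) := by
    rw [hT, hδ, hA]; ring
  have hTle : T * 16 ≤ 1 := by
    rw [hTeq, hδ, div_mul_eq_mul_div, div_le_one hLM0]; exact hM1
  have hT0 : 0 ≤ T := by positivity
  -- pointwise
  have hpt : ∀ m ∈ F, GG z t N 1 m * (1 + δ * (l - C1)) - δ^2 * (GG z t N 1 m * (Real.log (t*m:ℕ))^2) ≤ GG z t N (1+δ) m := by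
    intro m hm
    rw [hFm] at hm
    have hm1 : 1 ≤ m := by omega
    have h1 := hC1 N (t*m) δ hδ0 (Nat.mul_pos ht1 hm1) (by rw [hN]; exact Nat.lt_succ_of_le (Nat.mul_le_mul_left _ hm.1))
    have h2 := GG_lo z t N m hδ0 _ h1
    have h3 := GG_nonneg z t N one_pos m
    have h4 := log_tm ht1 hm.2
    have h5 : Real.log 4 ≤ Real.log (t*m:ℕ) := by
      rw [h4]
      have := Real.log_natCast_nonneg m
      have : Real.log 4 ≤ 4 - 1 := Real.log_le_sub_one_of_pos (by norm_num)
      linarith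
    set y := Real.log (t*m:ℕ)
    have hy0 : 0 ≤ y := Real.log_natCast_nonneg _
    refine le_trans ?_ h2
    have h6 : 1 + δ * (l - C1) - δ^2 * y^2 ≤ Real.exp (-δ * Real.log m + (δ * (y - C1) - δ^2 * (y * (y + Real.log 4)) / 2)) := by
      refine le_trans ?_ (Real.add_one_le_exp _)
      have h7 : y * Real.log 4 ≤ y * y := mul_le_mul_of_nonneg_left h5 hy0
      have h8 := mul_le_mul_of_nonneg_left h7 (by positivity : 0 ≤ δ^2)
      have h9 : Real.log m = y - l := by linarith
      rw [h9]; nlinarith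
    have := mul_le_mul_of_nonneg_left h6 h3
    linarith
  have hS := (Finset.sum_le_sum hpt).trans (GG_sum_le_one z t N ht1 (by linarith) F)
  rw [Finset.sum_sub_distrib, ← Finset.sum_mul, ← Finset.mul_sum] at hS
  set SG := ∑ m ∈ F, GG z t N 1 m
  have hmain : δ * l * (3/16) + δ / 16 ≤ δ^2 * ∑ m ∈ F, (GG z t N 1 m * (Real.log (t*m:ℕ))^2) := by
    have h1 : (1 - T) * (1 + δ * (l - C1)) ≤ SG * (1 + δ * (l - C1)) := by
      apply mul_le_mul_of_nonneg_right htail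
      have : 0 ≤ δ * (l - C1) := mul_nonneg hδ0.le (by linarith)
      linarith
    have h2 : T * (δ * (l - C1)) ≤ 1/16 * (δ * (l - C1)) := 
      mul_le_mul_of_nonneg_right (by linarith) (mul_nonneg hδ0.le (by linarith))
    have h3 : δ * (2*C1+4) ≤ δ * l := mul_le_mul_of_nonneg_left hl1 hδ0.le
    nlinarith
  -- small part
  set F1 := F.filter (fun m : ℕ => Real.log m ≤ η / A * LM) with hF1
  have hQ : δ^2 * ∑ m ∈ F1, (GG z t N 1 m * (Real.log (t*m:ℕ))^2) ≤ δ * (l+1) / 16 := by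
    have h1 := hCQ t N (η / A * LM) F1 ht1 ?_ ?_
    · have h2 := mul_le_mul_of_nonneg_left h1 (by positivity : 0 ≤ δ^2)
      refine h2.trans (le_of_eq ?_)
      rw [hδ, hη]; field_simp
      try ring
    · have : A / η * (l+1) * (η / A) ≤ LM * (η/A) := mul_le_mul_of_nonneg_right hM2 (by positivity)
      have h2 : A / η * (l+1) * (η / A) = l + 1 := by field_simp
      linarith
    · intro m hm
      rw [hF1, mem_filter, hFm] at hm
      exact ⟨hm.1.2, hm.2⟩
  rw [← Finset.sum_filter_add_sum_filter_not F (fun m : ℕ => Real.log m ≤ η / A * LM), mul_add] at hmain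
  have hbig : δ * l * (1/8) ≤ δ^2 * ∑ m ∈ F.filter (fun m : ℕ => ¬ Real.log m ≤ η / A * LM), (GG z t N 1 m * (Real.log (t*m:ℕ))^2) := by
    nlinarith
  have hpt2 : ∀ m ∈ F.filter (fun m : ℕ => ¬ Real.log m ≤ η / A * LM), GG z t N 1 m * (Real.log (t*m:ℕ))^2 ≤ 
      if Dn z t m ∧ η / A * LM < Real.log m then 2 * CW * LM * ((1:ℝ)/m) else 0 := by
    intro m hm
    rw [mem_filter, hFm] at hm
    have hm1 : 1 ≤ m := by omega
    unfold GG
    by_cases hD : Dn z t m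
    · rw [if_pos (show Dn z t m ∧ η / A * LM < Real.log m from ⟨hD, not_le.1 hm.2⟩)]
      have hm0 : (0:ℝ) < m := by exact_mod_cast hm1
      have hR : 0 ≤ 2 * CW * LM * ((1:ℝ)/m) := by positivity
      split_ifs
      · have h1 := hCW N (t*m) (Nat.mul_pos ht1 hm1) (by rw [hN]; exact Nat.lt_succ_of_le (Nat.mul_le_mul_left _ hm.1.1))
        have h4 := log_tm ht1 hm.1.2
        have hlm : Real.log m ≤ LM := Real.log_le_log hm0 (by exact_mod_cast hm.1.1)
        have hlm0 := Real.log_natCast_nonneg m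
        have h5 : Real.log (t*m:ℕ) ≤ 2 * LM := by rw [h4]; nlinarith
        have h6 : 0 < Real.log (t*m:ℕ) := by rw [h4]; linarith
        have h7 : Real.log (t*m:ℕ) ≤ Real.log ((t*m:ℕ)+1) := Real.log_le_log (by have := Nat.mul_pos ht1 hm1; exact_mod_cast this) (by linarith)
        have h8 : WW z N (t*m) 1 ≤ CW / Real.log (t*m:ℕ) := h1.trans (by gcongr)
        rw [Real.rpow_neg_one]
        calc (m:ℝ)⁻¹ * WW z N (t*m) 1 * (Real.log (t*m:ℕ))^2 ≤ (m:ℝ)⁻¹ * (CW / Real.log (t*m:ℕ)) * (Real.log (t*m:ℕ))^2 := by gcongr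
          _ = (m:ℝ)⁻¹ * CW * Real.log (t*m:ℕ) := by field_simp
          _ ≤ (m:ℝ)⁻¹ * CW * (2 * LM) := by gcongr
          _ = _ := by ring
      · rw [zero_mul]; exact hR
    · rw [if_neg (fun h => hD h.1), if_neg (fun h => hD h.1), zero_mul]
  have hfin := hbig.trans (mul_le_mul_of_nonneg_left (Finset.sum_le_sum hpt2) (by positivity : 0 ≤ δ^2))
  rw [← Finset.sum_filter, ← Finset.mul_sum] at hfin
  have hsub : ∑ m ∈ (F.filter (fun m : ℕ => ¬ Real.log m ≤ η / A * LM)).filter (fun m => Dn z t m ∧ η / A * LM < Real.log m), (1:ℝ)/m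
     ≤ ∑ m ∈ (range (M+1)).filter (fun m => Dn z t m ∧ η / A * LM < Real.log m), (1:ℝ)/m := by
    apply Finset.sum_le_sum_of_subset_of_nonneg
    · intro m hm
      rw [mem_filter, mem_filter, hFm] at hm
      rw [mem_filter, mem_range]
      exact ⟨by omega, hm.2⟩
    · intros; positivity
  refine le_trans ?_ hsub
  set S := ∑ m ∈ (F.filter (fun m : ℕ => ¬ Real.log m ≤ η / A * LM)).filter (fun m => Dn z t m ∧ η / A * LM < Real.log m), (1:ℝ)/m
  have e1 : δ^2 * (2 * CW * LM * S) = δ * (2 * CW * A * S) := by rw [← hδLM]; ring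
  rw [e1, mul_assoc δ l] at hfin
  have h10 := le_of_mul_le_mul_left hfin hδ0
  rw [div_mul_eq_mul_div, div_le_iff₀ (by positivity)]
  linarith

lemma mult_card {n : ℕ} (hn : n ≠ 0) {R : ℝ} (P : Finset ℕ)
    (hP : ∀ p ∈ P, p.Prime ∧ p ∣ n ∧ R ≤ Real.log p) : (P.card : ℝ) * R ≤ Real.log n := by
  have h1 : ∏ p ∈ P, p ∣ n := Finset.prod_primes_dvd n (fun p hp => (hP p hp).1.prime) (fun p hp => (hP p hp).2.1)
  have h2 : ∏ p ∈ P, p ≤ n := Nat.le_of_dvd (Nat.pos_of_ne_zero hn) h1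
  have h3 : ∑ p ∈ P, Real.log p = Real.log ((∏ p ∈ P, p : ℕ):ℝ) := by
    rw [Nat.cast_prod, Real.log_prod]
    intro p hp
    have := (hP p hp).1.ne_zero
    exact_mod_cast this
  have h4 : 0 < ∏ p ∈ P, p := Finset.prod_pos (fun p hp => (hP p hp).1.pos)
  have h5 : Real.log ((∏ p ∈ P, p : ℕ):ℝ) ≤ Real.log n :=
    Real.log_le_log (by exact_mod_cast h4) (by exact_mod_cast h2)
  rw [← h3] at h5
  refine le_trans ?_ h5
  rw [← nsmul_eq_mul]
  exact Finset.card_nsmul_le_sum _ _ _ (fun p hp => (hP p hp).2.2)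

open Classical in
/-- primes between `m^(2/5)` and `m^(1/2)` -/
noncomputable def QP (z m : ℕ) : Finset ℕ := (range (m+1)).filter (fun p : ℕ => p.Prime ∧ z < p ∧
  2/5 * Real.log m < Real.log p ∧ Real.log p ≤ 1/2 * Real.log m)

lemma prime_sum (z : ℕ) : ∃ v0 : ℝ, 0 < v0 ∧ ∀ m : ℕ, v0 ≤ Real.log m →
    1/10 ≤ ∑ p ∈ QP z m, (1:ℝ)/p := by
  classical
  obtain ⟨C, hC0, hC⟩ := mert_low' z
  have hl2 : 0 < Real.log 2 := Real.log_pos (by norm_num)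
  have hl4 : 0 < Real.log 4 := Real.log_pos (by norm_num)
  refine ⟨20 * (C + Real.log 2 + Real.log 4), by positivity, ?_⟩
  intro m hm
  have hlm : 0 < Real.log m := lt_of_lt_of_le (by positivity) hm
  have hm0 : 0 < m := by
    rcases Nat.eq_zero_or_pos m with h | h
    · rw [h] at hlm; simp at hlm
    · exact h
  have hmR : (0:ℝ) < m := by exact_mod_cast hm0
  set s := Nat.sqrt m with hs
  have hs1 : 1 ≤ s := Nat.sqrt_pos.2 hm0
  have hsR : (0:ℝ) < s := by exact_mod_cast hs1
  have hsm : s * s ≤ m := Nat.sqrt_le m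
  have h1 : 1/2 * Real.log m - Real.log 2 ≤ Real.log s := by
    have h2 : m ≤ (2*s)*(2*s) := by
      have := Nat.lt_succ_sqrt m
      simp only [Nat.succ_eq_add_one] at this
      nlinarith
    have h3 : Real.log m ≤ Real.log ((2*s)*(2*s)) := Real.log_le_log hmR (by exact_mod_cast h2)
    rw [Real.log_mul (by positivity) (by positivity), Real.log_mul (by positivity) (by positivity)] at h3
    linarith
  have h1' : ∀ p : ℕ, p.Prime → p ≤ s → Real.log p ≤ 1/2 * Real.log m := by
    intro p hp hps
    have hp0 : (0:ℝ) < p := by exact_mod_cast hp.pos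
    have h2 : p * p ≤ m := (Nat.mul_le_mul hps hps).trans hsm
    have h3 : Real.log (p*p) ≤ Real.log m := Real.log_le_log (by positivity) (by exact_mod_cast h2)
    rw [Real.log_mul (by positivity) (by positivity)] at h3
    linarith
  set n1 := ⌊Real.exp (2/5 * Real.log m)⌋₊ with hn1
  have hn11 : 1 ≤ n1 := by
    rw [hn1, Nat.one_le_floor_iff]; exact Real.one_le_exp (by positivity)
  have h4 := mert_up n1 hn11
  have h5 : Real.log n1 ≤ 2/5 * Real.log m := by
    have := Nat.floor_le (Real.exp_pos (2/5 * Real.log m)).le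
    rw [Real.log_le_iff_le_exp (by exact_mod_cast hn11)]; exact this
  have h6 := hC s hs1
  rw [← Finset.sum_filter_add_sum_filter_not _ (fun p : ℕ => Real.log p ≤ 2/5 * Real.log m)] at h6
  have h7 : ∑ p ∈ ((range (s+1)).filter (fun p => p.Prime ∧ z < p)).filter (fun p : ℕ => Real.log p ≤ 2/5 * Real.log m), Real.log p / p
      ≤ ∑ p ∈ (range (n1+1)).filter Nat.Prime, Real.log p / p := by
    apply Finset.sum_le_sum_of_subset_of_nonneg
    · intro p hp
      rw [mem_filter, mem_filter] at hp
      rw [mem_filter, mem_range, Nat.lt_succ_iff]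
      refine ⟨?_, hp.1.2.1⟩
      rw [hn1, Nat.le_floor_iff (Real.exp_pos _).le, ← Real.log_le_iff_le_exp (by exact_mod_cast hp.1.2.1.pos)]
      exact hp.2
    · intro p _ _
      have := Real.log_natCast_nonneg p
      positivity
  have h8 : ∑ p ∈ ((range (s+1)).filter (fun p => p.Prime ∧ z < p)).filter (fun p : ℕ => ¬ Real.log p ≤ 2/5 * Real.log m), Real.log p / p
      ≤ ∑ p ∈ QP z m, (1/2 * Real.log m) * ((1:ℝ)/p) := by
    refine (Finset.sum_le_sum (g := fun p : ℕ => (1/2 * Real.log m) * ((1:ℝ)/p)) ?_).trans (Finset.sum_le_sum_of_subset_of_nonneg ?_ ?_)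
    · intro p hp
      rw [mem_filter, mem_filter, mem_range] at hp
      have := h1' p hp.1.2.1 (by omega)
      rw [mul_one_div]; gcongr
    · intro p hp
      rw [mem_filter, mem_filter, mem_range] at hp
      unfold QP
      rw [mem_filter, mem_range]
      refine ⟨?_, hp.1.2.1, hp.1.2.2, not_le.1 hp.2, h1' p hp.1.2.1 (by omega)⟩
      have := Nat.sqrt_le_self m
      omega
    · intros; positivity
  rw [← Finset.mul_sum] at h8
  set S := ∑ p ∈ QP z m, (1:ℝ)/p
  have h9 : 1/20 * Real.log m ≤ 1/2 * Real.log m * S := by linarith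
  nlinarith

open Classical in
noncomputable def SD (z t M : ℕ) (u : ℝ) : ℝ :=
  ∑ m ∈ (range (M+1)).filter (fun m => Dn z t m ∧ u < Real.log m), (1:ℝ)/m

lemma SD_anti {z t M : ℕ} {u v : ℝ} (h : u ≤ v) : SD z t M v ≤ SD z t M u := by
  classical
  unfold SD
  apply Finset.sum_le_sum_of_subset_of_nonneg
  · intro m hm
    rw [mem_filter] at hm ⊢
    exact ⟨hm.1, hm.2.1, h.trans_lt hm.2.2⟩
  · intros; positivity

theorem SD_step (z : ℕ) : ∃ u0 : ℝ, 0 < u0 ∧ ∀ (t M : ℕ) (u : ℝ), 1 ≤ t → u0 ≤ u → 3/2 * u ≤ Real.log M →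
    SD z t M (u / (7/5)) ≤ 41 * SD z t M u := by
  classical
  obtain ⟨v0, hv0, hv⟩ := prime_sum z
  refine ⟨7/5 * v0, by positivity, ?_⟩
  intro t M u ht hu huM
  have hu0 : 0 < u := lt_of_lt_of_le (by positivity) hu
  have hM0 : 0 < M := by
    rcases Nat.eq_zero_or_pos M with h | h
    · rw [h] at huM; simp at huM; linarith
    · exact h
  set F := (range (M+1)).filter (fun m => Dn z t m ∧ u < Real.log m) with hF
  set B := (range (M+1)).filter (fun m : ℕ => Dn z t m ∧ u/(7/5) < Real.log m ∧ Real.log m ≤ u) with hB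
  have hsplit : SD z t M (u/(7/5)) ≤ SD z t M u + ∑ m ∈ B, (1:ℝ)/m := by
    unfold SD
    rw [← Finset.sum_filter_add_sum_filter_not _ (fun m : ℕ => u < Real.log m)]
    refine add_le_add ?_ ?_
    · apply Finset.sum_le_sum_of_subset_of_nonneg
      · intro m hm
        rw [mem_filter, mem_filter] at hm; rw [mem_filter]
        exact ⟨hm.1.1, hm.1.2.1, hm.2⟩
      · intros; positivity
    · apply Finset.sum_le_sum_of_subset_of_nonneg
      · intro m hm
        rw [mem_filter, mem_filter] at hm; rw [hB, mem_filter]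
        exact ⟨hm.1.1, hm.1.2.1, hm.1.2.2, not_lt.1 hm.2⟩
      · intros; positivity
  have hlogmul : ∀ m p : ℕ, m ≠ 0 → p ≠ 0 → Real.log ((m*p:ℕ):ℝ) = Real.log m + Real.log p := by
    intro m p hm hp
    rw [Nat.cast_mul, Real.log_mul (by exact_mod_cast hm) (by exact_mod_cast hp)]
  have hBsum : ∑ m ∈ B, (1:ℝ)/m ≤ 10 * ∑ q ∈ B.sigma (fun m => QP z m), (1:ℝ)/((q.1*q.2:ℕ):ℝ) := by
    rw [Finset.sum_sigma, Finset.mul_sum]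
    apply Finset.sum_le_sum
    intro m hm
    rw [hB, mem_filter] at hm
    have h1 := hv m (by
      have : v0 ≤ u/(7/5) := by rw [le_div_iff₀ (by norm_num)]; linarith
      linarith [hm.2.2.1])
    have h2 : ∑ p ∈ QP z m, (1:ℝ)/((m*p:ℕ):ℝ) = (1/m) * ∑ p ∈ QP z m, (1:ℝ)/p := by
      rw [Finset.mul_sum]; apply Finset.sum_congr rfl; intro p _
      push_cast; rw [one_div_mul_one_div]
    show (1:ℝ)/m ≤ 10 * ∑ p ∈ QP z m, (1:ℝ)/((m*p:ℕ):ℝ)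
    rw [h2]
    have h3 : (0:ℝ) ≤ 1/m := by positivity
    nlinarith
  have hmaps : ∀ q ∈ B.sigma (fun m => QP z m), q.1 * q.2 ∈ F := by
    rintro ⟨m, p⟩ hq
    rw [mem_sigma, hB, mem_filter] at hq
    unfold QP at hq
    rw [mem_filter, mem_range] at hq
    obtain ⟨⟨hm1, hm2, hm3, hm4⟩, hp1, hp2, hp3, hp4, hp5⟩ := hq
    dsimp only at *
    have hl := hlogmul m p hm2.1 hp2.ne_zero
    rw [hF, mem_filter, mem_range]
    have hm3' : u < Real.log m * (7/5) := by rwa [div_lt_iff₀ (by norm_num)] at hm3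
    refine ⟨?_, ?_, ?_⟩
    · rw [Nat.lt_succ_iff]
      have h1 : Real.log ((m*p:ℕ):ℝ) ≤ Real.log M := by rw [hl]; linarith
      rw [Real.log_le_log_iff (by have := Nat.mul_pos (Nat.pos_of_ne_zero hm2.1) hp2.pos; exact_mod_cast this) (by exact_mod_cast hM0)] at h1
      exact_mod_cast h1
    · apply Dn_mul_prime hp2 hm2 hp3
      exact (Nat.lt_succ_iff.1 (mem_range.1 hp1)).trans (Nat.le_mul_of_pos_left _ ht)
    · rw [hl]; linarith
  have hfib : ∑ q ∈ B.sigma (fun m => QP z m), (1:ℝ)/((q.1*q.2:ℕ):ℝ) ≤ 4 * ∑ n ∈ F, (1:ℝ)/n := by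
    rw [← Finset.sum_fiberwise_of_maps_to hmaps, Finset.mul_sum]
    apply Finset.sum_le_sum
    intro n hn
    rw [hF, mem_filter] at hn
    have hn0 : 0 < Real.log n := hu0.trans hn.2.2
    set Fb := (B.sigma (fun m => QP z m)).filter (fun q => q.1 * q.2 = n) with hFb
    have hcard : (Fb.card : ℝ) ≤ 4 := by
      have hinj : Set.InjOn (fun q : (Σ _ : ℕ, ℕ) => q.2) Fb := by
        rintro ⟨m, p⟩ h1 ⟨m', p'⟩ h2 h3
        rw [Finset.mem_coe, hFb, mem_filter] at h1 h2
        dsimp only at *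
        subst h3
        have hp0 : p ≠ 0 := by
          rintro rfl
          have := h1.2
          simp at this
          exact hn.2.1.1 this.symm
        have : m = m' := Nat.eq_of_mul_eq_mul_right (Nat.pos_of_ne_zero hp0) (h1.2.trans h2.2.symm)
        rw [this]
      rw [← Finset.card_image_of_injOn hinj]
      have h1 := mult_card hn.2.1.1 (R := 1/4 * Real.log n) (Fb.image (fun q : (Σ _ : ℕ, ℕ) => q.2)) ?_
      · by_contra h
        push Not at h
        nlinarith
      · intro p hp
        rw [mem_image] at hp
        obtain ⟨⟨m, p'⟩, h2, h3⟩ := hp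
        dsimp only at h3
        subst h3
        rw [hFb, mem_filter, mem_sigma, hB, mem_filter] at h2
        unfold QP at h2
        rw [mem_filter] at h2
        obtain ⟨⟨hm, hp1, hp2, hp3, hp4, hp5⟩, he⟩ := h2
        dsimp only at *
        refine ⟨hp2, ⟨m, by rw [← he, mul_comm]⟩, ?_⟩
        rw [← he, hlogmul m p' hm.2.1.1 hp2.ne_zero]
        linarith
    have : ∑ q ∈ Fb, (1:ℝ)/((q.1*q.2:ℕ):ℝ) = Fb.card * ((1:ℝ)/n) := by
      rw [← nsmul_eq_mul, ← Finset.sum_const]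
      apply Finset.sum_congr rfl
      intro q hq
      rw [hFb, mem_filter] at hq
      rw [hq.2]
    rw [this]
    gcongr
  have hSF : SD z t M u = ∑ n ∈ F, (1:ℝ)/n := rfl
  rw [← hSF] at hfib
  linarith

lemma SD_iter (z : ℕ) : ∃ u0 : ℝ, 0 < u0 ∧ ∀ (k t M : ℕ) (u : ℝ), 1 ≤ t → u0 ≤ u / (7/5)^k → 3/2 * u ≤ Real.log M →
    SD z t M (u / (7/5)^k) ≤ 41^k * SD z t M u := by
  obtain ⟨u0, hu0, h⟩ := SD_step z
  refine ⟨u0, hu0, ?_⟩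
  intro k t M u ht
  induction k with
  | zero => intro _ _; simp
  | succ k ih =>
    intro h1 h2
    have hp : (0:ℝ) < (7/5)^k := by positivity
    have e : u / (7/5)^(k+1) = u / (7/5)^k / (7/5) := by rw [pow_succ, div_div]
    have h3 : u0 ≤ u / (7/5)^k := by
      rw [e] at h1
      rw [le_div_iff₀ (by norm_num)] at h1
      linarith
    have hu : 0 < u := by
      have : 0 < u / (7/5)^k := lt_of_lt_of_le hu0 h3
      have := mul_pos this hp
      rwa [div_mul_cancel₀ _ hp.ne'] at this
    have h4 := ih h3 h2
    have h5 := h t M (u / (7/5)^k) ht h3 (by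
      have : u / (7/5)^k ≤ u := div_le_self hu.le (one_le_pow₀ (by norm_num))
      linarith)
    rw [e, pow_succ]
    linarith

theorem lower_half (z : ℕ) : ∃ (t0 : ℕ) (K c : ℝ), 1 ≤ t0 ∧ 0 < K ∧ 0 < c ∧ ∀ t M : ℕ, t0 ≤ t →
    K * (Real.log t + 1) ≤ Real.log M → c * Real.log t ≤ SD z t M (2/3 * Real.log M) := by
  obtain ⟨t0, b, K, c, ht0, hb, hK, hc, h⟩ := lower_avg z
  obtain ⟨u0, hu0, hi⟩ := SD_iter z
  obtain ⟨k, hk⟩ := pow_unbounded_of_one_lt (1/b) (show (1:ℝ) < 7/5 by norm_num)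
  refine ⟨t0, max K (3/2 * u0 * (7/5)^k), c / 41^k, ht0, by positivity, by positivity, ?_⟩
  intro t M ht hM
  have hl : 0 ≤ Real.log t := Real.log_natCast_nonneg t
  have h1 := h t M ht ((mul_le_mul_of_nonneg_right (le_max_left _ _) (by linarith)).trans hM)
  have h2 : 3/2 * u0 * (7/5)^k * (Real.log t + 1) ≤ Real.log M := (mul_le_mul_of_nonneg_right (le_max_right _ _) (by linarith)).trans hM
  have h2' : 3/2 * u0 * (7/5)^k ≤ Real.log M := le_trans (le_mul_of_one_le_right (by positivity) (by linarith)) h2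
  have hp : (0:ℝ) < (7/5)^k := by positivity
  have hLM : 0 < Real.log M := lt_of_lt_of_le (by positivity) h2'
  have h3 := hi k t M (2/3 * Real.log M) (ht0.trans ht) (by rw [le_div_iff₀ hp]; linarith) (by linarith)
  have h4 : SD z t M (b * Real.log M) ≤ SD z t M (2/3 * Real.log M / (7/5)^k) := by
    apply SD_anti
    rw [div_le_iff₀ hp]
    rw [div_lt_iff₀ hb] at hk
    nlinarith
  have h5 : c * Real.log t ≤ SD z t M (b * Real.log M) := h1
  rw [div_mul_eq_mul_div, div_le_iff₀ (by positivity)]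
  linarith

lemma spart_mul_le {n q : ℕ} (hn : n ≠ 0) (hq : q.Prime) (hd : q ∣ n) : spart n q * q ≤ n := by
  obtain ⟨a, rfl⟩ := hd
  have ha : a ≠ 0 := by rintro rfl; simp at hn
  rw [spart_mul hq.ne_zero ha, spart_prime hq, if_neg (lt_irrefl _), one_mul, mul_comm]
  exact Nat.mul_le_mul_left _ (spart_le ha q)

lemma SS_le {z T n : ℕ} (hT : 1 ≤ T) (hn : Dn z T n) : (SS n : ℝ) ≤ ((T * n : ℕ):ℝ) := by
  have hn0 := hn.1
  have hTn : 1 ≤ T * n := Nat.mul_pos hT (Nat.pos_of_ne_zero hn0)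
  unfold SS
  apply foldr_max_le (by exact_mod_cast hTn)
  intro a ha
  rw [List.mem_map] at ha
  obtain ⟨j, hj, rfl⟩ := ha
  rw [List.mem_range] at hj
  set L := n.primeFactorsList with hL
  have hsort : L.Pairwise (· ≤ ·) := (Nat.primeFactorsList_sorted n).pairwise
  have hdrop : L.drop j = L[j] :: L.drop (j+1) := List.drop_eq_getElem_cons hj
  have hhead : (L.drop j).headI = L[j] := by rw [hdrop]; rfl
  set p := L[j] with hp
  have hpL : p ∈ L := List.getElem_mem hj
  have hpp := (Nat.mem_primeFactorsList hn0).1 hpL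
  have h1 := (hn.2 p hpp.1 hpp.2).2
  have hge : ∀ q ∈ L.drop j, p ≤ q := by
    have h2 : (L.drop j).Pairwise (· ≤ ·) := hsort.sublist (List.drop_sublist _ _)
    rw [hdrop, List.pairwise_cons] at h2
    intro q hq
    rw [hdrop, List.mem_cons] at hq
    rcases hq with rfl | hq
    · exact le_rfl
    · exact h2.1 q hq
  have hprod : (L.take j).prod * (L.drop j).prod = n := by
    rw [List.prod_take_mul_prod_drop, hL, Nat.prod_primeFactorsList hn0]
  have hsp : spart n p ≤ (L.take j).prod := by
    unfold spart
    rw [← hL]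
    conv_lhs => rw [← List.take_append_drop j L]
    have hnil : (L.drop j).filter (fun q => decide (q < p)) = [] := by
      rw [List.filter_eq_nil_iff]
      intro q hq
      have := hge q hq
      simpa using this
    rw [List.filter_append, hnil, List.append_nil]
    · apply Nat.le_of_dvd
      · apply Nat.pos_of_ne_zero
        intro h0
        rw [h0, zero_mul] at hprod
        exact hn0 hprod.symm
      · exact List.Sublist.prod_dvd_prod List.filter_sublist
  rw [hhead]
  have : p * (L.drop j).prod ≤ T * n := by
    calc p * (L.drop j).prod ≤ (T * (L.take j).prod) * (L.drop j).prod := 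
          Nat.mul_le_mul_right _ (h1.trans (Nat.mul_le_mul_left _ hsp))
      _ = T * n := by rw [mul_assoc, hprod]
  exact_mod_cast this

lemma Pmax_le {n : ℕ} {y : ℝ} (hy : 1 ≤ y) (h : ∀ p : ℕ, p.Prime → p ∣ n → (p:ℝ) ≤ y) : (Pmax n : ℝ) ≤ y := by
  unfold Pmax
  split_ifs with h1
  · simpa using hy
  · have : n.primeFactors.sup id ≤ ⌊y⌋₊ := by
      apply Finset.sup_le
      intro p hp
      rw [Nat.mem_primeFactors] at hp
      exact Nat.le_floor (h p hp.1 hp.2.1)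
    exact (Nat.le_floor_iff (by linarith)).1 this

lemma A_set_finite (x y z t : ℝ) : {n : ℕ | 1 ≤ n ∧ (n : ℝ) ≤ x ∧ (Pmax n : ℝ) ≤ y ∧
    (∀ p : ℕ, p.Prime → p ∣ n → z < (p : ℝ)) ∧ (SS n : ℝ) ≤ x * t}.Finite := by
  apply (Set.finite_Iic ⌊x⌋₊).subset
  rintro n ⟨_, h, _⟩
  exact Nat.le_floor h

lemma A_pos {x y z t : ℝ} (hx : 1 ≤ x) (hy : 1 ≤ y) (ht : 1 ≤ t) : 1 ≤ (Axyzt x y z t : ℝ) := by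
  have : 0 < Axyzt x y z t := by
    unfold Axyzt
    rw [Set.ncard_pos (A_set_finite x y z t)]
    refine ⟨1, le_rfl, by simpa using hx, ?_, ?_, ?_⟩
    · simpa [Pmax] using hy
    · intro p hp hd; exact absurd (Nat.dvd_one.1 hd) hp.one_lt.ne'
    · simp [SS]; nlinarith
  exact_mod_cast this

lemma count_pairs (Ds : Finset ℕ) (P : ℕ → Finset ℕ) (S : Set ℕ) (hfin : S.Finite) {R : ℝ} (hR : 0 < R)
    (hS : ∀ n ∈ S, n ≠ 0 ∧ Real.log n ≤ 8 * R)
    (hmem : ∀ D ∈ Ds, ∀ p ∈ P D, p.Prime ∧ R ≤ Real.log p ∧ D * p ∈ S) :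
    ∑ D ∈ Ds, (P D).card ≤ 8 * S.ncard := by
  classical
  rw [Set.ncard_eq_toFinset_card S hfin, ← Finset.card_sigma]
  apply Finset.card_le_mul_card_image_of_maps_to (f := fun q : (Σ _ : ℕ, ℕ) => q.1 * q.2)
  · rintro ⟨D, p⟩ h
    rw [mem_sigma] at h
    rw [Set.Finite.mem_toFinset]
    exact (hmem D h.1 p h.2).2.2
  · intro n hn
    rw [Set.Finite.mem_toFinset] at hn
    obtain ⟨hn0, hnl⟩ := hS n hn
    set Fb := (Ds.sigma P).filter (fun q : (Σ _ : ℕ, ℕ) => q.1 * q.2 = n) with hFb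
    have hinj : Set.InjOn (fun q : (Σ _ : ℕ, ℕ) => q.2) Fb := by
      rintro ⟨m, p⟩ h1 ⟨m', p'⟩ h2 h3
      rw [Finset.mem_coe, hFb, mem_filter] at h1 h2
      dsimp only at *
      subst h3
      have hp0 : p ≠ 0 := by
        rintro rfl
        have := h1.2
        simp at this
        exact hn0 this.symm
      have : m = m' := Nat.eq_of_mul_eq_mul_right (Nat.pos_of_ne_zero hp0) (h1.2.trans h2.2.symm)
      rw [this]
    rw [← Finset.card_image_of_injOn hinj]
    have h1 := mult_card hn0 (R := R) (Fb.image (fun q : (Σ _ : ℕ, ℕ) => q.2)) ?_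
    · have h2 : ((Fb.image (fun q : (Σ _ : ℕ, ℕ) => q.2)).card : ℝ) ≤ 8 := by
        by_contra h
        push Not at h
        nlinarith
      exact_mod_cast h2
    · intro p hp
      rw [mem_image] at hp
      obtain ⟨⟨m, p'⟩, h2, h3⟩ := hp
      dsimp only at h3
      subst h3
      rw [hFb, mem_filter, mem_sigma] at h2
      obtain ⟨⟨hm, hp1⟩, he⟩ := h2
      dsimp only at *
      have := hmem m hm p' hp1
      exact ⟨this.1, ⟨m, by rw [← he, mul_comm]⟩, this.2.1⟩

lemma pi_lower {n : ℕ} (hn : 4 ≤ n) : (n:ℝ) / (4 * Real.log n) ≤ Nat.primeCounting n := by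
  have h := Chebyshev.pi_ge n
  refine le_trans ?_ h
  have hn' : (4:ℝ) ≤ n := by exact_mod_cast hn
  have hl : 0 < Real.log n := Real.log_pos (by linarith)
  rw [mul_comm, ← div_div, ]
  rw [div_div, mul_comm, ← div_div]
  apply div_le_div_of_nonneg_right _ hl.le
  have h1 : Real.log ((n:ℝ)+1) ≤ (n+1)/8 - 1 + 3 * Real.log 2 := by
    have h2 : Real.log ((n:ℝ)+1) = Real.log ((n+1)/8) + Real.log (2^3) := by
      rw [← Real.log_mul (by positivity) (by norm_num)]; congr 1; ring
    rw [h2, Real.log_pow]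
    have := Real.log_le_sub_one_of_pos (show (0:ℝ) < (n+1)/8 by positivity)
    push_cast; linarith
  have h3 := Real.log_two_gt_d9
  have h4 := Real.log_two_lt_d9
  nlinarith

/-- primes in `(w, v]` -/
noncomputable def PR (w v : ℝ) : Finset ℕ := (Finset.Ioc ⌊w⌋₊ ⌊v⌋₊).filter Nat.Prime

lemma mem_PR {w v : ℝ} (hw : 0 ≤ w) (hv : 0 ≤ v) {p : ℕ} (h : p ∈ PR w v) : p.Prime ∧ w < p ∧ (p:ℝ) ≤ v := by
  unfold PR at h
  rw [mem_filter, mem_Ioc] at h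
  exact ⟨h.2, (Nat.floor_lt hw).1 h.1.1, (Nat.le_floor_iff hv).1 h.1.2⟩

lemma PR_card {w v R : ℝ} (hw : 0 ≤ w) (hv : 4 ≤ v) (hR : Real.log v ≤ 8 * R) (hR0 : 0 < R) (hwv : w ≤ v / (128 * R)) :
    v / (128 * R) ≤ (PR w v).card := by
  set n := ⌊v⌋₊ with hn
  have hn4 : 4 ≤ n := Nat.le_floor (by exact_mod_cast hv)
  have h1 := pi_lower hn4
  have hnv : (n:ℝ) ≤ v := Nat.floor_le (by linarith)
  have hvn : v / 2 ≤ n := by have := Nat.lt_floor_add_one v; linarith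
  have hn4' : (4:ℝ) ≤ n := by exact_mod_cast hn4
  have hl : 0 < Real.log n := Real.log_pos (by linarith)
  have hlog : Real.log n ≤ 8 * R := (Real.log_le_log (by linarith) hnv).trans hR
  have h2 : v / (64 * R) ≤ Nat.primeCounting n := by
    refine le_trans ?_ h1
    calc v / (64 * R) = (v/2) / (4 * (8*R)) := by field_simp; norm_num
      _ ≤ _ := by gcongr
  have h3 : Nat.primeCounting n ≤ (PR w v).card + ⌊w⌋₊ := by
    rw [Nat.primeCounting, Nat.primeCounting', Nat.count_eq_card_filter_range]
    have : (range (n+1)).filter Nat.Prime ⊆ PR w v ∪ Finset.Icc 1 ⌊w⌋₊ := by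
      intro p hp
      rw [mem_filter, mem_range] at hp
      rw [mem_union, mem_Icc]
      unfold PR
      rw [mem_filter, mem_Ioc]
      have := hp.2.pos
      by_cases h : p ≤ ⌊w⌋₊
      · right; omega
      · left; exact ⟨⟨by omega, by omega⟩, hp.2⟩
    refine (Finset.card_le_card this).trans ((Finset.card_union_le _ _).trans ?_)
    simp
  have h4 : (⌊w⌋₊:ℝ) ≤ w := Nat.floor_le hw
  have h5 : (Nat.primeCounting n : ℝ) ≤ (PR w v).card + ⌊w⌋₊ := by exact_mod_cast h3
  have h6 : v / (64 * R) = 2 * (v / (128 * R)) := by field_simp; norm_num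
  linarith

lemma w_large (K' K z₀ : ℝ) (hK' : 0 < K') : ∃ w0 : ℝ, 4 ≤ w0 ∧ ∀ w : ℝ, w0 ≤ w → K' ≤ w ∧ z₀ ≤ w ∧ 128 * K' * Real.log w ≤ w ∧
    K * (Real.log K' + 1) + Real.log 2 ≤ 4 * Real.log w := by
  have h1 := Filter.eventually_ge_atTop K'
  have h2 := Filter.eventually_ge_atTop z₀
  have h3 := (Real.isLittleO_log_id_atTop).bound (show 0 < 1/(128*K') by positivity)
  have h4 := Real.tendsto_log_atTop.eventually_ge_atTop ((K * (Real.log K' + 1) + Real.log 2)/4)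
  obtain ⟨a, ha⟩ := Filter.eventually_atTop.1 (h1.and (h2.and (h3.and h4)))
  refine ⟨max a 4, le_max_right _ _, ?_⟩
  intro w hw
  obtain ⟨g1, g2, g3, g4⟩ := ha w ((le_max_left _ _).trans hw)
  have hw4 : 4 ≤ w := (le_max_right _ _).trans hw
  refine ⟨g1, g2, ?_, by linarith⟩
  rw [Real.norm_of_nonneg (Real.log_nonneg (by linarith)), id, Real.norm_of_nonneg (by linarith), div_mul_eq_mul_div, one_mul, le_div_iff₀ (by positivity)] at g3
  linarith

set_option maxHeartbeats 2000000 in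
theorem lower_core (z' : ℕ) : ∃ w0 c : ℝ, 4 ≤ w0 ∧ 0 < c ∧ ∀ w y z t : ℝ, w0 ≤ w → w^4 ≤ y → 1 ≤ t → t ≤ w^8 →
    z ≤ z' → c * w^8 * Real.log (2*t) / Real.log (w^8) ≤ Axyzt (w^8) y z t := by
  classical
  obtain ⟨t0, K, c, ht01, hK, hc, hmain⟩ := lower_half z'
  set K' := max t0 4 with hK'
  have hK4 : 4 ≤ K' := le_max_right _ _
  have hK4R : (4:ℝ) ≤ K' := by exact_mod_cast hK4
  set κ : ℝ := min (1/8) (1/(4*K)) with hκ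
  have hκ0 : 0 < κ := by positivity
  have hκ8 : κ ≤ 1/8 := min_le_left _ _
  have hκK : K * κ ≤ 1/4 := by
    calc K * κ ≤ K * (1/(4*K)) := mul_le_mul_of_nonneg_left (min_le_right _ _) hK.le
      _ = 1/4 := by field_simp
  obtain ⟨w0, hw04, hw0⟩ := w_large K' K z' (by linarith)
  refine ⟨w0, κ * c / (128 * K'), hw04, by positivity, ?_⟩
  intro w y z t hw hy ht htx hz
  obtain ⟨hwK, hwz, hwlog, hwlog2⟩ := hw0 w hw
  have hw4 : 4 ≤ w := hw04.trans hw
  have hwpos : 0 < w := by linarith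
  set R := Real.log w with hR
  have hR0 : 0 < R := Real.log_pos (by linarith)
  have hlx : Real.log (w^8) = 8 * R := by rw [Real.log_pow, hR]; norm_num
  have hw1 : 1 ≤ w := by linarith
  set τ := min t (Real.exp (κ * (8*R))) with hτ
  have hτ1 : 1 ≤ τ := le_min ht (Real.one_le_exp (by positivity))
  have hτt : τ ≤ t := min_le_left _ _
  have hτw : τ ≤ w := by
    refine (min_le_right _ _).trans ?_
    rw [← Real.le_log_iff_exp_le hwpos]
    nlinarith
  set f := ⌊τ⌋₊ with hf
  have hf1 : 1 ≤ f := by rw [hf, Nat.one_le_floor_iff]; exact hτ1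
  have hfτ : (f:ℝ) ≤ τ := Nat.floor_le (by linarith)
  have hf1R : (1:ℝ) ≤ f := by exact_mod_cast hf1
  have hfτ2 : τ / 2 ≤ f := by have := Nat.lt_floor_add_one τ; linarith
  set T := K' * f with hT
  have hTR : (T:ℝ) = K' * f := by rw [hT]; push_cast; ring
  have hTt0 : t0 ≤ T := (le_max_left _ _).trans (Nat.le_mul_of_pos_right _ hf1)
  have hT1 : 1 ≤ T := ht01.trans hTt0
  have hTR1 : (1:ℝ) ≤ T := by exact_mod_cast hT1
  have hlogτ : Real.log τ ≤ κ * (8 * R) := by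
    rw [Real.log_le_iff_le_exp (by linarith)]; exact min_le_right _ _
  have hlogT_up : Real.log T ≤ Real.log K' + κ * (8*R) := by
    rw [hTR, Real.log_mul (by positivity) (by positivity)]
    have := Real.log_le_log (by linarith) hfτ
    linarith
  have hlogT_lo : κ * Real.log (2*t) ≤ Real.log T := by
    have h1 : Real.log (2 * τ) ≤ Real.log T := by
      apply Real.log_le_log (by linarith)
      rw [hTR]; nlinarith
    refine le_trans ?_ h1
    have hl2 : 0 < Real.log 2 := Real.log_pos (by norm_num)
    have hlt : 0 ≤ Real.log t := Real.log_nonneg ht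
    rw [Real.log_mul (by norm_num) (by linarith), Real.log_mul (by norm_num) (by linarith)]
    rcases le_total t (Real.exp (κ * (8*R))) with h | h
    · rw [hτ, min_eq_left h]; nlinarith
    · rw [hτ, min_eq_right h, Real.log_exp]
      have h2 : Real.log t ≤ 8 * R := by rw [← hlx]; exact Real.log_le_log (by linarith) htx
      have h3 := mul_le_mul_of_nonneg_left h2 hκ0.le
      nlinarith
  set M := ⌊w^6⌋₊ with hM
  have hw6 : 1 ≤ w^6 := one_le_pow₀ hw1
  have hMw : (M:ℝ) ≤ w^6 := Nat.floor_le (by positivity)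
  have hM1 : 1 ≤ M := by rw [hM, Nat.one_le_floor_iff]; exact hw6
  have hM1R : (1:ℝ) ≤ M := by exact_mod_cast hM1
  have hMw2 : w^6 / 2 ≤ M := by have := Nat.lt_floor_add_one (w^6); linarith
  have hlogM : 6 * R - Real.log 2 ≤ Real.log M := by
    have h1 := Real.log_le_log (by positivity) hMw2
    rw [Real.log_div (by positivity) (by norm_num), Real.log_pow] at h1
    push_cast at h1
    exact h1
  have hcond : K * (Real.log T + 1) ≤ Real.log M := by
    have h1 : K * (Real.log T + 1) ≤ K * (Real.log K' + κ * (8*R) + 1) := by gcongr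
    have h2 : K * κ * (8 * R) ≤ 1/4 * (8*R) := mul_le_mul_of_nonneg_right hκK (by positivity)
    linarith
  have hSD := hmain T M hTt0 hcond
  unfold SD at hSD
  set Ds := (range (M+1)).filter (fun m => Dn z' T m ∧ 2/3 * Real.log M < Real.log m) with hDs
  have hDprop : ∀ D ∈ Ds, Dn z' T D ∧ (0:ℝ) < D ∧ (D:ℝ) ≤ w^6 ∧ w^4/2 ≤ D := by
    intro D hD
    rw [hDs, mem_filter, mem_range] at hD
    have hD0 : (0:ℝ) < D := by exact_mod_cast Nat.pos_of_ne_zero hD.2.1.1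
    refine ⟨hD.2.1, hD0, ?_, ?_⟩
    · have : (D:ℝ) ≤ M := by exact_mod_cast Nat.lt_succ_iff.1 hD.1
      linarith
    · by_contra h
      push Not at h
      have h1 : Real.log ((M:ℝ)^2) < Real.log ((D:ℝ)^3) := by
        rw [Real.log_pow, Real.log_pow]; push_cast; linarith [hD.2.2]
      rw [Real.log_lt_log_iff (by positivity) (by positivity)] at h1
      have h2 : (D:ℝ)^3 ≤ (w^4/2)^3 := pow_le_pow_left₀ hD0.le h.le 3
      have h3 : (w^6/2)^2 ≤ (M:ℝ)^2 := pow_le_pow_left₀ (by positivity) hMw2 2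
      have h4 : (w^4/2)^3 = w^12/8 := by ring
      have h5 : (w^6/2)^2 = w^12/4 := by ring
      have h6 : 0 < w^12 := by positivity
      linarith
  set v : ℕ → ℝ := fun D => w^8 / (K' * D) with hv
  have hvlow : ∀ D ∈ Ds, w^2 / K' ≤ v D := by
    intro D hD
    obtain ⟨h1, h2, h3, h4⟩ := hDprop D hD
    simp only [hv]
    rw [div_le_div_iff₀ (by positivity) (by positivity)]
    calc w^2 * (K' * D) ≤ w^2 * (K' * w^6) := by gcongr
      _ = w^8 * K' := by ring
  have hvD : ∀ D ∈ Ds, v D * (K' * D) = w^8 := by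
    intro D hD
    obtain ⟨h1, h2, h3, h4⟩ := hDprop D hD
    simp only [hv]; field_simp
  have hvup : ∀ D ∈ Ds, v D ≤ w^4/2 := by
    intro D hD
    obtain ⟨h1, h2, h3, h4⟩ := hDprop D hD
    simp only [hv]
    rw [div_le_iff₀ (by positivity)]
    calc w^8 = w^4/2 * (4 * (w^4/2)) := by ring
      _ ≤ w^4/2 * (K' * D) := by gcongr
  set S : Set ℕ := {n : ℕ | 1 ≤ n ∧ (n : ℝ) ≤ w^8 ∧ (Pmax n : ℝ) ≤ y ∧
    (∀ p : ℕ, p.Prime → p ∣ n → z < (p : ℝ)) ∧ (SS n : ℝ) ≤ w^8 * t} with hS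
  have hy1 : 1 ≤ y := (one_le_pow₀ hw1).trans hy
  have hcount := count_pairs Ds (fun D => PR w (v D)) S (A_set_finite _ _ _ _) hR0 ?_ ?_
  · have hA : (Axyzt (w^8) y z t : ℝ) = (S.ncard : ℝ) := rfl
    have hcard : ∀ D ∈ Ds, w^8 / (K' * (128 * R)) * ((1:ℝ)/D) ≤ ((PR w (v D)).card : ℝ) := by
      intro D hD
      obtain ⟨h1, h2, h3, h4⟩ := hDprop D hD
      have hv1 := hvlow D hD
      have hv2 := hvup D hD
      have hv4 : 4 ≤ v D := by
        refine le_trans ?_ hv1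
        rw [le_div_iff₀ (by linarith)]
        nlinarith
      have h5 := PR_card (w := w) (v := v D) (R := R) hwpos.le hv4 ?_ hR0 ?_
      · refine le_trans (le_of_eq ?_) h5
        simp only [hv]; field_simp
      · rw [← hlx]
        apply Real.log_le_log (by linarith)
        have : w^4 ≤ w^8 := pow_le_pow_right₀ hw1 (by norm_num)
        have : 0 < w^4 := by positivity
        linarith
      · rw [le_div_iff₀ (by positivity)]
        refine le_trans ?_ hv1
        rw [le_div_iff₀ (by linarith)]
        nlinarith
    have h1 : (∑ D ∈ Ds, ((PR w (v D)).card : ℝ)) ≤ 8 * (S.ncard:ℝ) := by exact_mod_cast hcount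
    have h2 := (Finset.sum_le_sum hcard).trans h1
    rw [← Finset.mul_sum] at h2
    have h3 : w^8 / (K' * (128 * R)) * (c * (κ * Real.log (2*t))) ≤ 8 * (S.ncard:ℝ) := by
      refine le_trans ?_ h2
      apply mul_le_mul_of_nonneg_left _ (by positivity)
      exact (mul_le_mul_of_nonneg_left hlogT_lo hc.le).trans hSD
    rw [hA, hlx]
    have e : κ * c / (128 * K') * w^8 * Real.log (2*t) / (8 * R) = w^8 / (K' * (128 * R)) * (c * (κ * Real.log (2*t))) / 8 := by
      field_simp
    rw [e]; linarith
  · rintro n ⟨h1, h2, _⟩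
    refine ⟨by omega, ?_⟩
    rw [← hlx]
    exact Real.log_le_log (by exact_mod_cast h1) h2
  · intro D hD p hp
    obtain ⟨h1, h2, h3, h4⟩ := hDprop D hD
    have hv2 := hvup D hD
    have hv0 : 0 ≤ v D := by simp only [hv]; positivity
    obtain ⟨hp1, hp2, hp3⟩ := mem_PR hwpos.le hv0 hp
    have hp0 : (0:ℝ) < p := by exact_mod_cast hp1.pos
    have hpw4 : (p:ℝ) ≤ w^4 := by
      have : 0 < w^4 := by positivity
      linarith
    have hpz : z' < p := by
      have : (z':ℝ) < p := by linarith
      exact_mod_cast this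
    have hpT : p ≤ T * D := by
      have : (p:ℝ) ≤ T * D := by
        have : (4:ℝ) ≤ T := by rw [hTR]; nlinarith
        have : 4 * (w^4/2) ≤ T * (D:ℝ) := by gcongr
        have : 0 < w^4 := by positivity
        linarith
      exact_mod_cast this
    have hDn := Dn_mul_prime hp1 h1 hpz hpT
    have hn1 : 1 ≤ D * p := Nat.mul_pos (Nat.pos_of_ne_zero h1.1) hp1.pos
    have hDp : (D:ℝ) * p * K' ≤ w^8 := by
      rw [← hvD D hD]
      have := mul_le_mul_of_nonneg_right hp3 (show (0:ℝ) ≤ K' * D by positivity)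
      linarith
    refine ⟨hp1, Real.log_le_log hwpos hp2.le, hn1, ?_, ?_, ?_, ?_⟩
    · push_cast
      have : (D:ℝ) * p * 1 ≤ D * p * K' := by gcongr; linarith
      linarith
    · apply Pmax_le hy1
      intro q hq hqd
      rcases (hq.dvd_mul).1 hqd with h | h
      · have g1 := (h1.2 q hq h).2
        have g2 := spart_mul_le h1.1 hq h
        have g3 : q * q ≤ T * D := by
          calc q * q ≤ T * spart D q * q := Nat.mul_le_mul_right _ g1
            _ = T * (spart D q * q) := by ring
            _ ≤ _ := Nat.mul_le_mul_left _ g2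
        have g4 : (q:ℝ) * q ≤ T * D := by exact_mod_cast g3
        have g5 : (T:ℝ) * D ≤ (w * w) * w^6 := by
          rw [hTR]; gcongr; linarith
        have g6 : (q:ℝ)^2 ≤ (w^4)^2 := by
          calc (q:ℝ)^2 = q * q := by ring
            _ ≤ _ := g4
            _ ≤ _ := g5
            _ = _ := by ring
        exact (le_of_sq_le_sq g6 (by positivity)).trans hy
      · rw [(Nat.prime_dvd_prime_iff_eq hq hp1).1 h]; exact hpw4.trans hy
    · intro q hq hqd
      have g := (hDn.2 q hq hqd).1
      have : (z':ℝ) < q := by exact_mod_cast g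
      linarith
    · refine (SS_le hT1 hDn).trans ?_
      push_cast
      rw [hTR]
      calc (K':ℝ) * f * (D * p) = (D * p * K') * f := by ring
        _ ≤ w^8 * t := by gcongr; linarith

theorem lower_A (z' : ℕ) : ∃ c : ℝ, 0 < c ∧ ∀ x y z t : ℝ, 2 ≤ x → 1 ≤ y → Real.sqrt x ≤ y → 1 ≤ t → t ≤ x →
    z ≤ z' → c * x * Real.log (2*t) / Real.log x ≤ Axyzt x y z t := by
  obtain ⟨w0, c, hw0, hc, h⟩ := lower_core z'
  set B := w0^8 * Real.log (2 * w0^8) / Real.log 2 with hB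
  have hl2 : 0 < Real.log 2 := Real.log_pos (by norm_num)
  have h1w : 1 ≤ w0^8 := one_le_pow₀ (by linarith)
  have hBpos : 0 < B := by
    have : 0 < Real.log (2 * w0^8) := Real.log_pos (by linarith)
    positivity
  refine ⟨min c (1/B), by positivity, ?_⟩
  intro x y z t hx hy hsq ht htx hz
  have hlx : 0 < Real.log x := Real.log_pos (by linarith)
  have hl2t : 0 ≤ Real.log (2*t) := Real.log_nonneg (by linarith)
  set w := x ^ ((1:ℝ)/8) with hw
  have hwpos : 0 < w := Real.rpow_pos_of_pos (by linarith) _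
  have hw8 : w^8 = x := by
    rw [hw, ← Real.rpow_natCast, ← Real.rpow_mul (by linarith)]; norm_num
  by_cases hcase : w0 ≤ w
  · have hw4 : w^4 ≤ y := by
      refine le_trans (le_of_eq ?_) hsq
      rw [← hw8, show w^8 = (w^4)^2 by ring, Real.sqrt_sq (by positivity)]
    have := h w y z t hcase hw4 ht (by rw [hw8]; exact htx) hz
    rw [hw8] at this
    refine le_trans ?_ this
    gcongr
    exact min_le_left _ _
  · push Not at hcase
    refine le_trans ?_ (A_pos (by linarith) hy ht)
    have hx8 : x ≤ w0^8 := by rw [← hw8]; gcongr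
    calc min c (1/B) * x * Real.log (2*t) / Real.log x ≤ 1/B * w0^8 * Real.log (2*w0^8) / Real.log 2 := by
          have : 0 < Real.log (2 * w0^8) := Real.log_pos (by linarith)
          gcongr
          · exact min_le_right _ _
          · linarith
      _ = 1 / B * B := by rw [hB]; ring
      _ = 1 := by field_simp

end Helpers

/-- Let `z₀ ≥ 1` and `0 < ε < 1/2`. There are constants `0 < c ≤ C` (depending only on
`z₀` and `ε`) such that whenever `x ≥ y ≥ x^{1/2+ε} ≥ 2`, `1 ≤ t ≤ x` and `1 ≤ z ≤ z₀`,
one has `c · x · log(2t)/log x ≤ A(x,y,z,t) ≤ C · x · log(2t)/log x`. -/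
theorem stmt_7 (z₀ : ℝ) (hz₀ : 1 ≤ z₀) (ε : ℝ) (hε : 0 < ε) (hε' : ε < 1 / 2) :
    ∃ c C : ℝ, 0 < c ∧ c ≤ C ∧ ∀ x y z t : ℝ,
      y ≤ x → x ^ ((1 : ℝ) / 2 + ε) ≤ y → (2 : ℝ) ≤ x ^ ((1 : ℝ) / 2 + ε) →
      1 ≤ t → t ≤ x → 1 ≤ z → z ≤ z₀ →
      c * x * Real.log (2 * t) / Real.log x ≤ (Axyzt x y z t : ℝ) ∧
      (Axyzt x y z t : ℝ) ≤ C * x * Real.log (2 * t) / Real.log x := by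
  obtain ⟨c, hc, hlow⟩ := lower_A ⌈z₀⌉₊
  obtain ⟨C, hC, hup⟩ := upper_A
  refine ⟨c, max C c, hc, le_max_right _ _, ?_⟩
  intro x y z t hyx hy h2 ht htx hz hzz
  have hx2 : 2 ≤ x := by linarith
  have hlx : 0 < Real.log x := Real.log_pos (by linarith)
  have hl2t : 0 ≤ Real.log (2*t) := Real.log_nonneg (by linarith)
  constructor
  · refine hlow x y z t hx2 (by linarith) ?_ ht htx (hzz.trans (Nat.le_ceil z₀))
    refine le_trans ?_ hy
    rw [Real.sqrt_eq_rpow]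
    exact Real.rpow_le_rpow_of_exponent_le (by linarith) (by linarith)
  · refine (hup x y z t hx2 ht).trans ?_
    have hx0 : 0 ≤ x := by linarith
    gcongr
    exact le_max_left _ _
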